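/- If A is K-trivial and W_A is a bounded set of finite binary strings that is computably enumerable relative to A, then there is a bounded computably enumerable set of strings W with W_A ⊆ W. -/

import Mathlib

open MeasureTheory ENNReal

/-! ### Cantor space and the uniform (coin-flipping) measure -/

/-- The binary digits of a real number in `[0,1)`, giving a point of Cantor space. -/
noncomputable def binaryDigits (x : ℝ) : ℕ → Bool :=
  fun n => decide (⌊x * 2 ^ (n + 1)⌋ % 2 = 1)

/-- The uniform (Lebesgue / coin-flipping) measure on Cantor space `2^ω`,
obtained as the pushforward of Lebesgue measure on `[0,1)` under binary expansion. -/
noncomputable def μCantor : Measure (ℕ → Bool) :=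
  Measure.map binaryDigits (volume.restrict (Set.Ico (0 : ℝ) 1))

/-- `σ` is an initial segment of the infinite sequence `X`. -/
def IsPrefixOf (σ : List Bool) (X : ℕ → Bool) : Prop :=
  ∀ i : Fin σ.length, X i = σ.get i

/-- The cylinder determined by a finite binary string. -/
def cylinder (σ : List Bool) : Set (ℕ → Bool) := {X | IsPrefixOf σ X}

/-- The open set generated by a set of finite binary strings. -/
def openOf (S : Set (List Bool)) : Set (ℕ → Bool) := ⋃ σ ∈ S, cylinder σ

/-- The density of a set `P` above the string `τ`: `μ([τ] ∩ P) · 2^{|τ|}`. -/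
noncomputable def dens (τ : List Bool) (P : Set (ℕ → Bool)) : ℝ≥0∞ :=
  μCantor (cylinder τ ∩ P) * 2 ^ τ.length

/-- The length-`n` initial segment of `X`, as a finite binary string. -/
def strPrefix (X : ℕ → Bool) (n : ℕ) : List Bool := (List.range n).map X

/-- A set of strings is prefix-free if no element is a proper prefix of another. -/
def PrefixFreeSet (S : Set (List Bool)) : Prop :=
  ∀ σ ∈ S, ∀ τ ∈ S, σ <+: τ → σ = τ

/-- The weight `∑_{σ ∈ S} 2^{-|σ|}` of a set of strings. -/
noncomputable def weight (S : Set (List Bool)) : ℝ≥0∞ :=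
  ∑' σ : S, 2⁻¹ ^ (σ : List Bool).length

/-- A set of strings is bounded if its weight is finite. -/
def BoundedStr (S : Set (List Bool)) : Prop := weight S < ⊤

/-- The tail `X(·+k)` of an infinite binary sequence. -/
def tailSeq (X : ℕ → Bool) (k : ℕ) : ℕ → Bool := fun n => X (n + k)

/-! ### Oracle computability -/

/-- The `e`-th computably enumerable set of naturals (the domain of the `e`-th
partial computable function). -/
def WEnum (e n : ℕ) : Prop := ((Denumerable.ofNat Nat.Partrec.Code e).eval n).Dom

/-- `OracleComputes e X n m` holds if the `e`-th Turing functional with oracle `X`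
outputs `m` on input `n`; a Turing functional is presented by the c.e. set `W_e`
of coded axioms `(σ, n, m)`, and `Γ_e^X(n) = m` iff some initial segment `σ` of `X`
has `(σ, n, m) ∈ W_e`. -/
def OracleComputes (e : ℕ) (X : ℕ → Bool) (n m : ℕ) : Prop :=
  ∃ σ : List Bool, IsPrefixOf σ X ∧
    WEnum e (Nat.pair (Encodable.encode σ) (Nat.pair n m))

def natOfBool (b : Bool) : ℕ := cond b 1 0

/-- `f : ℕ → ℕ` is computable with oracle `A`: some Turing functional with oracle `A`
has graph exactly `f`. -/
def FnComputableIn (f : ℕ → ℕ) (A : ℕ → Bool) : Prop :=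
  ∃ e, ∀ n m, OracleComputes e A n m ↔ m = f n

/-- Turing reducibility `B ≤_T A` for subsets of `ω` (as elements of Cantor space). -/
def TuringLE (B A : ℕ → Bool) : Prop := FnComputableIn (fun n => natOfBool (B n)) A

/-- Turing equivalence. -/
def TuringEquiv (A B : ℕ → Bool) : Prop := TuringLE A B ∧ TuringLE B A

/-- The Turing join `A ⊕ B`. -/
def joinSet (A B : ℕ → Bool) : ℕ → Bool :=
  fun n => if n % 2 = 0 then A (n / 2) else B (n / 2)

open Classical in
/-- The Turing jump `A′ = {e : Γ_e^A(e)↓}`. -/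
noncomputable def jump (A : ℕ → Bool) : ℕ → Bool :=
  fun e => decide (∃ m, OracleComputes e A e m)

/-- The empty oracle. -/
def emptyOracle : ℕ → Bool := fun _ => false

/-- The halting problem `∅′`. -/
noncomputable def zeroJump : ℕ → Bool := jump emptyOracle

/-- A set is computable iff it is Turing reducible to the empty oracle. -/
def ComputableSet (A : ℕ → Bool) : Prop := TuringLE A emptyOracle

/-- A set of naturals is c.e. in `A`. -/
def CeIn (A : ℕ → Bool) (S : Set ℕ) : Prop :=
  ∃ e, ∀ n, n ∈ S ↔ ∃ m, OracleComputes e A n m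

/-- A set of strings is c.e. in `A`. -/
def CeStrIn (A : ℕ → Bool) (S : Set (List Bool)) : Prop :=
  ∃ e, ∀ σ : List Bool, σ ∈ S ↔ ∃ m, OracleComputes e A (Encodable.encode σ) m

/-- A c.e. set of strings. -/
def CeStr (S : Set (List Bool)) : Prop := CeStrIn emptyOracle S

/-! ### Π⁰₁ classes, Martin-Löf randomness, K-triviality -/

/-- A `Π⁰₁(A)` class: the complement of the union of cylinders over an `A`-c.e.
set of strings. -/
def Pi01In (A : ℕ → Bool) (P : Set (ℕ → Bool)) : Prop :=
  ∃ S : Set (List Bool), CeStrIn A S ∧ P = (openOf S)ᶜ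

/-- A `Π⁰₁` class. -/
def Pi01 (P : Set (ℕ → Bool)) : Prop := Pi01In emptyOracle P

/-- The `n`-th level of the `e`-th `A`-effective sequence of open sets. -/
def testLevel (e : ℕ) (A : ℕ → Bool) (n : ℕ) : Set (ℕ → Bool) :=
  openOf {σ | ∃ m, OracleComputes e A (Nat.pair n (Encodable.encode σ)) m}

/-- A Martin-Löf test relative to `A`: a uniformly `A`-c.e. sequence of open sets
`G n` with `μ(G n) ≤ 2^{-n}`. -/
def MLTestIn (A : ℕ → Bool) (G : ℕ → Set (ℕ → Bool)) : Prop :=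
  (∃ e, ∀ n, G n = testLevel e A n) ∧ ∀ n, μCantor (G n) ≤ 2⁻¹ ^ n

/-- `X` is Martin-Löf random relative to `A`: it passes every `A`-Martin-Löf test. -/
def MLRandomIn (A X : ℕ → Bool) : Prop :=
  ∀ G : ℕ → Set (ℕ → Bool), MLTestIn A G → ∃ n, X ∉ G n

/-- `X` is Martin-Löf random. -/
def MLRandom (X : ℕ → Bool) : Prop := MLRandomIn emptyOracle X

/-- The domain of the `e`-th machine, viewed as a set of binary strings. -/
def machineDom (e : ℕ) : Set (List Bool) :=
  {σ | ((Denumerable.ofNat Nat.Partrec.Code e).eval (Encodable.encode σ)).Dom}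

/-- The `e`-th machine is prefix-free. -/
def PrefixFreeMachine (e : ℕ) : Prop := PrefixFreeSet (machineDom e)

/-- Prefix-free Kolmogorov complexity (defined, up to an additive constant, as the
least `|σ| + 2e + 2` over prefix-free machines `e` and programs `σ` producing `x`). -/
noncomputable def Kcpx (x : ℕ) : ℕ :=
  sInf {k | ∃ e, ∃ σ : List Bool, PrefixFreeMachine e ∧
    x ∈ (Denumerable.ofNat Nat.Partrec.Code e).eval (Encodable.encode σ) ∧
    k = σ.length + 2 * e + 2}

/-- `K(n)` means `K(1^n)`. -/
noncomputable def KofNat (n : ℕ) : ℕ := Kcpx (Encodable.encode (List.replicate n true))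

/-- `A` is K-trivial: `K(A↾n) ≤ K(n) + c` for some constant `c`. -/
def KTrivial (A : ℕ → Bool) : Prop :=
  ∃ c, ∀ n, Kcpx (Encodable.encode (strPrefix A n)) ≤ KofNat n + c

/-!
If `A` is K-trivial, then the strings of length `n` that are almost as simple as `n` itself are
boundedly many, so that `A` has a computable approximation. The members of `W_A` are used as labels
of the nodes of the binary tree, `σ` being listed at a node `ρ` when an enumeration with oracle `A`
finds `σ` at `A↾|ρ|`; after truncation the labels along every branch have weight at most `1`. The
weight of a node is that of its label. It suffices to find a c.e. set of nodes of finite total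
weight that contains every initial segment of `A`.

This is the golden run method in the form of a game. A strategy issues requests, a request of weight
`w` at stage `t` being a description of length `-log w` of `t`. By K-triviality the initial segment
of length `t` of the approximation then gets a description that is longer by a constant at most, and
whenever the approximation changes below `t` a new description is needed. A strategy of level `0`
issues one request, of the weight it is to gain. A strategy of level `j + 1` wanders along the
approximation and at every node `ρ` on its way it lets a strategy of level `j` gain a small multiple
of the weight of `ρ`, until it has collected enough. It collects what has been reached at `ρ` only
when the approximation leaves `ρ`, and then all the requests have to be answered once more. Hence a
gain of weight `D` on level `j` costs the opponent descriptions of weight about `j * D`, which is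
bounded. So not all levels can succeed. At the least level that does not, some strategy follows `A`
forever without reaching its goal. The nodes it visits contain all initial segments of `A` from some
point on, and their total weight is bounded: those off `A` contribute to the gain, and those on `A`
lie on one branch.

The opponent's constant depends on the machine that issues the requests, hence on the game. This is
resolved by playing against all constants at once, the requests of the `d`-th play being scaled by
`2^{-(d+1)}` so that a single application of the Kraft–Chaitin theorem serves them all.
-/

namespace KTrivial

/-! ### Strings and dyadic weights -/

section Strings

/-- The proper prefixes of `ρ` that extend `τ`: the nodes of the binary tree passed on the way from
`τ` to `ρ`. -/
def path (τ ρ : List Bool) : Finset (List Bool) :=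
  ρ.inits.toFinset.filter fun σ => τ <+: σ ∧ σ ≠ ρ

/-- The length of the longest prefix of `ρ` that is also a prefix of `X`. -/
def commonLength (ρ X : List Bool) : ℕ :=
  Nat.findGreatest (fun n => ρ.take n <+: X) ρ.length

/-- The shortest prefix of `X` that is not a prefix of `ρ`, or `X` itself if there is none. -/
def exitNode (ρ X : List Bool) : List Bool :=
  X.take (commonLength ρ X + 1)

variable {σ τ ρ X : List Bool}

theorem mem_path : σ ∈ path τ ρ ↔ σ <+: ρ ∧ τ <+: σ ∧ σ ≠ ρ := by
  simp [path]

@[simp]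
theorem path_self : path τ τ = ∅ := by
  ext σ
  simp only [mem_path, Finset.notMem_empty, iff_false]
  rintro ⟨hστ, hτσ, hne⟩
  exact hne (hστ.eq_of_length (le_antisymm hστ.length_le hτσ.length_le))

theorem length_lt_of_mem_path (h : σ ∈ path τ ρ) : σ.length < ρ.length :=
  lt_of_le_of_ne (mem_path.1 h).1.length_le fun hl =>
    (mem_path.1 h).2.2 ((mem_path.1 h).1.eq_of_length hl)

theorem nodup_inits (ρ : List Bool) : ρ.inits.Nodup := by
  refine List.nodup_iff_injective_get.2 fun i k hik => Fin.ext ?_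
  have hlen := congrArg List.length hik
  have hi := i.2
  have hk := k.2
  simp only [List.get_inits, List.length_take, List.length_inits] at hlen hi hk
  omega

theorem prefix_iff_length_le (hσ : σ <+: X) (hρ : ρ <+: X) : σ <+: ρ ↔ σ.length ≤ ρ.length :=
  ⟨List.IsPrefix.length_le, List.prefix_of_prefix_length_le hσ hρ⟩

theorem prefix_iff_length_le_commonLength (hσ : σ <+: ρ) :
    σ <+: X ↔ σ.length ≤ commonLength ρ X := by
  constructor
  · intro h
    exact Nat.le_findGreatest hσ.length_le (by rwa [← List.prefix_iff_eq_take.1 hσ])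
  · intro h
    have hcommon : ρ.take (commonLength ρ X) <+: X :=
      Nat.findGreatest_spec (P := fun n => ρ.take n <+: X) (Nat.zero_le _) (by simp)
    refine List.IsPrefix.trans ?_ hcommon
    rw [List.prefix_take_iff]
    exact ⟨hσ, h⟩

theorem commonLength_le : commonLength ρ X ≤ ρ.length :=
  Nat.findGreatest_le _

theorem exitNode_prefix : exitNode ρ X <+: X :=
  List.take_prefix _ _

theorem prefix_exitNode (hτρ : τ <+: ρ) (hτX : τ <+: X) : τ <+: exitNode ρ X :=
  (List.prefix_take_iff).2
    ⟨hτX, ((prefix_iff_length_le_commonLength hτρ).1 hτX).trans (Nat.le_succ _)⟩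

theorem length_exitNode (hle : ρ.length ≤ X.length) (hlt : ρ <+: X → ρ.length < X.length) :
    (exitNode ρ X).length = commonLength ρ X + 1 := by
  have hcommon : commonLength ρ X < X.length := by
    by_cases hρ : ρ <+: X
    · exact commonLength_le.trans_lt (hlt hρ)
    · refine (not_le.1 fun h => hρ ?_).trans_le hle
      exact (prefix_iff_length_le_commonLength List.prefix_rfl).2 h
  rw [exitNode, List.length_take]
  omega

theorem path_exitNode (hτ : τ <+: ρ) (hle : ρ.length ≤ X.length)
    (hlt : ρ <+: X → ρ.length < X.length) :
    path τ (exitNode ρ X) = (insert ρ (path τ ρ)).filter (· <+: X) := by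
  have hcommon : ρ.take (commonLength ρ X) <+: X :=
    Nat.findGreatest_spec (P := fun n => ρ.take n <+: X) (Nat.zero_le _) (by simp)
  have hlen := length_exitNode hle hlt
  ext σ
  rw [Finset.mem_filter, Finset.mem_insert, mem_path (ρ := ρ)]
  constructor
  · intro hσ
    have hσlen := length_lt_of_mem_path hσ
    obtain ⟨hσe, hτσ, -⟩ := mem_path.1 hσ
    have hσX := hσe.trans exitNode_prefix
    have hσρ : σ <+: ρ := by
      refine List.IsPrefix.trans ?_ (List.take_prefix (commonLength ρ X) ρ)
      rw [prefix_iff_length_le hσX hcommon, List.length_take, min_eq_left commonLength_le]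
      omega
    exact ⟨(eq_or_ne σ ρ).imp_right fun hne => ⟨hσρ, hτσ, hne⟩, hσX⟩
  · rintro ⟨hσ, hσX⟩
    obtain ⟨hσρ, hτσ⟩ : σ <+: ρ ∧ τ <+: σ := by
      rcases hσ with rfl | hσ
      exacts [⟨List.prefix_rfl, hτ⟩, ⟨hσ.1, hσ.2.1⟩]
    have hσlen := (prefix_iff_length_le_commonLength hσρ).1 hσX
    refine mem_path.2 ⟨(prefix_iff_length_le hσX exitNode_prefix).2 (by omega), hτσ, ?_⟩
    rintro rfl
    omega

end Strings

section Weights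

/-- The weight `2^{-r}` of an optional exponent `r`; the absent exponent has weight `0`. -/
noncomputable def wt (o : Option ℕ) : ℝ :=
  o.elim 0 fun r => 2⁻¹ ^ r

@[simp]
theorem wt_none : wt none = 0 :=
  rfl

@[simp]
theorem wt_some (r : ℕ) : wt (some r) = 2⁻¹ ^ r :=
  rfl

theorem wt_nonneg (o : Option ℕ) : 0 ≤ wt o := by
  cases o <;> simp

theorem wt_map_add (o : Option ℕ) (k : ℕ) : wt (o.map (· + k)) = wt o * 2⁻¹ ^ k := by
  cases o <;> simp [pow_add]

/-- A pair `(a, s)` of natural numbers, encoding the dyadic rational `a / 2 ^ s`. Unlike the real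
number it stands for, it can be handled by primitive recursive functions. -/
abbrev Dyad :=
  ℕ × ℕ

/-- The real number `a / 2 ^ s` encoded by the pair `(a, s)`. -/
noncomputable def Dyad.val (x : Dyad) : ℝ :=
  x.1 / 2 ^ x.2

/-- Addition of dyadic rationals, without reduction to lowest terms. -/
def Dyad.add (x y : Dyad) : Dyad :=
  (x.1 * 2 ^ y.2 + y.1 * 2 ^ x.2, x.2 + y.2)

/-- The dyadic rational encoding `wt o`. -/
def Dyad.ofExponent (o : Option ℕ) : Dyad :=
  o.elim (0, 0) fun r => (1, r)

/-- The dyadic rational encoding the total weight of a list of exponents. -/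
def Dyad.ofList (l : List (Option ℕ)) : Dyad :=
  l.foldr (fun o x => (Dyad.ofExponent o).add x) (0, 0)

namespace Dyad

theorem val_nonneg (x : Dyad) : 0 ≤ x.val := by
  unfold val
  positivity

theorem val_add (x y : Dyad) : (x.add y).val = x.val + y.val := by
  simp only [val, add]
  push_cast
  rw [pow_add]
  field_simp

@[simp]
theorem val_ofExponent (o : Option ℕ) : (ofExponent o).val = wt o := by
  cases o <;> simp [ofExponent, val]

theorem val_ofList (l : List (Option ℕ)) : (ofList l).val = (l.map wt).sum := by
  induction l with
  | nil => simp [ofList, val]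
  | cons o l ih =>
    rw [List.map_cons, List.sum_cons, ← ih, ← val_ofExponent, ← val_add]
    rfl

theorem val_le_val_iff (x y : Dyad) : x.val ≤ y.val ↔ x.1 * 2 ^ y.2 ≤ y.1 * 2 ^ x.2 := by
  rw [val, val, div_le_div_iff₀ (by positivity) (by positivity)]
  exact_mod_cast Iff.rfl

end Dyad

/-- The weights `wt (u σ)` along every branch of the binary tree add up to at most `1`. -/
def BranchBounded (u : List Bool → Option ℕ) : Prop :=
  ∀ ρ : List Bool, ∑ σ ∈ ρ.inits.toFinset, wt (u σ) ≤ 1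

theorem BranchBounded.sum_path_add_le {u : List Bool → Option ℕ} (hu : BranchBounded u)
    (τ ρ : List Bool) : ∑ σ ∈ path τ ρ, wt (u σ) + wt (u ρ) ≤ 1 := by
  have hρ : ρ ∉ path τ ρ := fun h => (mem_path.1 h).2.2 rfl
  rw [add_comm, ← Finset.sum_insert (f := fun σ => wt (u σ)) hρ]
  refine (Finset.sum_le_sum_of_subset_of_nonneg ?_ fun _ _ _ => wt_nonneg _).trans (hu ρ)
  intro σ hσ
  rcases Finset.mem_insert.1 hσ with rfl | hσ
  · simp
  · simpa using (mem_path.1 hσ).1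

end Weights

/-! ### The game -/

section Game

/-- The state of one strategy of the game. The strategy works above the node `base`; its aim is to
have requests of total weight `wt goal` answered, overspending by at most `2⁻¹ ^ slack`. So far it
has worked at `visits` nodes and the answered requests guarantee the weight `gained`. -/
structure Frame where
  base : List Bool
  goal : Option ℕ
  slack : ℕ
  visits : ℕ
  gained : Dyad

/-- A strategy is done once the weight it has gained reaches its goal. -/
def Frame.Done (f : Frame) : Prop :=
  wt f.goal ≤ f.gained.val

theorem Frame.done_iff (f : Frame) :
    f.Done ↔ (Dyad.ofExponent f.goal).1 * 2 ^ f.gained.2 ≤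
      f.gained.1 * 2 ^ (Dyad.ofExponent f.goal).2 := by
  rw [Frame.Done, ← Dyad.val_ofExponent, Dyad.val_le_val_iff]

instance : DecidablePred Frame.Done :=
  fun f => decidable_of_iff' _ f.done_iff

variable (u : List Bool → Option ℕ)

/-- The exponent of the goal `wt (u ρ) * 2⁻¹ ^ (d + 1)` that a strategy of slack `d` sets for its
substrategies at the node `ρ`. -/
def quota (d : ℕ) (ρ : List Bool) : Option ℕ :=
  (u ρ).map (· + (d + 1))

/-- The initial state of a level-`j` strategy above `τ`: the strategy itself together with the
initial states of its substrategies of levels `j - 1, …, 0` at its first node `τ`. -/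
def fresh : ℕ → List Bool → Option ℕ → ℕ → List Frame
  | 0, τ, goal, d => [⟨τ, goal, d, 1, (0, 0)⟩]
  | j + 1, τ, goal, d => ⟨τ, goal, d, 1, (0, 0)⟩ :: fresh j τ (quota u d τ) (d + 1 + 1)

/-- The initial state of the level-`j` substrategy that a strategy of slack `d` runs at its `c`-th
node `ρ`. -/
def child (j : ℕ) (ρ : List Bool) (d c : ℕ) : List Frame :=
  fresh u j ρ (quota u d ρ) (d + 1 + c)

/-- What a strategy `f` collects when its substrategy `g` is left: the quotas of the nodes above
`g.base` that are no longer prefixes of `X`, and the weight gained by `g` if `g.base` is not. -/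
def released (X : List Bool) (f g : Frame) : Dyad :=
  (Dyad.ofList ((g.base.inits.filter fun σ => ¬σ <+: X ∧ σ ≠ g.base).map (quota u f.slack))).add
    (if g.base <+: X then (0, 0) else g.gained)

/-- One move of a stack of strategies against the current approximation `X` to `A`, with the
exponent of the request issued by the move, if any. The bottom strategy issues its goal as a
request. Any other strategy lets its substrategy move, until the latter is done or its base is no
longer a prefix of `X`; then it starts a new substrategy at the exit node. -/
def step (X : List Bool) : List Frame → List Frame × Option ℕ
  | [] => ([], none)
  | [f] => if f.Done then ([f], none) else ([{ f with gained := .ofExponent f.goal }], f.goal)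
  | f :: g :: L =>
    if f.Done then (f :: g :: L, none)
    else if g.base <+: X ∧ ¬(g.Done ∧ g.base.length < X.length) then
      (f :: (step X (g :: L)).1, (step X (g :: L)).2)
    else
      ({ f with visits := f.visits + 1, gained := f.gained.add (released u X f g) } ::
        child u L.length (exitNode g.base X) f.slack (f.visits + 1), none)

/-- The state at time `m` when the stack `L` is started at time `a` and plays against `X`. -/
def run (X : ℕ → List Bool) (L : List Frame) (a m : ℕ) : List Frame :=
  (List.range' a (m - a)).foldl (fun L i => (step u (X i) L).1) L

/-- The weight of the request issued at time `i` by the stack `L` started at time `a`. -/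
noncomputable def spend (X : ℕ → List Bool) (L : List Frame) (a i : ℕ) : ℝ :=
  wt (step u (X i) (run u X L a i)).2

variable {u} {X : ℕ → List Bool} {L : List Frame} {a m d : ℕ}

theorem spend_nonneg (i : ℕ) : 0 ≤ spend u X L a i :=
  wt_nonneg _

theorem wt_quota (ρ : List Bool) : wt (quota u d ρ) = wt (u ρ) * 2⁻¹ ^ (d + 1) :=
  wt_map_add _ _

@[simp]
theorem run_self : run u X L a a = L := by
  simp [run]

theorem run_succ (h : a ≤ m) : run u X L a (m + 1) = (step u (X m) (run u X L a m)).1 := by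
  rw [run, Nat.succ_sub h, List.range'_concat, List.foldl_concat]
  simp [run, Nat.add_sub_cancel' h]

theorem step_of_done {Y : List Bool} {f : Frame} (hf : f.Done) :
    step u Y (f :: L) = (f :: L, none) := by
  cases L <;> simp only [step, if_pos hf]

theorem length_fresh (j : ℕ) (τ : List Bool) (goal : Option ℕ) (d : ℕ) :
    (fresh u j τ goal d).length = j + 1 := by
  induction j generalizing goal d with
  | zero => rfl
  | succ j ih => simp only [fresh, List.length_cons, ih]

theorem length_step (Y : List Bool) (L : List Frame) : (step u Y L).1.length = L.length := by
  fun_induction step u Y L <;> simp_all [child, length_fresh]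

theorem length_run (h : a ≤ m) : (run u X L a m).length = L.length := by
  induction m, h using Nat.le_induction with
  | base => simp
  | succ m h ih => rw [run_succ h, length_step, ih]

theorem exists_run_fresh {j : ℕ} {τ : List Bool} {goal : Option ℕ} (h : a ≤ m) :
    ∃ c D L, run u X (fresh u j τ goal d) a m = ⟨τ, goal, d, c, D⟩ :: L ∧ L.length = j := by
  suffices ∃ c D L, run u X (fresh u j τ goal d) a m = ⟨τ, goal, d, c, D⟩ :: L by
    obtain ⟨c, D, L, hL⟩ := this
    have hlen := length_run (u := u) (X := X) (L := fresh u j τ goal d) h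
    rw [hL, List.length_cons, length_fresh, Nat.add_right_cancel_iff] at hlen
    exact ⟨c, D, L, hL, hlen⟩
  induction m, h using Nat.le_induction with
  | base => cases j <;> simp [fresh]
  | succ m h ih =>
    obtain ⟨c, D, L, hL⟩ := ih
    rw [run_succ h, hL]
    cases L <;> simp only [step] <;> split_ifs <;> simp [child]

theorem run_of_done (ham : a ≤ m) {f : Frame} {R : List Frame} (h : run u X L a m = f :: R)
    (hf : f.Done) {m' : ℕ} (hm : m ≤ m') : run u X L a m' = f :: R := by
  induction m', hm using Nat.le_induction with
  | base => exact h
  | succ k hk ih => rw [run_succ (ham.trans hk), ih, step_of_done hf]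

theorem val_released {Y τ : List Bool} {f g : Frame} (hτ : τ <+: Y) (hτg : τ <+: g.base) :
    (released u Y f g).val =
      ∑ σ ∈ (path τ g.base).filter (¬· <+: Y), wt (quota u f.slack σ) +
        if g.base <+: Y then 0 else g.gained.val := by
  have hpath : (g.base.inits.filter fun σ => ¬σ <+: Y ∧ σ ≠ g.base).toFinset =
      (path τ g.base).filter (¬· <+: Y) := by
    ext σ
    simp only [List.mem_toFinset, List.mem_filter, List.mem_inits, decide_eq_true_eq,
      Finset.mem_filter, mem_path]
    constructor
    · rintro ⟨hσ, hσY, hne⟩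
      exact ⟨⟨hσ, (List.prefix_or_prefix_of_prefix hσ hτg).resolve_left
        fun h => hσY (h.trans hτ), hne⟩, hσY⟩
    · rintro ⟨⟨hσ, -, hne⟩, hσY⟩
      exact ⟨hσ, hσY, hne⟩
  have hnodup : (g.base.inits.filter fun σ => ¬σ <+: Y ∧ σ ≠ g.base).Nodup :=
    (nodup_inits g.base).filter _
  rw [released, Dyad.val_add, Dyad.val_ofList, List.map_map, ← hpath, List.sum_toFinset _ hnodup]
  congr 1
  split_ifs <;> simp [Dyad.val]

end Game

section Backing

/-- The number of strings that the first `(X i).length` bits of the approximation run through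
strictly between times `i` and `m`. A request issued at time `i` has been answered for all these
strings by time `m`. -/
def versions (X : ℕ → List Bool) (i m : ℕ) : ℕ :=
  ((Finset.Ioo i m).image fun l => (X l).take (X i).length).card

/-- The requests issued at the times in `S`, that of time `i` having weight `w i`, guarantee the
weight `D`, even after each of them has been answered for `k` strings by time `m`. -/
structure Backed (X : ℕ → List Bool) (w : ℕ → ℝ) (k m : ℕ) (S : Finset ℕ) (D : ℝ) : Prop where
  le_sum : D ≤ ∑ i ∈ S, w i
  mul_le_sum : k * D ≤ ∑ i ∈ S, w i * versions X i m

variable {X : ℕ → List Bool} {w w' : ℕ → ℝ} {k m m' i : ℕ} {S T : Finset ℕ} {D E : ℝ}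

theorem versions_mono (h : m ≤ m') : versions X i m ≤ versions X i m' :=
  Finset.card_le_card (Finset.image_subset_image (Finset.Ioo_subset_Ioo_right h))

theorem versions_succ {ρ : List Bool} (him : i < m) (h : ∀ l, i ≤ l → l < m → ρ <+: X l)
    (hm : ¬ρ <+: X m) : versions X i (m + 1) = versions X i m + 1 := by
  have hinsert : Finset.Ioo i (m + 1) = insert m (Finset.Ioo i m) := by
    ext l
    simp only [Finset.mem_Ioo, Finset.mem_insert]
    omega
  rw [versions, hinsert, Finset.image_insert, Finset.card_insert_of_notMem, ← versions]
  intro hmem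
  obtain ⟨l, hl, hlm⟩ := Finset.mem_image.1 hmem
  rw [Finset.mem_Ioo] at hl
  have hρ : ρ <+: (X l).take (X i).length :=
    List.prefix_take_iff.2 ⟨h l hl.1.le hl.2, (h i le_rfl him).length_le⟩
  rw [hlm] at hρ
  exact hm (hρ.trans (List.take_prefix _ _))

namespace Backed

theorem congr (h : Backed X w k m S D) (hw : ∀ i ∈ S, w i = w' i) : Backed X w' k m S D := by
  refine ⟨h.le_sum.trans_eq (Finset.sum_congr rfl hw), h.mul_le_sum.trans_eq ?_⟩
  exact Finset.sum_congr rfl fun i hi => by rw [hw i hi]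

theorem of_le (h : Backed X w k m S D) (hE : E ≤ D) : Backed X w k m S E :=
  ⟨hE.trans h.le_sum, (mul_le_mul_of_nonneg_left hE (Nat.cast_nonneg k)).trans h.mul_le_sum⟩

theorem mono (h : Backed X w k m S D) (hw : ∀ i, 0 ≤ w i) (hST : S ⊆ T) (hm : m ≤ m') :
    Backed X w k m' T D := by
  have hnonneg : ∀ i, 0 ≤ w i * versions X i m' := fun i => mul_nonneg (hw i) (Nat.cast_nonneg _)
  refine ⟨h.le_sum.trans (Finset.sum_le_sum_of_subset_of_nonneg hST fun i _ _ => hw i),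
    h.mul_le_sum.trans ((Finset.sum_le_sum fun i _ => ?_).trans
      (Finset.sum_le_sum_of_subset_of_nonneg hST fun i _ _ => hnonneg i))⟩
  exact mul_le_mul_of_nonneg_left (Nat.cast_le.2 (versions_mono hm)) (hw i)

theorem union (hS : Backed X w k m S D) (hT : Backed X w k m T E) (hd : Disjoint S T) :
    Backed X w k m (S ∪ T) (D + E) := by
  constructor
  · rw [Finset.sum_union hd]
    exact add_le_add hS.le_sum hT.le_sum
  · rw [Finset.sum_union hd, mul_add]
    exact add_le_add hS.mul_le_sum hT.mul_le_sum

theorem biUnion {ι : Type*} {s : Finset ι} {S : ι → Finset ℕ} {D : ι → ℝ}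
    (hd : (s : Set ι).PairwiseDisjoint S) (h : ∀ σ ∈ s, Backed X w k m (S σ) (D σ)) :
    Backed X w k m (s.biUnion S) (∑ σ ∈ s, D σ) := by
  constructor
  · rw [Finset.sum_biUnion hd]
    exact Finset.sum_le_sum fun σ hσ => (h σ hσ).le_sum
  · rw [Finset.sum_biUnion hd, Finset.mul_sum]
    exact Finset.sum_le_sum fun σ hσ => (h σ hσ).mul_le_sum

/-- When the approximation leaves `ρ`, all requests issued while it extended `ρ` have to be
answered once more. -/
theorem succ (h : Backed X w k m S D) {ρ : List Bool}
    (hS : ∀ i ∈ S, i < m ∧ ∀ l, i ≤ l → l < m → ρ <+: X l) (hm : ¬ρ <+: X m) :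
    Backed X w (k + 1) (m + 1) S D := by
  refine ⟨h.le_sum, ?_⟩
  have hstep : ∀ i ∈ S, w i * versions X i (m + 1) = w i * versions X i m + w i := by
    intro i hi
    rw [versions_succ (hS i hi).1 (hS i hi).2 hm]
    push_cast
    ring
  rw [Finset.sum_congr rfl hstep, Finset.sum_add_distrib, Nat.cast_succ, add_one_mul]
  exact add_le_add h.mul_le_sum h.le_sum

end Backed

end Backing

section Contract

variable (u : List Bool → Option ℕ) (X : ℕ → List Bool) (a j : ℕ) (τ : List Bool)
  (goal : Option ℕ) (d m : ℕ)

/-- What a level-`j` strategy started at time `a` guarantees at time `m`: its gain is backed by its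
requests `j`-fold, and its requests exceed the gain and the goal by at most `2⁻¹ ^ d`. -/
def Contract : Prop :=
  ∃ c D L, run u X (fresh u j τ goal d) a m = ⟨τ, goal, d, c, D⟩ :: L ∧
    Backed X (spend u X (fresh u j τ goal d) a) j m (Finset.Ico a m) D.val ∧
    ∑ i ∈ Finset.Ico a m, spend u X (fresh u j τ goal d) a i ≤ min D.val (wt goal) + 2⁻¹ ^ d

/-- All level-`j` strategies fulfil their contract as long as the approximation extends their
base. -/
def FulfilsContract : Prop :=
  ∀ ⦃X : ℕ → List Bool⦄ ⦃a : ℕ⦄ ⦃τ : List Bool⦄ (goal : Option ℕ) (d : ℕ) ⦃m : ℕ⦄,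
    Monotone (fun l => (X l).length) → a ≤ m → (∀ l, a ≤ l → l < m → τ <+: X l) →
      Contract u X a j τ goal d m

variable {u X a j τ goal d m}

theorem spend_of_done {L R : List Frame} {f : Frame} (h : run u X L a m = f :: R)
    (hf : f.Done) : spend u X L a m = 0 := by
  rw [spend, h, step_of_done hf, wt_none]

theorem Contract.succ_of_done (h : Contract u X a j τ goal d m) (ham : a ≤ m) {f : Frame}
    {R : List Frame} (hrun : run u X (fresh u j τ goal d) a m = f :: R) (hf : f.Done) :
    Contract u X a j τ goal d (m + 1) := by
  obtain ⟨c, D, L, hL, hback, hsum⟩ := h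
  refine ⟨c, D, L, ?_, hback.mono spend_nonneg (Finset.Ico_subset_Ico_right m.le_succ) m.le_succ,
    ?_⟩
  · rw [run_of_done ham hrun hf m.le_succ, ← hrun, hL]
  · rwa [Finset.sum_Ico_succ_top ham, spend_of_done hrun hf, add_zero]

theorem contract_self : Contract u X a j τ goal d a := by
  obtain ⟨c, L, hL⟩ : ∃ c L, fresh u j τ goal d = ⟨τ, goal, d, c, (0, 0)⟩ :: L := by
    cases j <;> exact ⟨_, _, rfl⟩
  refine ⟨c, (0, 0), L, by rw [run_self, hL], ⟨?_, ?_⟩, ?_⟩ <;>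
    simp [Dyad.val, min_eq_left (wt_nonneg goal)]

theorem fulfilsContract_zero : FulfilsContract u 0 := by
  intro X a τ goal d m _ ham _
  have idle_or_done : ∀ m, a ≤ m → Contract u X a 0 τ goal d m ∧
      (m = a ∨ ∃ f L, run u X (fresh u 0 τ goal d) a m = f :: L ∧ f.Done) := by
    intro m ham
    induction m, ham using Nat.le_induction with
    | base => exact ⟨contract_self, .inl rfl⟩
    | succ m ham ih =>
      by_cases hdone : ∃ f L, run u X (fresh u 0 τ goal d) a m = f :: L ∧ f.Done
      · obtain ⟨f, L, hL, hf⟩ := hdone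
        exact ⟨ih.1.succ_of_done ham hL hf,
          .inr ⟨f, L, run_of_done ham hL hf m.le_succ, hf⟩⟩
      obtain rfl := ih.2.resolve_right hdone
      have hstart : run u X (fresh u 0 τ goal d) m m = [⟨τ, goal, d, 1, (0, 0)⟩] := run_self
      have hnot : ¬(⟨τ, goal, d, 1, (0, 0)⟩ : Frame).Done := fun hf => hdone ⟨_, _, hstart, hf⟩
      have hrun : run u X (fresh u 0 τ goal d) m (m + 1) =
          [⟨τ, goal, d, 1, .ofExponent goal⟩] := by
        rw [run_succ le_rfl, hstart]
        simp only [step, if_neg hnot]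
      have hspend : spend u X (fresh u 0 τ goal d) m m = wt goal := by
        rw [spend, hstart]
        simp only [step, if_neg hnot]
      refine ⟨⟨_, _, _, hrun, ⟨?_, ?_⟩, ?_⟩, .inr ⟨_, _, hrun, (Dyad.val_ofExponent _).ge⟩⟩ <;>
        simp [hspend, mul_nonneg, wt_nonneg]
  exact (idle_or_done m ham).1

end Contract

section Visiting

variable (u : List Bool → Option ℕ) (X : ℕ → List Bool) (a j : ℕ) (τ : List Bool)
  (goal : Option ℕ) (d : ℕ)

/-- At time `m` the level-`(j + 1)` strategy started at time `a` has gained `D`, and its substrategy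
has been working at its `c`-th node `ρ` since time `a₁`. -/
structure Visiting (m a₁ : ℕ) (ρ : List Bool) (c : ℕ) (D : Dyad) : Prop where
  start_le : a ≤ a₁
  le_now : a₁ ≤ m
  run_eq : run u X (fresh u (j + 1) τ goal d) a m =
    ⟨τ, goal, d, c, D⟩ :: run u X (child u j ρ d c) a₁ m
  spend_eq : ∀ l, a₁ ≤ l → l < m →
    spend u X (fresh u (j + 1) τ goal d) a l = spend u X (child u j ρ d c) a₁ l
  base_prefix : τ <+: ρ
  node_prefix : ∀ l, a₁ ≤ l → l < m → ρ <+: X l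
  node_length : τ <+: X m → ρ.length ≤ (X m).length

variable {u X a j τ goal d} {m a₁ c : ℕ} {ρ : List Bool} {D : Dyad}

namespace Visiting

theorem self : Visiting u X a j τ goal d a a τ 1 (0, 0) where
  start_le := le_rfl
  le_now := le_rfl
  run_eq := by simp only [run_self]; rfl
  spend_eq l h h' := absurd h' h.not_gt
  base_prefix := List.prefix_rfl
  node_prefix l h h' := absurd h' h.not_gt
  node_length := List.IsPrefix.length_le

theorem start_le_now (hv : Visiting u X a j τ goal d m a₁ ρ c D) : a ≤ m :=
  hv.start_le.trans hv.le_now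

theorem next (hv : Visiting u X a j τ goal d m a₁ ρ c D) (hX : Monotone fun l => (X l).length)
    (hτ : τ <+: X m) (hD : ¬(⟨τ, goal, d, c, D⟩ : Frame).Done) :
    (ρ <+: X m ∧
      (∀ f L, run u X (child u j ρ d c) a₁ m = f :: L → f.Done → (X m).length ≤ ρ.length) ∧
      Visiting u X a j τ goal d (m + 1) a₁ ρ c D) ∨
    (∃ c' E L, run u X (child u j ρ d c) a₁ m = ⟨ρ, quota u d ρ, d + 1 + c, c', E⟩ :: L ∧
      (ρ <+: X m → wt (quota u d ρ) ≤ E.val ∧ ρ.length < (X m).length) ∧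
      spend u X (fresh u (j + 1) τ goal d) a m = 0 ∧
      Visiting u X a j τ goal d (m + 1) (m + 1) (exitNode ρ (X m)) (c + 1)
        (D.add (released u (X m) ⟨τ, goal, d, c, D⟩ ⟨ρ, quota u d ρ, d + 1 + c, c', E⟩))) := by
  obtain ⟨c', E, L, hL, hlen⟩ := exists_run_fresh (u := u) (X := X) (j := j) (τ := ρ)
    (goal := quota u d ρ) (d := d + 1 + c) hv.le_now
  change run u X (child u j ρ d c) a₁ m = _ at hL
  have hrun := hv.run_eq
  rw [hL] at hrun
  by_cases hstay : ρ <+: X m ∧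
      ¬((⟨ρ, quota u d ρ, d + 1 + c, c', E⟩ : Frame).Done ∧ ρ.length < (X m).length)
  · refine .inl ⟨hstay.1, ?_, hv.start_le, hv.le_now.trans m.le_succ, ?_, ?_, hv.base_prefix, ?_,
      fun _ => (hv.node_length hτ).trans (hX m.le_succ)⟩
    · intro f L' hL' hf
      rw [hL, List.cons_eq_cons] at hL'
      rw [← hL'.1] at hf
      exact not_lt.1 fun hlt => hstay.2 ⟨hf, hlt⟩
    · rw [run_succ hv.start_le_now, run_succ hv.le_now, hrun, hL]
      simp only [step, if_neg hD, if_pos hstay]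
    · intro l hl hlm
      rcases (Nat.lt_succ_iff.1 hlm).lt_or_eq with h | rfl
      · exact hv.spend_eq l hl h
      · rw [spend, spend, hrun, hL]
        simp only [step, if_neg hD, if_pos hstay]
    · intro l hl hlm
      rcases (Nat.lt_succ_iff.1 hlm).lt_or_eq with h | rfl
      exacts [hv.node_prefix l hl h, hstay.1]
  · refine .inr ⟨c', E, L, hL, fun hρ => not_not.1 fun h => hstay ⟨hρ, h⟩, ?_, ?_⟩
    · rw [spend, hrun]
      simp only [step, if_neg hD, if_neg hstay, wt_none]
    · refine ⟨hv.start_le_now.trans m.le_succ, le_rfl, ?_, fun l h h' => absurd h' h.not_gt,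
        prefix_exitNode hv.base_prefix hτ, fun l h h' => absurd h' h.not_gt,
        fun _ => exitNode_prefix.length_le.trans (hX m.le_succ)⟩
      rw [run_succ hv.start_le_now, run_self, hrun]
      simp only [step, if_neg hD, if_neg hstay, hlen]

end Visiting

end Visiting

section Ledger

variable (X : ℕ → List Bool) (w : ℕ → ℝ) (a j : ℕ)

/-- The accounts, at time `m`, of a level-`(j + 1)` strategy for the requests of weight `w i` issued
at times `i` from `a` up to `t`. A request has an owner, the node at which it was issued, until the
approximation leaves this node and the request is collected (`owner i = none`). The requests owned
by a node `σ ∈ P` back the weight `amount σ` only `j`-fold, the collected ones back the gain `D`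
once more. -/
structure Ledger (owner : ℕ → Option (List Bool)) (P : Finset (List Bool))
    (amount : List Bool → ℝ) (m t : ℕ) (D : ℝ) : Prop where
  owner_mem : ∀ i ∈ Finset.Ico a t, ∀ σ ∈ owner i, σ ∈ P ∧ ∀ l, i ≤ l → l < m → σ <+: X l
  held : ∀ σ ∈ P, Backed X w j m ((Finset.Ico a t).filter (owner · = some σ)) (amount σ)
  collected : Backed X w (j + 1) m ((Finset.Ico a t).filter (owner · = none)) D

variable {X w a j} {owner : ℕ → Option (List Bool)} {P : Finset (List Bool)}
  {amount amount' : List Bool → ℝ} {m t : ℕ} {ρ : List Bool} {D E : ℝ}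

namespace Ledger

theorem self : Ledger X w a j owner ∅ amount a a 0 := by
  constructor <;> simp
  constructor <;> simp

theorem congr (h : Ledger X w a j owner P amount m t D)
    (hamount : ∀ σ ∈ P, amount' σ ≤ amount σ) : Ledger X w a j owner P amount' m t D :=
  ⟨h.owner_mem, fun σ hσ => (h.held σ hσ).of_le (hamount σ hσ), h.collected⟩

theorem backed (h : Ledger X w a j owner P amount m t D) (hw : ∀ i, 0 ≤ w i) (htm : t ≤ m) :
    Backed X w (j + 1) m (Finset.Ico a m) D :=
  h.collected.mono hw ((Finset.filter_subset _ _).trans (Finset.Ico_subset_Ico_right htm)) le_rfl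

theorem stay (h : Ledger X w a j owner P amount m t D) (hw : ∀ i, 0 ≤ w i)
    (hP : ∀ σ ∈ P, σ <+: X m) : Ledger X w a j owner P amount (m + 1) t D where
  owner_mem i hi σ hσ := by
    obtain ⟨hσP, hσX⟩ := h.owner_mem i hi σ hσ
    refine ⟨hσP, fun l hl hlm => ?_⟩
    rcases (Nat.lt_succ_iff.1 hlm).lt_or_eq with hlm | rfl
    exacts [hσX l hl hlm, hP σ hσP]
  held σ hσ := (h.held σ hσ).mono hw subset_rfl m.le_succ
  collected := h.collected.mono hw subset_rfl m.le_succ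

theorem insert (h : Ledger X w a j owner P amount m t D) (hw : ∀ i, 0 ≤ w i) (hat : a ≤ t)
    (htm : t ≤ m) (hρX : ∀ l, t ≤ l → l < m → ρ <+: X l) (hρ : ρ ∉ P)
    (hE : Backed X w j m (Finset.Ico t m) E) :
    Ledger X w a j (fun i => if i < t then owner i else some ρ) (insert ρ P)
      (Function.update amount ρ E) m m D where
  owner_mem i hi σ hσ := by
    rw [Finset.mem_Ico] at hi
    split_ifs at hσ with hit
    · obtain ⟨hσP, hσX⟩ := h.owner_mem i (Finset.mem_Ico.2 ⟨hi.1, hit⟩) σ hσ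
      exact ⟨Finset.mem_insert_of_mem hσP, hσX⟩
    · obtain rfl := Option.mem_some.1 hσ
      exact ⟨Finset.mem_insert_self _ _, fun l hl => hρX l ((not_lt.1 hit).trans hl)⟩
  held σ hσ := by
    rcases Finset.mem_insert.1 hσ with rfl | hσP
    · rw [Function.update_self]
      refine hE.mono hw (fun i hi => ?_) le_rfl
      rw [Finset.mem_Ico] at hi
      simp [hi.1.not_gt, hi.2, hat.trans hi.1]
    · rw [Function.update_of_ne (ne_of_mem_of_not_mem hσP hρ)]
      refine (h.held σ hσP).mono hw (fun i hi => ?_) le_rfl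
      rw [Finset.mem_filter, Finset.mem_Ico] at hi
      simp [hi.1.1, hi.1.2, hi.1.2.trans_le htm, hi.2]
  collected := by
    refine h.collected.mono hw (fun i hi => ?_) le_rfl
    rw [Finset.mem_filter, Finset.mem_Ico] at hi
    simp [hi.1.1, hi.1.2, hi.1.2.trans_le htm, hi.2]

theorem exit (h : Ledger X w a j owner P amount m m D) (hw : ∀ i, 0 ≤ w i) :
    Ledger X w a j (fun i => if i < m then (owner i).filter (· <+: X m) else none)
      (P.filter (· <+: X m)) amount (m + 1) (m + 1)
      (D + ∑ σ ∈ P.filter (¬· <+: X m), amount σ) where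
  owner_mem i hi σ hσ := by
    rw [Finset.mem_Ico] at hi
    split_ifs at hσ with him
    · rw [Option.mem_def, Option.filter_eq_some_iff, decide_eq_true_eq] at hσ
      obtain ⟨hσP, hσX⟩ := h.owner_mem i (Finset.mem_Ico.2 ⟨hi.1, him⟩) σ hσ.1
      refine ⟨Finset.mem_filter.2 ⟨hσP, hσ.2⟩, fun l hl hlm => ?_⟩
      rcases (Nat.lt_succ_iff.1 hlm).lt_or_eq with hlm | rfl
      exacts [hσX l hl hlm, hσ.2]
    · simp at hσ
  held σ hσ := by
    rw [Finset.mem_filter] at hσ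
    refine (h.held σ hσ.1).mono hw (fun i hi => ?_) m.le_succ
    rw [Finset.mem_filter, Finset.mem_Ico] at hi
    simp [hi.1.1, hi.1.2, hi.1.2.trans m.lt_succ_self, hi.2, Option.filter_eq_some_iff, hσ.2]
  collected := by
    set owned : List Bool → Finset ℕ := fun σ => (Finset.Ico a m).filter (owner · = some σ)
    have hleft : Backed X w (j + 1) (m + 1) ((P.filter (¬· <+: X m)).biUnion owned)
        (∑ σ ∈ P.filter (¬· <+: X m), amount σ) := by
      refine Backed.biUnion ?_ fun σ hσ => ?_
      · intro σ _ σ' _ hne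
        refine Finset.disjoint_filter.2 fun i _ hi hi' => hne ?_
        exact Option.some_injective _ (hi.symm.trans hi')
      · rw [Finset.mem_filter] at hσ
        refine (h.held σ hσ.1).succ (fun i hi => ?_) hσ.2
        rw [Finset.mem_filter] at hi
        exact ⟨(Finset.mem_Ico.1 hi.1).2, (h.owner_mem i hi.1 σ hi.2).2⟩
    refine ((h.collected.mono hw subset_rfl m.le_succ).union hleft ?_).mono hw ?_ le_rfl
    · refine Finset.disjoint_left.2 fun i hi hi' => ?_
      obtain ⟨σ, -, hσ⟩ := Finset.mem_biUnion.1 hi'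
      have hsome := (Finset.mem_filter.1 hσ).2
      rw [(Finset.mem_filter.1 hi).2] at hsome
      exact Option.some_ne_none σ hsome.symm
    · intro i hi
      rcases Finset.mem_union.1 hi with hi | hi
      · rw [Finset.mem_filter, Finset.mem_Ico] at hi
        simp [hi.1.1, hi.1.2, hi.1.2.trans m.lt_succ_self, hi.2]
      · obtain ⟨σ, hσ, hi⟩ := Finset.mem_biUnion.1 hi
        rw [Finset.mem_filter] at hσ
        rw [Finset.mem_filter, Finset.mem_Ico] at hi
        simp [hi.1.1, hi.1.2, hi.1.2.trans m.lt_succ_self, hi.2, hσ.2]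

end Ledger

end Ledger

theorem sum_filter_insert_update {α : Type*} [DecidableEq α] {P : Finset α} {x : α} (hx : x ∉ P)
    (p : α → Prop) [DecidablePred p] (f : α → ℝ) (y : ℝ) :
    ∑ z ∈ (insert x P).filter p, Function.update f x y z =
      (if p x then y else 0) + ∑ z ∈ P.filter p, f z := by
  rw [Finset.sum_filter, Finset.sum_insert hx, Function.update_self, ← Finset.sum_filter]
  congr 1
  exact Finset.sum_congr rfl fun z hz =>
    Function.update_of_ne (ne_of_mem_of_not_mem (Finset.mem_filter.1 hz).1 hx) _ _

theorem sum_filter_not_update_add {α : Type*} [DecidableEq α] {P : Finset α} {x : α} (hx : x ∉ P)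
    (p : α → Prop) [DecidablePred p] (f : α → ℝ) (y : ℝ) :
    ∑ z ∈ (insert x P).filter (¬p ·), Function.update f x y z + ∑ z ∈ (insert x P).filter p, f z =
      ∑ z ∈ P, f z + if p x then f x else y := by
  have hp := sum_filter_insert_update hx p f (f x)
  rw [Function.update_eq_self] at hp
  rw [sum_filter_insert_update hx, hp, ite_not, ← Finset.sum_filter_add_sum_filter_not P p f]
  split_ifs <;> ring

section Solvent

theorem BranchBounded.sum_quota_add_le {u : List Bool → Option ℕ} (hu : BranchBounded u) (d : ℕ)
    (τ ρ : List Bool) :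
    ∑ σ ∈ path τ ρ, wt (quota u d σ) + wt (quota u d ρ) ≤ 2⁻¹ ^ (d + 1) := by
  simp only [wt_quota]
  rw [← Finset.sum_mul, ← add_mul]
  exact mul_le_of_le_one_left (by positivity) (hu.sum_path_add_le τ ρ)

variable (u : List Bool → Option ℕ) (X : ℕ → List Bool) (a j : ℕ) (τ : List Bool)
  (goal : Option ℕ) (d : ℕ)

/-- The invariant of a level-`(j + 1)` strategy that is not done: its accounts are in order, and its
requests exceed its gain and the quotas it holds by at most what its first `c - 1` substrategies
were allowed to lose, `2⁻¹ ^ (d + 2) + ⋯ + 2⁻¹ ^ (d + c)`. -/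
structure Solvent (m a₁ : ℕ) (ρ : List Bool) (c : ℕ) (D : Dyad)
    (owner : ℕ → Option (List Bool)) : Prop where
  visiting : Visiting u X a j τ goal d m a₁ ρ c D
  ledger : Ledger X (spend u X (fresh u (j + 1) τ goal d) a) a j owner (path τ ρ)
    (fun σ => wt (quota u d σ)) m a₁ D.val
  sum_le : ∑ i ∈ Finset.Ico a a₁, spend u X (fresh u (j + 1) τ goal d) a i ≤
    D.val + ∑ σ ∈ path τ ρ, wt (quota u d σ) + (2⁻¹ ^ (d + 1) - 2⁻¹ ^ (d + c))

variable {u X a j τ goal d} {m a₁ c : ℕ} {ρ : List Bool} {D : Dyad}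
  {owner : ℕ → Option (List Bool)}

theorem val_add_released {Y : List Bool} {f g : Frame} (hτ : τ <+: Y) (hτg : τ <+: g.base) :
    (f.gained.add (released u Y f g)).val =
      f.gained.val + ∑ σ ∈ (insert g.base (path τ g.base)).filter (¬· <+: Y),
        Function.update (fun σ => wt (quota u f.slack σ)) g.base g.gained.val σ := by
  rw [Dyad.val_add, val_released hτ hτg, sum_filter_insert_update fun h => (mem_path.1 h).2.2 rfl,
    ite_not, add_comm (Finset.sum _ _)]

theorem val_add_released_add_sum_path {Y : List Bool} {f g : Frame} (hτ : τ <+: Y)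
    (hτg : τ <+: g.base) (hle : g.base.length ≤ Y.length)
    (hlt : g.base <+: Y → g.base.length < Y.length) :
    (f.gained.add (released u Y f g)).val +
        ∑ σ ∈ path τ (exitNode g.base Y), wt (quota u f.slack σ) =
      f.gained.val + ∑ σ ∈ path τ g.base, wt (quota u f.slack σ) +
        if g.base <+: Y then wt (quota u f.slack g.base) else g.gained.val := by
  rw [val_add_released hτ hτg, path_exitNode hτg hle hlt, add_assoc, add_assoc,
    sum_filter_not_update_add fun h => (mem_path.1 h).2.2 rfl]

namespace Solvent

theorem self (owner : ℕ → Option (List Bool)) :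
    Solvent u X a j τ goal d a a τ 1 (0, 0) owner where
  visiting := .self
  ledger := by simpa [Dyad.val] using Ledger.self
  sum_le := by simp [Dyad.val]

theorem stay (h : Solvent u X a j τ goal d m a₁ ρ c D owner) (hρ : ρ <+: X m)
    (hv : Visiting u X a j τ goal d (m + 1) a₁ ρ c D) :
    Solvent u X a j τ goal d (m + 1) a₁ ρ c D owner :=
  ⟨hv, h.ledger.stay spend_nonneg fun _ hσ => (mem_path.1 hσ).1.trans hρ, h.sum_le⟩

theorem child_contract (h : Solvent u X a j τ goal d m a₁ ρ c D owner)
    (hj : FulfilsContract u j) (hX : Monotone fun l => (X l).length) {c' : ℕ} {E : Dyad}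
    {L : List Frame}
    (hL : run u X (child u j ρ d c) a₁ m = ⟨ρ, quota u d ρ, d + 1 + c, c', E⟩ :: L) :
    Backed X (spend u X (fresh u (j + 1) τ goal d) a) j m (Finset.Ico a₁ m) E.val ∧
      ∑ i ∈ Finset.Ico a₁ m, spend u X (fresh u (j + 1) τ goal d) a i ≤
        min E.val (wt (quota u d ρ)) + 2⁻¹ ^ (d + 1 + c) := by
  obtain ⟨c'', E', L', hL', hback, hsum⟩ :=
    hj (quota u d ρ) (d + 1 + c) hX h.visiting.le_now h.visiting.node_prefix
  have hframe := (List.cons_eq_cons.1 (hL.symm.trans hL')).1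
  obtain rfl : E = E' := congrArg Frame.gained hframe
  have hspend : ∀ i ∈ Finset.Ico a₁ m, spend u X (child u j ρ d c) a₁ i =
      spend u X (fresh u (j + 1) τ goal d) a i := fun i hi =>
    (h.visiting.spend_eq i (Finset.mem_Ico.1 hi).1 (Finset.mem_Ico.1 hi).2).symm
  exact ⟨hback.congr hspend, (Finset.sum_congr rfl hspend).symm.trans_le hsum⟩

theorem sum_Ico_le (h : Solvent u X a j τ goal d m a₁ ρ c D owner) (hu : BranchBounded u)
    (hj : FulfilsContract u j) (hX : Monotone fun l => (X l).length) :
    ∑ i ∈ Finset.Ico a m, spend u X (fresh u (j + 1) τ goal d) a i ≤ D.val + 2⁻¹ ^ d := by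
  obtain ⟨c', E, L, hL, -⟩ := exists_run_fresh (u := u) (X := X) (j := j) (τ := ρ)
    (goal := quota u d ρ) (d := d + 1 + c) h.visiting.le_now
  have hchild := (h.child_contract hj hX hL).2
  have hbranch := hu.sum_quota_add_le d τ ρ
  have hhalf : (2⁻¹ : ℝ) ^ (d + 1) + 2⁻¹ ^ (d + 1) = 2⁻¹ ^ d := by ring
  have hvisit : (2⁻¹ : ℝ) ^ (d + 1 + c) ≤ 2⁻¹ ^ (d + c) :=
    pow_le_pow_of_le_one (by norm_num) (by norm_num) (by omega)
  rw [← Finset.sum_Ico_consecutive _ h.visiting.start_le h.visiting.le_now]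
  linarith [h.sum_le, min_le_right E.val (wt (quota u d ρ))]

theorem backed (h : Solvent u X a j τ goal d m a₁ ρ c D owner) :
    Backed X (spend u X (fresh u (j + 1) τ goal d) a) (j + 1) m (Finset.Ico a m) D.val :=
  h.ledger.backed spend_nonneg h.visiting.le_now

theorem exit (h : Solvent u X a j τ goal d m a₁ ρ c D owner) (hj : FulfilsContract u j)
    (hX : Monotone fun l => (X l).length) (hτ : τ <+: X m) {c' : ℕ} {E : Dyad} {L : List Frame}
    (hL : run u X (child u j ρ d c) a₁ m = ⟨ρ, quota u d ρ, d + 1 + c, c', E⟩ :: L)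
    (hdone : ρ <+: X m → wt (quota u d ρ) ≤ E.val ∧ ρ.length < (X m).length)
    (hspend : spend u X (fresh u (j + 1) τ goal d) a m = 0)
    (hv : Visiting u X a j τ goal d (m + 1) (m + 1) (exitNode ρ (X m)) (c + 1)
      (D.add (released u (X m) ⟨τ, goal, d, c, D⟩ ⟨ρ, quota u d ρ, d + 1 + c, c', E⟩))) :
    ∃ owner', Solvent u X a j τ goal d (m + 1) (m + 1) (exitNode ρ (X m)) (c + 1)
      (D.add (released u (X m) ⟨τ, goal, d, c, D⟩ ⟨ρ, quota u d ρ, d + 1 + c, c', E⟩)) owner' := by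
  obtain ⟨hback, hsum⟩ := h.child_contract hj hX hL
  have hρ : ρ ∉ path τ ρ := fun hρ => (mem_path.1 hρ).2.2 rfl
  have hpath : path τ (exitNode ρ (X m)) = (insert ρ (path τ ρ)).filter (· <+: X m) :=
    path_exitNode h.visiting.base_prefix (h.visiting.node_length hτ) fun hρX => (hdone hρX).2
  have hD := val_add_released (u := u) (f := ⟨τ, goal, d, c, D⟩)
    (g := ⟨ρ, quota u d ρ, d + 1 + c, c', E⟩) hτ h.visiting.base_prefix
  set q : List Bool → ℝ := fun σ => wt (quota u d σ)
  set amount : List Bool → ℝ := Function.update q ρ E.val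
  have hq : ∀ σ, σ <+: X m → q σ ≤ amount σ := by
    intro σ hσ
    obtain rfl | hne := eq_or_ne σ ρ
    · simpa only [amount, Function.update_self] using (hdone hσ).1
    · exact (Function.update_of_ne hne _ _).ge
  have hledger := (h.ledger.insert spend_nonneg h.visiting.start_le h.visiting.le_now
    h.visiting.node_prefix hρ hback).exit spend_nonneg
  refine ⟨_, hv, by
    rw [hD, hpath]; exact hledger.congr fun σ hσ => hq σ (Finset.mem_filter.1 hσ).2, ?_⟩
  have hbalance := val_add_released_add_sum_path (u := u) (f := ⟨τ, goal, d, c, D⟩)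
    (g := ⟨ρ, quota u d ρ, d + 1 + c, c', E⟩) hτ h.visiting.base_prefix
    (h.visiting.node_length hτ) fun hρX => (hdone hρX).2
  have hkept : min E.val (q ρ) ≤ if ρ <+: X m then q ρ else E.val := by
    split_ifs
    exacts [min_le_right _ _, min_le_left _ _]
  have hhalf : (2⁻¹ : ℝ) ^ (d + c) - 2⁻¹ ^ (d + (c + 1)) = 2⁻¹ ^ (d + 1 + c) := by ring
  rw [Finset.sum_Ico_succ_top h.visiting.start_le_now, hspend, add_zero,
    ← Finset.sum_Ico_consecutive _ h.visiting.start_le h.visiting.le_now]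
  linarith [h.sum_le, hbalance]

theorem contract (h : Solvent u X a j τ goal d m a₁ ρ c D owner) (hu : BranchBounded u)
    (hj : FulfilsContract u j) (hX : Monotone fun l => (X l).length)
    (hgoal : ∑ i ∈ Finset.Ico a m, spend u X (fresh u (j + 1) τ goal d) a i ≤
      wt goal + 2⁻¹ ^ d) :
    Contract u X a (j + 1) τ goal d m := by
  refine ⟨c, D, _, h.visiting.run_eq, h.backed, ?_⟩
  rw [← min_add_add_right]
  exact le_min (h.sum_Ico_le hu hj hX) hgoal

end Solvent

theorem fulfilsContract_succ (hu : BranchBounded u) (hj : FulfilsContract u j) :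
    FulfilsContract u (j + 1) := by
  intro X a τ goal d m hX ham hτ
  suffices Contract u X a (j + 1) τ goal d m ∧
      ((∃ f L, run u X (fresh u (j + 1) τ goal d) a m = f :: L ∧ f.Done) ∨
        ∃ a₁ ρ c D owner, Solvent u X a j τ goal d m a₁ ρ c D owner ∧
          ¬(⟨τ, goal, d, c, D⟩ : Frame).Done) from this.1
  induction m, ham using Nat.le_induction with
  | base =>
    refine ⟨contract_self, (em (⟨τ, goal, d, 1, (0, 0)⟩ : Frame).Done).imp ?_ ?_⟩
    · exact fun hdone => ⟨_, _, run_self, hdone⟩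
    · exact fun hdone => ⟨_, _, _, _, fun _ => none, .self _, hdone⟩
  | succ m ham ih =>
    obtain ⟨hcontract, ⟨f, L, hL, hf⟩ | ⟨a₁, ρ, c, D, owner, hs, hD⟩⟩ :=
      ih fun l hl hlm => hτ l hl (hlm.trans m.lt_succ_self)
    · exact ⟨hcontract.succ_of_done ham hL hf, .inl ⟨f, L, run_of_done ham hL hf m.le_succ, hf⟩⟩
    obtain ⟨hρ, -, hv⟩ | ⟨c', E, L, hL, hdone, hspend, hv⟩ :=
      hs.visiting.next hX (hτ m ham m.lt_succ_self) hD
    · have hs' := hs.stay hρ hv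
      refine ⟨hs'.contract hu hj hX ?_, .inr ⟨_, _, _, _, _, hs', hD⟩⟩
      exact (hs'.sum_Ico_le hu hj hX).trans (add_le_add_left (not_le.1 hD).le _)
    · obtain ⟨owner', hs'⟩ := hs.exit hj hX (hτ m ham m.lt_succ_self) hL hdone hspend hv
      refine ⟨hs'.contract hu hj hX ?_, (em _).imp (fun hdone' => ⟨_, _, hv.run_eq, hdone'⟩)
        fun hD' => ⟨_, _, _, _, _, hs', hD'⟩⟩
      obtain ⟨_, _, _, _, _, hsum⟩ := hcontract
      rw [Finset.sum_Ico_succ_top ham, hspend, add_zero]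
      exact hsum.trans (add_le_add_left (min_le_right _ _) _)

theorem fulfilsContract (hu : BranchBounded u) (j : ℕ) : FulfilsContract u j := by
  induction j with
  | zero => exact fulfilsContract_zero
  | succ j ih => exact fulfilsContract_succ hu ih

end Solvent

section Golden

theorem length_strPrefix (A : ℕ → Bool) (n : ℕ) : (strPrefix A n).length = n := by
  simp [strPrefix]

theorem take_strPrefix (A : ℕ → Bool) {m n : ℕ} (h : m ≤ n) :
    (strPrefix A n).take m = strPrefix A m := by
  simp [strPrefix, ← List.map_take, List.take_range, min_eq_left h]

theorem strPrefix_prefix (A : ℕ → Bool) {m n : ℕ} (h : m ≤ n) : strPrefix A m <+: strPrefix A n :=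
  take_strPrefix A h ▸ List.take_prefix _ _

theorem rePred_exists {α β : Type*} [Primcodable α] [Primcodable β] {p : α → β → Prop}
    (hp : ComputablePred fun x : α × β => p x.1 x.2) : REPred fun a => ∃ b, p a b := by
  obtain ⟨f, hf, heq⟩ := ComputablePred.computable_iff.1 hp
  have hpf (a : α) (b : β) : p a b ↔ f (a, b) = true := iff_of_eq (congrFun heq (a, b))
  have hcheck : Computable₂ fun (a : α) (k : ℕ) => (Encodable.decode k : Option β).bind fun b =>
      bif f (a, b) then some () else none :=
    Computable.option_bind (Computable.decode.comp .snd) <| (Computable.cond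
      (hf.comp ((Computable.fst.comp .fst).pair .snd)) (.const _) (.const _)).to₂
  refine (Partrec.rfindOpt hcheck).dom_re.of_eq fun a => Nat.rfindOpt_dom.trans ?_
  simp only [Option.mem_def, Option.bind_eq_some_iff, cond_eq_ite, Option.ite_none_right_eq_some,
    hpf]
  exact ⟨fun ⟨_, _, b, _, hb, _⟩ => ⟨b, hb⟩,
    fun ⟨b, hb⟩ => ⟨_, (), b, Encodable.encodek b, hb, trivial⟩⟩

/-- A computable approximation to `A` by strings whose lengths do not decrease. -/
structure Approximates (A : ℕ → Bool) (X : ℕ → List Bool) : Prop where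
  mono : Monotone fun l => (X l).length
  eventually_prefix : ∀ n, ∃ m₀, ∀ m, m₀ ≤ m → strPrefix A n <+: X m
  computable : Computable X

/-- The equivalence that makes `Frame` an encodable type. -/
def Frame.equivProd : Frame ≃ List Bool × Option ℕ × ℕ × ℕ × Dyad where
  toFun f := (f.base, f.goal, f.slack, f.visits, f.gained)
  invFun p := ⟨p.1, p.2.1, p.2.2.1, p.2.2.2.1, p.2.2.2.2⟩

instance : Primcodable Frame :=
  Primcodable.ofEquiv _ Frame.equivProd

theorem Frame.primrec_base : Primrec Frame.base :=
  Primrec.fst.comp (Primrec.of_equiv (e := Frame.equivProd))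

variable (u : List Bool → Option ℕ) (A : ℕ → Bool)

/-- All level-`j` strategies whose base the approximation extends reach their goal. -/
def Succeeds (j : ℕ) : Prop :=
  ∀ ⦃X⦄, Approximates A X → ∀ ⦃a τ⦄ goal d, (∀ l, a ≤ l → τ <+: X l) →
    ∃ m, a ≤ m ∧ ∃ f L, run u X (fresh u j τ goal d) a m = f :: L ∧ f.Done

/-- There is a computably enumerable set of finite total `u`-weight that contains all initial
segments of `A`. -/
def Covered : Prop :=
  ∃ G : List Bool → Prop, REPred G ∧ (∀ n, G (strPrefix A n)) ∧
    ∃ B : ℝ, ∀ F : Finset (List Bool), (∀ ρ ∈ F, G ρ) → ∑ ρ ∈ F, wt (u ρ) ≤ B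

section

variable (X : ℕ → List Bool) (a j : ℕ) (τ : List Bool) (goal : Option ℕ) (d : ℕ)

/-- The node at which the level-`(j + 1)` strategy started at time `a` works at time `m`, that is
the base of the second strategy of its stack. -/
def nodeAt (m : ℕ) : List Bool :=
  (run u X (fresh u (j + 1) τ goal d) a m)[1]?.elim [] Frame.base

/-- The level-`(j + 1)` strategy started at time `a` plays forever without being done. -/
structure Unsuccessful : Prop where
  mono : Monotone fun l => (X l).length
  base_prefix : ∀ l, a ≤ l → τ <+: X l
  not_done : ∀ m, a ≤ m → ∀ f L, run u X (fresh u (j + 1) τ goal d) a m = f :: L → ¬f.Done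

end

variable {u A} {X : ℕ → List Bool} {a j m a₁ c d : ℕ} {τ ρ : List Bool} {goal : Option ℕ} {D : Dyad}

theorem succeeds_zero : Succeeds u A 0 := by
  intro X _ a τ goal d _
  have hstart : run u X (fresh u 0 τ goal d) a a = [⟨τ, goal, d, 1, (0, 0)⟩] := run_self
  by_cases hdone : (⟨τ, goal, d, 1, (0, 0)⟩ : Frame).Done
  · exact ⟨a, le_rfl, _, _, hstart, hdone⟩
  · refine ⟨a + 1, a.le_succ, ⟨τ, goal, d, 1, .ofExponent goal⟩, [], ?_,
      (Dyad.val_ofExponent goal).ge⟩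
    rw [run_succ le_rfl, hstart]
    simp only [step, if_neg hdone]

theorem Visiting.nodeAt_eq (hv : Visiting u X a j τ goal d m a₁ ρ c D) :
    nodeAt u X a j τ goal d m = ρ := by
  obtain ⟨c', E, L, hL, -⟩ := exists_run_fresh (u := u) (X := X) (j := j) (τ := ρ)
    (goal := quota u d ρ) (d := d + 1 + c) hv.le_now
  rw [nodeAt, hv.run_eq, child, hL]
  rfl

theorem computable_run (hstep : Computable₂ (step u)) (hX : Computable X) (L : List Frame)
    (a : ℕ) : Computable fun k => run u X L a (a + k) := by
  have hmove : Computable₂ fun (_ : ℕ) (p : ℕ × List Frame) => (step u (X (a + p.1)) p.2).1 :=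
    (Computable.fst.comp <| hstep.comp
      (hX.comp (Primrec.nat_add.to_comp.comp (.const a) (Computable.fst.comp .snd)))
      (Computable.snd.comp .snd)).to₂
  refine (Computable.nat_rec Computable.id (.const L) hmove).of_eq fun k => ?_
  induction k with
  | zero => simp
  | succ k ih => rw [← add_assoc, run_succ (Nat.le_add_right a k), ← ih]; rfl

theorem computable_nodeAt (hstep : Computable₂ (step u)) (hX : Computable X) :
    Computable fun k => nodeAt u X a j τ goal d (a + k) := by
  have hbase : Primrec fun L : List Frame => L[1]?.elim [] Frame.base := by
    refine (Primrec.option_casesOn (Primrec.list_getElem?.comp .id (.const 1)) (.const [])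
      (Frame.primrec_base.comp .snd).to₂).of_eq fun L => ?_
    cases h : L[1]? <;> simp [h]
  exact hbase.to_comp.comp (computable_run hstep hX _ a)

theorem primrecRel_prefix : PrimrecRel fun σ τ : List Bool => σ <+: τ :=
  (Primrec.eq.comp₂ Primrec₂.left
    (Primrec.list_take.comp (Primrec.list_length.comp .fst) .snd).to₂).of_eq
    fun _ _ => List.prefix_iff_eq_take.symm

theorem strPrefix_succ_prefix_exitNode {n : ℕ} {Y : List Bool} (hρ : strPrefix A n <+: ρ)
    (hY : strPrefix A (n + 1) <+: Y) : strPrefix A (n + 1) <+: exitNode ρ Y := by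
  have hcommon := (prefix_iff_length_le_commonLength hρ).1
    ((strPrefix_prefix A n.le_succ).trans hY)
  rw [length_strPrefix] at hcommon
  refine List.prefix_take_iff.2 ⟨hY, ?_⟩
  rw [length_strPrefix]
  omega

namespace Unsuccessful

theorem exists_visiting (h : Unsuccessful u X a j τ goal d) (ham : a ≤ m) :
    ∃ a₁ ρ c D, Visiting u X a j τ goal d m a₁ ρ c D := by
  induction m, ham using Nat.le_induction with
  | base => exact ⟨_, _, _, _, .self⟩
  | succ m ham ih =>
    obtain ⟨a₁, ρ, c, D, hv⟩ := ih
    obtain ⟨-, -, hv'⟩ | ⟨_, _, _, -, -, -, hv'⟩ :=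
      hv.next h.mono (h.base_prefix m ham) (h.not_done m ham _ _ hv.run_eq) <;>
    exact ⟨_, _, _, _, hv'⟩

theorem prefix_nodeAt_of_le (h : Unsuccessful u X a j τ goal d) {σ : List Bool} {M : ℕ}
    (haM : a ≤ M) (hσX : ∀ m, M ≤ m → σ <+: X m) (hσ : σ <+: nodeAt u X a j τ goal d M)
    (hMm : M ≤ m) :
    σ <+: nodeAt u X a j τ goal d m := by
  induction m, hMm using Nat.le_induction with
  | base => exact hσ
  | succ m hMm ih =>
    have ham := haM.trans hMm
    obtain ⟨a₁, ρ, c, D, hv⟩ := h.exists_visiting ham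
    rw [hv.nodeAt_eq] at ih
    obtain ⟨-, -, hv'⟩ | ⟨_, _, _, -, -, -, hv'⟩ :=
      hv.next h.mono (h.base_prefix m ham) (h.not_done m ham _ _ hv.run_eq) <;>
    rw [hv'.nodeAt_eq]
    exacts [ih, prefix_exitNode ih (hσX m hMm)]

/-- At a node `ρ` on `A` the substrategy succeeds, since all of its level do, and is replaced by one
at a longer node; off `A` it is replaced when the approximation leaves its node. -/
theorem exists_prefix_nodeAt (h : Unsuccessful u X a j τ goal d) (hX : Approximates A X)
    (hj : Succeeds u A j) {n M : ℕ} (haM : a ≤ M)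
    (hn : ∀ m, M ≤ m → strPrefix A n <+: nodeAt u X a j τ goal d m)
    (hnX : ∀ m, M ≤ m → strPrefix A (n + 1) <+: X m) :
    ∃ m, M ≤ m ∧ strPrefix A (n + 1) <+: nodeAt u X a j τ goal d m := by
  by_contra! hno
  obtain ⟨a₁, ρ, c, D, hv⟩ := h.exists_visiting haM
  have hnρ : strPrefix A n <+: ρ := hv.nodeAt_eq ▸ hn M le_rfl
  have hstay : ∀ m, M ≤ m → Visiting u X a j τ goal d m a₁ ρ c D → ρ <+: X m ∧
      (∀ f L, run u X (child u j ρ d c) a₁ m = f :: L → f.Done → (X m).length ≤ ρ.length) ∧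
      Visiting u X a j τ goal d (m + 1) a₁ ρ c D := by
    intro m hMm hvm
    refine (hvm.next h.mono (h.base_prefix m (haM.trans hMm))
      (h.not_done m (haM.trans hMm) _ _ hvm.run_eq)).resolve_right ?_
    rintro ⟨_, _, _, -, -, -, hv'⟩
    refine hno (m + 1) (hMm.trans m.le_succ) ?_
    rw [hv'.nodeAt_eq]
    exact strPrefix_succ_prefix_exitNode hnρ (hnX m hMm)
  have hstuck : ∀ m, M ≤ m → Visiting u X a j τ goal d m a₁ ρ c D := fun m hMm =>
    Nat.le_induction hv (fun m hMm ih => (hstay m hMm ih).2.2) m hMm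
  have hρX : ∀ l, a₁ ≤ l → ρ <+: X l := fun l hl =>
    (hstuck (max M (l + 1)) (le_max_left _ _)).node_prefix l hl (by omega)
  obtain ⟨m, ham, f, L, hL, hf⟩ := hj hX (quota u d ρ) (d + 1 + c) hρX
  have hM := le_max_left M m
  obtain ⟨hρ, hlen, -⟩ := hstay _ hM (hstuck _ hM)
  refine hno M le_rfl ?_
  rw [hv.nodeAt_eq]
  exact List.prefix_of_prefix_length_le (hnX _ hM) hρ ((hnX _ hM).length_le.trans
    (hlen f L (run_of_done ham hL hf (le_max_right _ _)) hf))

theorem eventually_prefix_nodeAt (h : Unsuccessful u X a j τ goal d) (hX : Approximates A X)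
    (hj : Succeeds u A j) (n : ℕ) :
    ∃ M, a ≤ M ∧ ∀ m, M ≤ m → strPrefix A n <+: nodeAt u X a j τ goal d m := by
  induction n with
  | zero => exact ⟨a, le_rfl, fun m _ => by simp [strPrefix]⟩
  | succ n ih =>
    obtain ⟨M, haM, hn⟩ := ih
    obtain ⟨M', hnX⟩ := hX.eventually_prefix (n + 1)
    have haM' := haM.trans (le_max_left M M')
    have hnX' : ∀ m, max M M' ≤ m → strPrefix A (n + 1) <+: X m := fun m hm =>
      hnX m ((le_max_right _ _).trans hm)
    obtain ⟨m, hm, hnm⟩ := h.exists_prefix_nodeAt hX hj haM'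
      (fun m hm => hn m ((le_max_left _ _).trans hm)) hnX'
    exact ⟨m, haM'.trans hm, fun m' hm' => h.prefix_nodeAt_of_le (haM'.trans hm)
      (fun l hl => hnX' l (hm.trans hl)) hnm hm'⟩

theorem exists_sum_visited_le (h : Unsuccessful u X a j τ goal d) (ham : a ≤ m) :
    ∃ a₁ ρ c D, Visiting u X a j τ goal d m a₁ ρ c D ∧
      ∑ σ ∈ (Finset.Icc a m).biUnion fun i => path [] (nodeAt u X a j τ goal d i),
        wt (quota u d σ) ≤ D.val + ∑ σ ∈ path [] ρ, wt (quota u d σ) := by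
  induction m, ham using Nat.le_induction with
  | base =>
    refine ⟨_, _, _, _, .self, ?_⟩
    rw [Finset.Icc_self, Finset.singleton_biUnion, Visiting.self.nodeAt_eq]
    simp [Dyad.val]
  | succ m ham ih =>
    obtain ⟨a₁, ρ, c, D, hv, hsum⟩ := ih
    rw [← Finset.insert_Icc_right_eq_Icc_add_one (by omega), Finset.biUnion_insert]
    set S := (Finset.Icc a m).biUnion fun i => path [] (nodeAt u X a j τ goal d i)
    have hρS : path [] ρ ⊆ S := hv.nodeAt_eq ▸ Finset.subset_biUnion_of_mem
      (fun i => path [] (nodeAt u X a j τ goal d i)) (Finset.mem_Icc.2 ⟨ham, le_rfl⟩)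
    obtain ⟨-, -, hv'⟩ | ⟨c', E, _, -, hρ, -, hv'⟩ :=
      hv.next h.mono (h.base_prefix m ham) (h.not_done m ham _ _ hv.run_eq) <;>
    refine ⟨_, _, _, _, hv', ?_⟩ <;>
    rw [hv'.nodeAt_eq]
    · rwa [Finset.union_eq_right.2 hρS]
    · have hbalance := val_add_released_add_sum_path (u := u) (f := ⟨τ, goal, d, c, D⟩)
        (g := ⟨ρ, quota u d ρ, d + 1 + c, c', E⟩) (List.nil_prefix (l := X m)) List.nil_prefix
        (hv.node_length (h.base_prefix m ham)) fun hρX => (hρ hρX).2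
      have hpath := path_exitNode (List.nil_prefix (l := ρ))
        (hv.node_length (h.base_prefix m ham)) fun hρX => (hρ hρX).2
      have hnew : path [] (exitNode ρ (X m)) \ S ⊆ ({ρ} : Finset _).filter (· <+: X m) := by
        intro σ hσ
        rw [hpath, Finset.mem_sdiff, Finset.mem_filter, Finset.mem_insert] at hσ
        exact Finset.mem_filter.2 ⟨Finset.mem_singleton.2
          (hσ.1.1.resolve_right fun hσρ => hσ.2 (hρS hσρ)), hσ.1.2⟩
      have hnew_sum : ∑ σ ∈ path [] (exitNode ρ (X m)) \ S, wt (quota u d σ) ≤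
          if ρ <+: X m then wt (quota u d ρ) else E.val := by
        refine (Finset.sum_le_sum_of_subset_of_nonneg hnew fun _ _ _ => wt_nonneg _).trans ?_
        rw [Finset.sum_filter, Finset.sum_singleton]
        split_ifs
        exacts [le_rfl, E.val_nonneg]
      rw [Finset.union_comm, ← Finset.union_sdiff_self_eq_union,
        Finset.sum_union Finset.disjoint_sdiff]
      linarith

theorem sum_visited_le (h : Unsuccessful u X a j τ goal d) (hu : BranchBounded u) (ham : a ≤ m) :
    ∑ σ ∈ (Finset.Icc a m).biUnion fun i => path [] (nodeAt u X a j τ goal d i), wt (u σ) ≤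
      wt goal * 2 ^ (d + 1) + 1 := by
  obtain ⟨a₁, ρ, c, D, hv, hsum⟩ := h.exists_sum_visited_le ham
  have hgoal := not_le.1 (h.not_done m ham _ _ hv.run_eq)
  have hbranch := hu.sum_quota_add_le d [] ρ
  have hρ := wt_nonneg (quota u d ρ)
  have hpow : (2⁻¹ : ℝ) ^ (d + 1) * 2 ^ (d + 1) = 1 := by
    rw [← mul_pow]
    norm_num
  set S := (Finset.Icc a m).biUnion fun i => path [] (nodeAt u X a j τ goal d i)
  calc ∑ σ ∈ S, wt (u σ) = (∑ σ ∈ S, wt (quota u d σ)) * 2 ^ (d + 1) := by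
        simp only [wt_quota]
        rw [← Finset.sum_mul, mul_assoc, hpow, mul_one]
    _ ≤ (wt goal + 2⁻¹ ^ (d + 1)) * 2 ^ (d + 1) := by
        gcongr
        linarith
    _ = wt goal * 2 ^ (d + 1) + 1 := by rw [add_mul, hpow]

theorem covered (h : Unsuccessful u X a j τ goal d) (hu : BranchBounded u)
    (hstep : Computable₂ (step u)) (hX : Approximates A X) (hj : Succeeds u A j) : Covered u A := by
  refine ⟨fun σ => ∃ k, σ <+: nodeAt u X a j τ goal d (a + k) ∧
    σ ≠ nodeAt u X a j τ goal d (a + k), rePred_exists ?_, ?_,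
    wt goal * 2 ^ (d + 1) + 1, ?_⟩
  · obtain ⟨_, hproper⟩ := (primrecRel_prefix.and Primrec.eq.not).computablePred
    refine ⟨fun x => inferInstanceAs (Decidable (_ ∧ _)), ?_⟩
    exact (hproper.comp (Computable.fst.pair
      ((computable_nodeAt (a := a) (j := j) (τ := τ) (goal := goal) (d := d) hstep
        hX.computable).comp Computable.snd))).of_eq fun x => by simp
  · intro n
    obtain ⟨M, haM, hM⟩ := h.eventually_prefix_nodeAt hX hj (n + 1)
    have hn := hM M le_rfl
    refine ⟨M - a, ?_⟩
    rw [Nat.add_sub_cancel' haM]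
    refine ⟨(strPrefix_prefix A n.le_succ).trans hn, fun heq => ?_⟩
    have hlen := hn.length_le
    rw [← heq, length_strPrefix, length_strPrefix] at hlen
    omega
  · intro F hF
    choose! k hk using hF
    refine (Finset.sum_le_sum_of_subset_of_nonneg (fun σ hσ => ?_) fun _ _ _ =>
      wt_nonneg _).trans (h.sum_visited_le hu (Nat.le_add_right a (F.sup k)))
    rw [Finset.mem_biUnion]
    refine ⟨a + k σ, Finset.mem_Icc.2 ⟨Nat.le_add_right _ _,
      Nat.add_le_add_left (Finset.le_sup hσ) a⟩, ?_⟩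
    exact mem_path.2 ⟨(hk σ hσ).1, List.nil_prefix, (hk σ hσ).2⟩

end Unsuccessful

theorem covered_of_not_succeeds_succ (hu : BranchBounded u) (hstep : Computable₂ (step u))
    (hj : Succeeds u A j) (hj' : ¬Succeeds u A (j + 1)) : Covered u A := by
  rw [Succeeds] at hj'
  push Not at hj'
  obtain ⟨X, hX, a, τ, goal, d, hτ, hnot⟩ := hj'
  exact Unsuccessful.covered ⟨hX.mono, hτ, hnot⟩ hu hstep hX hj

theorem succeeds_of_not_covered (hu : BranchBounded u) (hstep : Computable₂ (step u))
    (hA : ¬Covered u A) (j : ℕ) : Succeeds u A j := by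
  induction j with
  | zero => exact succeeds_zero
  | succ j ih => exact by_contra fun h => hA (covered_of_not_succeeds_succ hu hstep ih h)

end Golden

/-! ### The Kraft–Chaitin theorem -/

section KraftChaitin

theorem primrec_pow : Primrec₂ ((· ^ ·) : ℕ → ℕ → ℕ) :=
  Primrec₂.unpaired'.1 Nat.Primrec.pow

theorem primrec_testBit : Primrec₂ Nat.testBit := by
  have hbit : PrimrecRel fun k i : ℕ => k / 2 ^ i % 2 = 1 :=
    Primrec.eq.comp (Primrec.nat_mod.comp (Primrec.nat_div.comp .fst
      (primrec_pow.comp (.const 2) .snd)) (.const 2)) (.const 1)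
  exact hbit.decide.of_eq fun _ _ => Nat.testBit_eq_decide_div_mod_eq.symm

/-- The `n`-digit binary expansion of `k`, most significant digit first. It encodes the dyadic
interval from `k / 2 ^ n` to `(k + 1) / 2 ^ n`. -/
def bits (n k : ℕ) : List Bool :=
  (List.range n).map fun t => k.testBit (n - 1 - t)

@[simp]
theorem length_bits (n k : ℕ) : (bits n k).length = n := by
  simp [bits]

theorem primrec_bits : Primrec₂ bits :=
  Primrec.list_map (Primrec.list_range.comp .fst) <|
    primrec_testBit.comp (Primrec.snd.comp .fst) <|
      Primrec.nat_sub.comp (Primrec.nat_sub.comp (Primrec.fst.comp .fst) (.const 1)) .snd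

theorem eq_div_of_bits_prefix {n k n' k' : ℕ} (hk : k < 2 ^ n) (hk' : k' < 2 ^ n')
    (h : bits n k <+: bits n' k') : k = k' / 2 ^ (n' - n) := by
  have hn : n ≤ n' := by simpa using h.length_le
  refine Nat.eq_of_testBit_eq fun i => ?_
  rw [Nat.testBit_div_two_pow]
  rcases Nat.lt_or_ge i n with hi | hi
  · have hdigit := h.getElem (i := n - 1 - i) (by rw [length_bits]; omega)
    simp only [bits, List.getElem_map, List.getElem_range] at hdigit
    rwa [show n - 1 - (n - 1 - i) = i by omega,
      show n' - 1 - (n - 1 - i) = n' - n + i by omega, Nat.add_comm] at hdigit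
  · rw [Nat.testBit_lt_two_pow (hk.trans_le (Nat.pow_le_pow_right two_pos hi)),
      Nat.testBit_lt_two_pow (hk'.trans_le (Nat.pow_le_pow_right two_pos (by omega)))]

theorem interval_subset_of_bits_prefix {n k n' k' : ℕ} (hk : k < 2 ^ n) (hk' : k' < 2 ^ n')
    (h : bits n k <+: bits n' k') :
    (k / 2 ^ n : ℝ) ≤ k' / 2 ^ n' ∧ ((k' + 1) / 2 ^ n' : ℝ) ≤ (k + 1) / 2 ^ n := by
  have hdiv := eq_div_of_bits_prefix hk hk' h
  obtain ⟨t, rfl⟩ := Nat.exists_eq_add_of_le (by simpa using h.length_le : n ≤ n')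
  rw [Nat.add_sub_cancel_left] at hdiv
  have hlower : (k * 2 ^ t : ℝ) ≤ k' := by
    exact_mod_cast hdiv ▸ Nat.div_mul_le_self k' (2 ^ t)
  have hupper : (k' + 1 : ℝ) ≤ (k + 1) * 2 ^ t := by
    have := Nat.lt_div_mul_add (a := k') (b := 2 ^ t) (by positivity)
    rw [← hdiv] at this
    exact_mod_cast (by linarith : k' + 1 ≤ (k + 1) * 2 ^ t)
  have hscale (x : ℝ) : x / 2 ^ n = x * 2 ^ t / 2 ^ (n + t) := by
    rw [pow_add]
    field_simp
  rw [hscale k, hscale (k + 1)]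
  constructor <;> gcongr

theorem Dyad.primrec_add : Primrec₂ Dyad.add := by
  have hpow {α} [Primcodable α] {f : α → ℕ} (hf : Primrec f) : Primrec fun x => 2 ^ f x :=
    primrec_pow.comp (.const 2) hf
  exact Primrec.pair (Primrec.nat_add.comp
    (Primrec.nat_mul.comp (Primrec.fst.comp .fst) (hpow (Primrec.snd.comp .snd)))
    (Primrec.nat_mul.comp (Primrec.fst.comp .snd) (hpow (Primrec.snd.comp .fst))))
    (Primrec.nat_add.comp (Primrec.snd.comp .fst) (Primrec.snd.comp .snd))

theorem Dyad.primrec_ofExponent : Primrec Dyad.ofExponent := by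
  refine (Primrec.option_casesOn Primrec.id (.const ((0, 0) : Dyad))
    (Primrec.pair (.const 1) .snd).to₂).of_eq fun o => ?_
  cases o <;> rfl

theorem Dyad.primrec_ofList : Primrec Dyad.ofList :=
  Primrec.list_foldr .id (.const (0, 0)) <| (Dyad.primrec_add.comp
    (Dyad.primrec_ofExponent.comp (Primrec.fst.comp .snd)) (Primrec.snd.comp .snd)).to₂

/-- The least `k` such that `k / 2 ^ (r + 1)` exceeds `S`. -/
def intervalIndex (S : Dyad) (r : ℕ) : ℕ :=
  S.1 * 2 ^ (r + 1) / 2 ^ S.2 + 1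

theorem val_lt_intervalIndex (S : Dyad) (r : ℕ) :
    S.val < (intervalIndex S r : ℝ) / 2 ^ (r + 1) := by
  rw [Dyad.val, div_lt_div_iff₀ (by positivity) (by positivity), intervalIndex]
  have := Nat.lt_div_mul_add (a := S.1 * 2 ^ (r + 1)) (b := 2 ^ S.2) (by positivity)
  exact_mod_cast (by linarith :
    S.1 * 2 ^ (r + 1) < (S.1 * 2 ^ (r + 1) / 2 ^ S.2 + 1) * 2 ^ S.2)

theorem intervalIndex_add_one_le (S : Dyad) (r : ℕ) :
    ((intervalIndex S r : ℝ) + 1) / 2 ^ (r + 1) ≤ S.val + 2⁻¹ ^ r := by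
  have hfloor : ((S.1 * 2 ^ (r + 1) / 2 ^ S.2 : ℕ) : ℝ) / 2 ^ (r + 1) ≤ S.val := by
    rw [Dyad.val, div_le_div_iff₀ (by positivity) (by positivity)]
    exact_mod_cast Nat.div_mul_le_self (S.1 * 2 ^ (r + 1)) (2 ^ S.2)
  have htwo : (2 : ℝ) / 2 ^ (r + 1) = 2⁻¹ ^ r := by
    rw [pow_succ, inv_pow]
    field_simp
  rw [intervalIndex, Nat.cast_add_one, add_assoc, one_add_one_eq_two, add_div, htwo]
  gcongr

theorem primrec_intervalIndex : Primrec₂ intervalIndex := by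
  have hpow {α} [Primcodable α] {f : α → ℕ} (hf : Primrec f) : Primrec fun x => 2 ^ f x :=
    primrec_pow.comp (.const 2) hf
  exact Primrec.succ.comp (Primrec.nat_div.comp (Primrec.nat_mul.comp (Primrec.fst.comp .fst)
    (hpow (Primrec.succ.comp .snd))) (hpow (Primrec.snd.comp .fst)))

theorem exists_prefixFreeMachine {graph : ℕ → Option (List Bool × ℕ)} (hgraph : Primrec graph)
    (hpf : ∀ ⦃i j σ τ x y⦄, graph i = some (σ, x) → graph j = some (τ, y) → σ <+: τ → i = j) :
    ∃ e, PrefixFreeMachine e ∧ ∀ ⦃i σ x⦄, graph i = some (σ, x) →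
      x ∈ (Denumerable.ofNat Nat.Partrec.Code e).eval (Encodable.encode σ) := by
  let output (s i : ℕ) : Option ℕ :=
    (graph i).bind fun q => if Encodable.encode q.1 = s then some q.2 else none
  have houtput_iff {s i x : ℕ} :
      x ∈ output s i ↔ ∃ σ, graph i = some (σ, x) ∧ Encodable.encode σ = s := by
    simp [output, Option.bind_eq_some_iff, and_comm]
  have houtput : Computable₂ output :=
    (Primrec.option_bind (hgraph.comp .snd) (Primrec.ite
      (Primrec.eq.comp (Primrec.encode.comp (Primrec.fst.comp .snd)) (Primrec.fst.comp .fst))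
      (Primrec.option_some.comp (Primrec.snd.comp .snd)) (.const none)).to₂).to_comp
  obtain ⟨code, hcode⟩ := Nat.Partrec.Code.exists_code.1
    (Partrec.nat_iff.1 (Partrec.rfindOpt houtput))
  have heval (s : ℕ) : (Denumerable.ofNat Nat.Partrec.Code (Encodable.encode code)).eval s =
      Nat.rfindOpt (output s) := by
    rw [Denumerable.ofNat_encode, hcode]
  refine ⟨Encodable.encode code, ?_, ?_⟩
  · intro σ hσ τ hτ hστ
    simp only [machineDom, Set.mem_ofPred_eq, heval, Nat.rfindOpt_dom] at hσ hτ
    obtain ⟨i, x, hσ⟩ := hσ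
    obtain ⟨j, y, hτ⟩ := hτ
    obtain ⟨σ', hi, hσ'⟩ := houtput_iff.1 hσ
    obtain ⟨τ', hj, hτ'⟩ := houtput_iff.1 hτ
    obtain rfl := Encodable.encode_injective hσ'
    obtain rfl := Encodable.encode_injective hτ'
    obtain rfl := hpf hi hj hστ
    exact congrArg Prod.fst (Option.some.inj (hi.symm.trans hj))
  · intro i σ x hi
    have hdom := Nat.rfindOpt_dom.2 ⟨i, x, houtput_iff.2 ⟨σ, hi, rfl⟩⟩
    obtain ⟨j, hj⟩ := Nat.rfindOpt_spec (Part.get_mem hdom)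
    obtain ⟨τ, hjτ, hτ⟩ := houtput_iff.1 hj
    obtain rfl := Encodable.encode_injective hτ
    obtain rfl := hpf hi hjτ List.prefix_rfl
    obtain ⟨-, hx⟩ := Prod.mk.inj (Option.some.inj (hi.symm.trans hjτ))
    rw [heval, hx]
    exact Part.get_mem hdom

section Requests

variable (req : ℕ → Option (ℕ × ℕ))

/-- The total weight of the requests made before time `n`. -/
def spentBefore (n : ℕ) : Dyad :=
  .ofList ((List.range n).map fun i => (req i).map Prod.fst)

/-- The program assigned to a request of exponent `r` made at time `i`. -/
def codeword (i r : ℕ) : List Bool :=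
  bits (r + 1) (intervalIndex (spentBefore req i) r)

variable {req}

theorem val_spentBefore (n : ℕ) :
    (spentBefore req n).val = ∑ i ∈ Finset.range n, wt ((req i).map Prod.fst) := by
  rw [spentBefore, Dyad.val_ofList, List.map_map]
  exact (Multiset.sum_coe _).symm

theorem val_spentBefore_succ {i r x : ℕ} (h : req i = some (r, x)) :
    (spentBefore req (i + 1)).val = (spentBefore req i).val + 2⁻¹ ^ r := by
  rw [val_spentBefore, Finset.sum_range_succ, ← val_spentBefore, h]
  rfl

theorem val_spentBefore_mono : Monotone fun n => (spentBefore req n).val := by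
  refine monotone_nat_of_le_succ fun n => ?_
  rw [val_spentBefore, val_spentBefore, Finset.sum_range_succ]
  exact le_add_of_nonneg_right (wt_nonneg _)

theorem intervalIndex_spentBefore_lt (hsum : ∀ n, (spentBefore req n).val ≤ 1) {i r x : ℕ}
    (h : req i = some (r, x)) : intervalIndex (spentBefore req i) r < 2 ^ (r + 1) := by
  have hle := (intervalIndex_add_one_le (spentBefore req i) r).trans
    ((val_spentBefore_succ h).symm.le.trans (hsum (i + 1)))
  rw [div_le_one (by positivity)] at hle
  exact_mod_cast hle

/-- The intervals of the codewords of successive requests are disjoint. -/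
theorem eq_of_codeword_prefix (hsum : ∀ n, (spentBefore req n).val ≤ 1) {i r x i' r' x' : ℕ}
    (h : req i = some (r, x)) (h' : req i' = some (r', x'))
    (hprefix : codeword req i r <+: codeword req i' r') : i = i' := by
  obtain ⟨hleft, hright⟩ := interval_subset_of_bits_prefix (intervalIndex_spentBefore_lt hsum h)
    (intervalIndex_spentBefore_lt hsum h') hprefix
  have hlo := val_lt_intervalIndex (spentBefore req i) r
  have hhi := intervalIndex_add_one_le (spentBefore req i) r
  have hlo' := val_lt_intervalIndex (spentBefore req i') r'
  have hhi' := intervalIndex_add_one_le (spentBefore req i') r'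
  rw [← val_spentBefore_succ h] at hhi
  rw [← val_spentBefore_succ h'] at hhi'
  have hnonempty : (intervalIndex (spentBefore req i') r' : ℝ) / 2 ^ (r' + 1) ≤
      (intervalIndex (spentBefore req i') r' + 1) / 2 ^ (r' + 1) := by
    gcongr
    exact (lt_add_one _).le
  rcases lt_trichotomy i i' with hlt | heq | hlt
  · linarith [val_spentBefore_mono (req := req) hlt]
  · exact heq
  · linarith [val_spentBefore_mono (req := req) hlt]

theorem Kcpx_le_of_requests (hreq : Primrec req) (hsum : ∀ n, (spentBefore req n).val ≤ 1) :
    ∃ C, ∀ ⦃i r x⦄, req i = some (r, x) → Kcpx x ≤ r + C := by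
  let graph (i : ℕ) : Option (List Bool × ℕ) := (req i).map fun q => (codeword req i q.1, q.2)
  have hspent : Primrec (spentBefore req) := Dyad.primrec_ofList.comp <|
    Primrec.list_map .list_range (Primrec.option_map (hreq.comp .snd) (Primrec.fst.comp .snd).to₂)
  have hcodeword : Primrec₂ (codeword req) := primrec_bits.comp (Primrec.succ.comp .snd)
    (primrec_intervalIndex.comp (hspent.comp .fst) .snd)
  have hgraph : Primrec graph := Primrec.option_map hreq <| Primrec.pair
    (hcodeword.comp .fst (Primrec.fst.comp .snd)) (Primrec.snd.comp .snd)
  obtain ⟨e, hpf, he⟩ := exists_prefixFreeMachine hgraph (by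
    intro i j σ τ x y hi hj hστ
    obtain ⟨⟨r, _⟩, hri, hσ⟩ := Option.map_eq_some_iff.1 hi
    obtain ⟨⟨r', _⟩, hrj, hτ⟩ := Option.map_eq_some_iff.1 hj
    obtain ⟨rfl, -⟩ := Prod.mk.inj hσ
    obtain ⟨rfl, -⟩ := Prod.mk.inj hτ
    exact eq_of_codeword_prefix hsum hri hrj hστ)
  refine ⟨2 * e + 3, fun i r x hi => Nat.sInf_le ⟨e, codeword req i r, hpf, he (i := i) ?_, ?_⟩⟩
  · simp only [graph, hi, Option.map_some]
  · rw [codeword, length_bits]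
    omega

end Requests

theorem primrecRel_forall_lt {α : Type*} [Primcodable α] {R : ℕ → α → Prop} (hR : PrimrecRel R) :
    PrimrecRel fun n a => ∀ x < n, R x a :=
  (hR.forall_mem_list.comp (Primrec.list_range.comp .fst) .snd).of_eq (by simp)

theorem exists_primrecRel_of_rePred {α : Type*} [Primcodable α] {p : α → Prop} (hp : REPred p) :
    ∃ q : α → ℕ → Prop, PrimrecRel q ∧ ∀ a, p a ↔ ∃ s, q a s := by
  obtain ⟨code, hcode⟩ := Nat.Partrec.Code.exists_code.1 hp
  have hdom (a : α) : p a ↔ ∃ x, x ∈ code.eval (Encodable.encode a) := by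
    rw [hcode, ← Part.dom_iff_mem]
    simp [Part.dom_iff_mem]
  refine ⟨fun a s => (Nat.Partrec.Code.evaln s code (Encodable.encode a)).isSome = true, ?_, ?_⟩
  · exact Primrec.eq.comp (Primrec.option_isSome.comp (Nat.Partrec.Code.primrec_evaln.comp
      (Primrec.pair (Primrec.pair .snd (.const code)) (Primrec.encode.comp .fst)))) (.const true)
  · intro a
    simp only [hdom, Nat.Partrec.Code.evaln_complete, Option.isSome_iff_exists, Option.mem_def]
    exact exists_comm

/-- Each pair in `R` is requested exactly once, at the first stage that confirms it. -/
theorem kraft_chaitin {R : ℕ × ℕ → Prop} (hR : REPred R)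
    (hsum : ∀ F : Finset (ℕ × ℕ), (∀ a ∈ F, R a) → ∑ a ∈ F, (2⁻¹ : ℝ) ^ a.1 ≤ 1) :
    ∃ C, ∀ r x, R (r, x) → Kcpx x ≤ r + C := by
  classical
  obtain ⟨q, hq, hRq⟩ := exists_primrecRel_of_rePred hR
  let confirmed (s : ℕ) (a : ℕ × ℕ) : Prop := q a s ∧ ∀ s' < s, ¬q a s'
  have hconfirmed : PrimrecRel confirmed := (hq.comp .snd .fst).and
    (primrecRel_forall_lt (R := fun s a => ¬q a s) (hq.comp .snd .fst).not)
  have huniq {s s' a} (h : confirmed s a) (h' : confirmed s' a) : s = s' :=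
    le_antisymm (not_lt.1 fun hlt => h.2 _ hlt h'.1) (not_lt.1 fun hlt => h'.2 _ hlt h.1)
  let req (i : ℕ) : Option (ℕ × ℕ) :=
    if confirmed i.unpair.1 (Denumerable.ofNat _ i.unpair.2) then
      some (Denumerable.ofNat _ i.unpair.2) else none
  have hreq_iff {i a} : req i = some a ↔
      confirmed i.unpair.1 a ∧ Denumerable.ofNat (ℕ × ℕ) i.unpair.2 = a := by
    simp only [req, Option.ite_none_right_eq_some, Option.some.injEq]
    exact and_congr_left fun h => by rw [h]
  have hpair : Primrec fun i : ℕ => Denumerable.ofNat (ℕ × ℕ) i.unpair.2 :=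
    (Primrec.ofNat _).comp (Primrec.snd.comp .unpair)
  have hreq : Primrec req := Primrec.ite (hconfirmed.comp (Primrec.fst.comp .unpair) hpair)
    (Primrec.option_some.comp hpair) (.const none)
  obtain ⟨C, hC⟩ := Kcpx_le_of_requests hreq fun n => by
    have hwt (o : Option (ℕ × ℕ)) : wt (o.map Prod.fst) = ∑ a ∈ o.toFinset, 2⁻¹ ^ a.1 := by
      cases o <;> simp [wt]
    rw [val_spentBefore, Finset.sum_congr rfl fun i _ => hwt (req i), ← Finset.sum_biUnion]
    · refine hsum _ fun a ha => ?_
      obtain ⟨i, -, hi⟩ := Finset.mem_biUnion.1 ha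
      exact (hRq a).2 ⟨_, (hreq_iff.1 (Option.mem_toFinset.1 hi)).1.1⟩
    · intro i _ i' _ hne
      refine Finset.disjoint_left.2 fun a ha ha' => hne ?_
      obtain ⟨hi, rfl⟩ := hreq_iff.1 (Option.mem_toFinset.1 ha)
      obtain ⟨hi', heq⟩ := hreq_iff.1 (Option.mem_toFinset.1 ha')
      have hcode := congrArg Encodable.encode heq
      rw [Denumerable.encode_ofNat, Denumerable.encode_ofNat] at hcode
      rw [← Nat.pair_unpair i, ← Nat.pair_unpair i', huniq hi hi', hcode]
  refine ⟨C, fun r x hrx => ?_⟩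
  have hex := (hRq (r, x)).1 hrx
  refine hC (i := Nat.pair (Nat.find hex) (Encodable.encode (r, x))) (hreq_iff.2 ⟨?_, ?_⟩)
  · rw [Nat.unpair_pair]
    exact ⟨Nat.find_spec hex, fun s' hs' => Nat.find_min hex hs'⟩
  · rw [Nat.unpair_pair, Denumerable.ofNat_encode]

theorem exists_program (x : ℕ) : ∃ (e : ℕ) (σ : List Bool), PrefixFreeMachine e ∧
    x ∈ (Denumerable.ofNat Nat.Partrec.Code e).eval (Encodable.encode σ) ∧
    Kcpx x = σ.length + 2 * e + 2 := by
  obtain ⟨e, he, hx⟩ := exists_prefixFreeMachine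
    (graph := fun i => if i = 0 then some ([], x) else none)
    (Primrec.ite (Primrec.eq.comp .id (.const 0)) (.const _) (.const _)) (by grind)
  exact Nat.sInf_mem (s := {k | ∃ e, ∃ σ : List Bool, PrefixFreeMachine e ∧
    x ∈ (Denumerable.ofNat Nat.Partrec.Code e).eval (Encodable.encode σ) ∧
    k = σ.length + 2 * e + 2}) ⟨_, e, [], he, hx (i := 0) rfl, rfl⟩

end KraftChaitin

/-! ### Complexity at a finite stage -/

section StageComplexity

open Filter

theorem sum_le_one_of_prefixFree {S : Finset (List Bool)} (hS : PrefixFreeSet S) :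
    ∑ σ ∈ S, (2⁻¹ : ℝ) ^ σ.length ≤ 1 := by
  by_cases hnil : [] ∈ S
  · have hsub : S ⊆ {[]} := fun σ hσ =>
      Finset.mem_singleton.2 (hS [] hnil σ hσ List.nil_prefix).symm
    exact (Finset.sum_le_sum_of_subset_of_nonneg hsub fun _ _ _ => by positivity).trans (by simp)
  · have hdec : InformationTheory.UniquelyDecodable (S : Set (List Bool)) := by
      intro L
      induction L with
      | nil =>
        rintro (_ | ⟨w, M⟩) - hM heq
        · rfl
        · obtain ⟨rfl, -⟩ := List.append_eq_nil_iff.1 heq.symm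
          exact absurd (hM [] List.mem_cons_self) hnil
      | cons v L ih =>
        rintro (_ | ⟨w, M⟩) hL hM heq
        · obtain ⟨rfl, -⟩ := List.append_eq_nil_iff.1 heq
          exact absurd (hL [] List.mem_cons_self) hnil
        · obtain ⟨hv, hL'⟩ := List.forall_mem_cons.1 hL
          obtain ⟨hw, hM'⟩ := List.forall_mem_cons.1 hM
          rw [List.flatten_cons, List.flatten_cons] at heq
          obtain rfl : v = w := (List.prefix_or_prefix_of_prefix (heq ▸ List.prefix_append v _)
            (List.prefix_append w _)).elim (hS v hv w hw) fun h => (hS w hw v hv h).symm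
          rw [ih M hL' hM' (List.append_cancel_left heq)]
    simpa [one_div] using InformationTheory.kraft_mcmillan_inequality hdec

/-- The part of the graph of the `e`-th machine that is found in `t` steps. -/
def stageGraph (t e : ℕ) : List (List Bool × ℕ) :=
  (List.range t).filterMap fun s => (Encodable.decode s).bind fun σ : List Bool =>
    (Nat.Partrec.Code.evaln t (Denumerable.ofNat Nat.Partrec.Code e) (Encodable.encode σ)).map
      (Prod.mk σ)

/-- The `e`-th machine appears to be prefix-free at stage `t`. -/
def PrefixFreeAt (t e : ℕ) : Prop :=
  ∀ p ∈ stageGraph t e, ∀ q ∈ stageGraph t e, p.1 <+: q.1 → p.1 = q.1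

/-- At stage `t` the complexity of `x` appears to be at most `v`. As machines may lose their
prefix-freeness, this can hold for some `t` although `Kcpx x ≤ v` fails. -/
def KcpxLEAt (t x v : ℕ) : Prop :=
  ∃ e < t, PrefixFreeAt t e ∧ ∃ p ∈ stageGraph t e, p.2 = x ∧ p.1.length + 2 * e + 2 ≤ v

/-- The least value that the complexity of `x` ever appears to have. -/
noncomputable def provisionalKcpx (x : ℕ) : ℕ :=
  sInf {v | ∃ t, KcpxLEAt t x v}

variable {t t' e x y v : ℕ} {σ : List Bool}

theorem mem_stageGraph : (σ, x) ∈ stageGraph t e ↔ (∃ s < t, Encodable.decode s = some σ) ∧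
    x ∈ Nat.Partrec.Code.evaln t (Denumerable.ofNat Nat.Partrec.Code e) (Encodable.encode σ) := by
  simp only [stageGraph, List.mem_filterMap, List.mem_range, Option.bind_eq_some_iff,
    Option.map_eq_some_iff, Prod.mk.injEq, Option.mem_def]
  grind

theorem stageGraph_mono (h : t ≤ t') : stageGraph t e ⊆ stageGraph t' e := by
  rintro ⟨σ, x⟩ hσ
  obtain ⟨⟨s, hs, hdec⟩, hx⟩ := mem_stageGraph.1 hσ
  exact mem_stageGraph.2 ⟨⟨s, hs.trans_le h, hdec⟩, Nat.Partrec.Code.evaln_mono h hx⟩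

theorem mem_eval_of_mem_stageGraph (h : (σ, x) ∈ stageGraph t e) :
    x ∈ (Denumerable.ofNat Nat.Partrec.Code e).eval (Encodable.encode σ) :=
  Nat.Partrec.Code.evaln_sound (mem_stageGraph.1 h).2

theorem eventually_mem_stageGraph
    (h : x ∈ (Denumerable.ofNat Nat.Partrec.Code e).eval (Encodable.encode σ)) :
    ∀ᶠ t in atTop, (σ, x) ∈ stageGraph t e := by
  obtain ⟨t₀, ht₀⟩ := Nat.Partrec.Code.evaln_complete.1 h
  filter_upwards [eventually_ge_atTop t₀, eventually_gt_atTop (Encodable.encode σ)] with t ht hσ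
  exact mem_stageGraph.2 ⟨⟨_, hσ, Encodable.encodek σ⟩, Nat.Partrec.Code.evaln_mono ht ht₀⟩

theorem eventually_prefixFreeAt_iff (e : ℕ) :
    ∀ᶠ t in atTop, (PrefixFreeAt t e ↔ PrefixFreeMachine e) := by
  by_cases he : PrefixFreeMachine e
  · refine .of_forall fun t => iff_of_true (fun p hp q hq => ?_) he
    exact he _ (Part.dom_iff_mem.2 ⟨_, mem_eval_of_mem_stageGraph hp⟩)
      _ (Part.dom_iff_mem.2 ⟨_, mem_eval_of_mem_stageGraph hq⟩)
  · have hnot := he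
    simp only [PrefixFreeMachine, PrefixFreeSet, not_forall, machineDom, Set.mem_ofPred_eq,
      Part.dom_iff_mem] at hnot
    obtain ⟨σ, ⟨x, hσ⟩, τ, ⟨y, hτ⟩, hprefix, hne⟩ := hnot
    filter_upwards [eventually_mem_stageGraph hσ, eventually_mem_stageGraph hτ] with t hσ hτ
    exact iff_of_false (fun h => hne (h _ hσ _ hτ hprefix)) he

theorem eventually_kcpxLEAt_iff (x v : ℕ) :
    ∀ᶠ t in atTop, (KcpxLEAt t x v ↔ Kcpx x ≤ v) := by
  obtain ⟨e, σ, he, hx, hcost⟩ := exists_program x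
  filter_upwards [eventually_gt_atTop e, eventually_mem_stageGraph hx,
    (Finset.range (max (e + 1) v)).eventually_all.2 fun e' _ => eventually_prefixFreeAt_iff e']
    with t het hσt hpf
  constructor
  · rintro ⟨e', -, he', ⟨τ, _⟩, hτ, rfl, hv⟩
    have hpf' := (hpf e' (Finset.mem_range.2 (by dsimp at hv; omega))).1 he'
    refine le_trans (Nat.sInf_le ?_) hv
    exact ⟨e', τ, hpf', mem_eval_of_mem_stageGraph hτ, rfl⟩
  · intro hv
    exact ⟨e, het, (hpf e (by simp)).2 he, _, hσt, rfl, hcost ▸ hv⟩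

theorem KcpxLEAt.mono (h : KcpxLEAt t x v) {w : ℕ} (hvw : v ≤ w) : KcpxLEAt t x w :=
  let ⟨e, het, he, p, hp, hx, hv⟩ := h
  ⟨e, het, he, p, hp, hx, hv.trans hvw⟩

theorem KcpxLEAt.provisionalKcpx_le (h : KcpxLEAt t x v) : provisionalKcpx x ≤ v :=
  Nat.sInf_le ⟨t, h⟩

theorem exists_kcpxLEAt_provisionalKcpx (x : ℕ) : ∃ t, KcpxLEAt t x (provisionalKcpx x) := by
  obtain ⟨t, ht⟩ := (eventually_kcpxLEAt_iff x (Kcpx x)).exists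
  exact Nat.sInf_mem (s := {v | ∃ t, KcpxLEAt t x v}) ⟨_, t, ht.2 le_rfl⟩

theorem sum_two_inv_pow_le_one (E : Finset ℕ) : ∑ e ∈ E, (2⁻¹ : ℝ) ^ (2 * e + 2) ≤ 1 := by
  obtain ⟨N, hN⟩ := E.exists_nat_subset_range
  have hgeom (n : ℕ) : ∑ e ∈ Finset.range n, (2⁻¹ : ℝ) ^ (2 * e + 2) ≤ 1 - 2⁻¹ ^ (2 * n) := by
    induction n with
    | zero => simp
    | succ n ih =>
      have := pow_pos (by norm_num : (0 : ℝ) < 2⁻¹) (2 * n)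
      rw [Finset.sum_range_succ, mul_add, pow_add]
      linarith
  exact (Finset.sum_le_sum_of_subset_of_nonneg hN fun _ _ _ => by positivity).trans
    ((hgeom N).trans (sub_le_self _ (by positivity)))

/-- Any two of the programs found for one machine were seen together at the later of their two
stages, so they form a prefix-free set even if the machine is not prefix-free. -/
theorem sum_provisionalKcpx_le_one (F : Finset ℕ) : ∑ x ∈ F, (2⁻¹ : ℝ) ^ provisionalKcpx x ≤ 1 := by
  choose t e _ hpf p hp hx hcost using exists_kcpxLEAt_provisionalKcpx
  have hprefix {x y : ℕ} (he : e x = e y) (hxy : (p x).1 <+: (p y).1) : x = y := by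
    have heq : (p x).1 = (p y).1 := by
      rcases le_total (t x) (t y) with h | h
      · exact hpf y _ (stageGraph_mono h (he ▸ hp x)) _ (hp y) hxy
      · exact hpf x _ (hp x) _ (stageGraph_mono h (he ▸ hp y)) hxy
    have hex := mem_eval_of_mem_stageGraph (hp x)
    rw [he, heq] at hex
    rw [← hx x, ← hx y]
    exact Part.mem_unique hex (mem_eval_of_mem_stageGraph (hp y))
  have hfiber (k : ℕ) : ∑ x ∈ F with e x = k, (2⁻¹ : ℝ) ^ (p x).1.length ≤ 1 := by
    have hinj : Set.InjOn (fun x => (p x).1) (F.filter (e · = k)) := by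
      intro x hx y hy (hxy : (p x).1 = (p y).1)
      exact hprefix ((Finset.mem_filter.1 hx).2.trans (Finset.mem_filter.1 hy).2.symm)
        (hxy ▸ List.prefix_rfl)
    rw [← Finset.sum_image (f := fun σ : List Bool => (2⁻¹ : ℝ) ^ σ.length) hinj]
    refine sum_le_one_of_prefixFree ?_
    simp only [PrefixFreeSet, Finset.coe_image, Set.forall_mem_image, Finset.mem_coe,
      Finset.mem_filter]
    rintro x ⟨-, rfl⟩ y ⟨-, hy⟩ hxy
    rw [hprefix hy.symm hxy]
  calc ∑ x ∈ F, (2⁻¹ : ℝ) ^ provisionalKcpx x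
      ≤ ∑ x ∈ F, 2⁻¹ ^ (p x).1.length * 2⁻¹ ^ (2 * e x + 2) := by
        refine Finset.sum_le_sum fun x _ => ?_
        rw [← pow_add, ← add_assoc]
        exact pow_le_pow_of_le_one (by norm_num) (by norm_num) (hcost x)
    _ = ∑ k ∈ F.image e, ∑ x ∈ F with e x = k, 2⁻¹ ^ (p x).1.length * 2⁻¹ ^ (2 * e x + 2) :=
        (Finset.sum_fiberwise_of_maps_to (fun _ => Finset.mem_image_of_mem e) _).symm
    _ ≤ ∑ k ∈ F.image e, 1 * 2⁻¹ ^ (2 * k + 2) := by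
        refine Finset.sum_le_sum fun k _ => ?_
        rw [Finset.sum_congr rfl fun x hx => by rw [(Finset.mem_filter.1 hx).2], ← Finset.sum_mul]
        gcongr
        exact hfiber k
    _ ≤ 1 := by simpa only [one_mul] using sum_two_inv_pow_le_one _

theorem primrec_stageGraph : Primrec₂ stageGraph := by
  have hentry : Primrec₂ fun (a : (ℕ × ℕ) × ℕ) (σ : List Bool) => (Nat.Partrec.Code.evaln a.1.1
      (Denumerable.ofNat Nat.Partrec.Code a.1.2) (Encodable.encode σ)).map (Prod.mk σ) :=
    Primrec.option_map (Nat.Partrec.Code.primrec_evaln.comp <| Primrec.pair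
      (Primrec.pair (Primrec.fst.comp (Primrec.fst.comp .fst))
        ((Primrec.ofNat _).comp (Primrec.snd.comp (Primrec.fst.comp .fst))))
      (Primrec.encode.comp .snd)) (Primrec.pair (Primrec.snd.comp .fst) .snd).to₂
  exact Primrec.listFilterMap (Primrec.list_range.comp .fst)
    (Primrec.option_bind (Primrec.decode.comp .snd) hentry).to₂

theorem primrecRel_prefixFreeAt : PrimrecRel PrefixFreeAt := by
  have hpair : PrimrecRel fun p q : List Bool × ℕ => p.1 <+: q.1 → p.1 = q.1 :=
    ((primrecRel_prefix.comp (Primrec.fst.comp .fst) (Primrec.fst.comp .snd)).not.or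
      (Primrec.eq.comp (Primrec.fst.comp .fst) (Primrec.fst.comp .snd))).of_eq fun _ => by tauto
  have hinner : PrimrecRel fun (p : List Bool × ℕ) (L : List (List Bool × ℕ)) =>
      ∀ q ∈ L, p.1 <+: q.1 → p.1 = q.1 :=
    (hpair.swap.forall_mem_list).comp .snd .fst
  exact (hinner.forall_mem_list.comp primrec_stageGraph primrec_stageGraph)

theorem primrecPred_kcpxLEAt : PrimrecPred fun a : ℕ × ℕ × ℕ => KcpxLEAt a.1 a.2.1 a.2.2 := by
  have hentry : PrimrecRel fun (p : List Bool × ℕ) (b : ℕ × ℕ × ℕ × ℕ) =>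
      p.2 = b.2.2.1 ∧ p.1.length + 2 * b.1 + 2 ≤ b.2.2.2 := by
    have hcost : Primrec fun a : (List Bool × ℕ) × ℕ × ℕ × ℕ × ℕ =>
        a.1.1.length + 2 * a.2.1 + 2 :=
      Primrec.nat_add.comp (Primrec.nat_add.comp
        (Primrec.list_length.comp (Primrec.fst.comp .fst))
        (Primrec.nat_mul.comp (.const 2) (Primrec.fst.comp .snd))) (.const 2)
    have harg : Primrec fun a : (List Bool × ℕ) × ℕ × ℕ × ℕ × ℕ => a.2.2.2 :=
      Primrec.snd.comp (Primrec.snd.comp .snd)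
    exact (Primrec.eq.comp (Primrec.snd.comp .fst) (Primrec.fst.comp harg)).and
      (Primrec.nat_le.comp hcost (Primrec.snd.comp harg))
  have hmachine : PrimrecRel fun (e : ℕ) (a : ℕ × ℕ × ℕ) => PrefixFreeAt a.1 e ∧
      ∃ p ∈ stageGraph a.1 e, p.2 = a.2.1 ∧ p.1.length + 2 * e + 2 ≤ a.2.2 :=
    (primrecRel_prefixFreeAt.comp (Primrec.fst.comp .snd) .fst).and
      (hentry.exists_mem_list.comp (primrec_stageGraph.comp (Primrec.fst.comp .snd) .fst)
        (Primrec.pair .fst .snd))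
  exact (hmachine.exists_mem_list.comp (Primrec.list_range.comp .fst) .id).of_eq fun a => by
    simp only [KcpxLEAt, List.mem_range]
    rfl

end StageComplexity

/-! ### Few strings of a given length are almost as simple as their length -/

section Width

open Filter

/-- The number coding the string `1^n`, so that `KofNat n` is its complexity. -/
def codeOnes (n : ℕ) : ℕ :=
  Encodable.encode (List.replicate n true)

/-- The length of the string coded by `x`, or `0` if `x` is not a code. -/
def codeLength (x : ℕ) : ℕ :=
  ((Encodable.decode x : Option (List Bool)).getD []).length

open Classical in
/-- The numbers below `t` that code a string of length `n` and appear at stage `t` to have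
complexity at most `v`. -/
noncomputable def simpleCodes (t n v : ℕ) : List ℕ :=
  (List.range t).filter fun x => codeLength x = n ∧ KcpxLEAt t x v

variable {n k r t v : ℕ}

@[simp]
theorem codeLength_encode (σ : List Bool) : codeLength (Encodable.encode σ) = σ.length := by
  simp [codeLength]

theorem primrec_codeOnes : Primrec codeOnes :=
  Primrec.encode.comp <| (Primrec.list_map .list_range (.const true)).of_eq fun n => by
    simp [List.map_const']

theorem primrec_simpleCodes : Primrec fun a : ℕ × ℕ × ℕ => simpleCodes a.1 a.2.1 a.2.2 := by
  classical
  have hcode : PrimrecRel fun (x : ℕ) (a : ℕ × ℕ × ℕ) =>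
      codeLength x = a.2.1 ∧ KcpxLEAt a.1 x a.2.2 :=
    (Primrec.eq.comp (Primrec.list_length.comp (Primrec.option_getD.comp
      (Primrec.decode.comp .fst) (.const []))) (Primrec.fst.comp (Primrec.snd.comp .snd))).and
    (primrecPred_kcpxLEAt.comp (Primrec.pair (Primrec.fst.comp .snd)
      (Primrec.pair .fst (Primrec.snd.comp (Primrec.snd.comp .snd)))))
  exact hcode.listFilter.comp (Primrec.list_range.comp .fst) .id

theorem length_mul_le_sum_provisionalKcpx (t n v : ℕ) :
    ((simpleCodes t n v).length : ℝ) * 2⁻¹ ^ v ≤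
      ∑ x ∈ Finset.range t with codeLength x = n, 2⁻¹ ^ provisionalKcpx x := by
  classical
  have hnodup : (simpleCodes t n v).Nodup := List.nodup_range.filter _
  have hsub : (simpleCodes t n v).toFinset ⊆ (Finset.range t).filter (codeLength · = n) := by
    intro x hx
    simp only [simpleCodes, List.mem_toFinset, List.mem_filter, List.mem_range,
      decide_eq_true_eq] at hx
    exact Finset.mem_filter.2 ⟨Finset.mem_range.2 hx.1, hx.2.1⟩
  calc ((simpleCodes t n v).length : ℝ) * 2⁻¹ ^ v
      = ∑ _x ∈ (simpleCodes t n v).toFinset, 2⁻¹ ^ v := by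
        rw [Finset.sum_const, List.toFinset_card_of_nodup hnodup, nsmul_eq_mul]
    _ ≤ ∑ x ∈ (simpleCodes t n v).toFinset, 2⁻¹ ^ provisionalKcpx x := by
        refine Finset.sum_le_sum fun x hx => ?_
        simp only [simpleCodes, List.mem_toFinset, List.mem_filter, decide_eq_true_eq] at hx
        exact pow_le_pow_of_le_one (by norm_num) (by norm_num) hx.2.2.provisionalKcpx_le
    _ ≤ _ := Finset.sum_le_sum_of_subset_of_nonneg hsub fun _ _ _ => by positivity

theorem sum_two_inv_pow_le {S : Finset ℕ} {m : ℕ} (hS : ∀ r ∈ S, m ≤ r) :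
    ∑ r ∈ S, (2⁻¹ : ℝ) ^ r ≤ 2 * 2⁻¹ ^ m := by
  obtain ⟨N, hN⟩ := S.exists_nat_subset_range
  have hgeom (N : ℕ) : ∑ r ∈ Finset.Ico m (m + N), (2⁻¹ : ℝ) ^ r ≤
      2 * 2⁻¹ ^ m - 2 * 2⁻¹ ^ (m + N) := by
    induction N with
    | zero => simp
    | succ N ih =>
      rw [← add_assoc, Finset.sum_Ico_succ_top (by omega), pow_succ _ (m + N)]
      linarith
  refine (Finset.sum_le_sum_of_subset_of_nonneg (t := Finset.Ico m (m + N)) (fun r hr => ?_)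
    fun _ _ _ => by positivity).trans ((hgeom N).trans (sub_le_self _ (by positivity)))
  exact Finset.mem_Ico.2 ⟨hS r hr, by have := Finset.mem_range.1 (hN hr); omega⟩

/-- Whenever `2 ^ (k + 1)` strings of length `n` appear to have complexity at most `r + k`, a
description of `1^n` of length `r` is requested. The cheapest request for `1^n` has at most half the
weight of those strings. -/
def WidthRequest (a : ℕ × ℕ) : Prop :=
  ∃ b : ℕ × ℕ × ℕ, a.2 = codeOnes b.1 ∧ 2 ^ (b.2.1 + 1) ≤
    (simpleCodes b.2.2 b.1 (a.1 + b.2.1)).length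

theorem rePred_widthRequest : REPred WidthRequest := by
  have harg : Primrec fun x : (ℕ × ℕ) × ℕ × ℕ × ℕ => (x.2.2.2, x.2.1, x.1.1 + x.2.2.1) :=
    Primrec.pair (Primrec.snd.comp (Primrec.snd.comp .snd)) (Primrec.pair (Primrec.fst.comp .snd)
      (Primrec.nat_add.comp (Primrec.fst.comp .fst) (Primrec.fst.comp (Primrec.snd.comp .snd))))
  have hpow : Primrec fun x : (ℕ × ℕ) × ℕ × ℕ × ℕ => 2 ^ (x.2.2.1 + 1) :=
    primrec_pow.comp (.const 2) (Primrec.succ.comp (Primrec.fst.comp (Primrec.snd.comp .snd)))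
  exact rePred_exists (PrimrecPred.computablePred ((Primrec.eq.comp (Primrec.snd.comp .fst)
    (primrec_codeOnes.comp (Primrec.fst.comp .snd))).and (Primrec.nat_le.comp hpow
    (Primrec.list_length.comp (primrec_simpleCodes.comp harg)))))

theorem two_mul_le_of_le_length (h : 2 ^ (k + 1) ≤ (simpleCodes t n (r + k)).length) :
    2 * (2⁻¹ : ℝ) ^ r ≤ ∑ x ∈ Finset.range t with codeLength x = n, 2⁻¹ ^ provisionalKcpx x := by
  refine le_trans ?_ (length_mul_le_sum_provisionalKcpx t n (r + k))
  calc 2 * (2⁻¹ : ℝ) ^ r = 2 ^ (k + 1) * 2⁻¹ ^ (r + k) := by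
        rw [pow_add, pow_succ, inv_pow, inv_pow]
        field_simp
        ring
    _ ≤ _ := by
        gcongr
        exact_mod_cast h

theorem sum_widthRequest_le_one (F : Finset (ℕ × ℕ)) (hF : ∀ a ∈ F, WidthRequest a) :
    ∑ a ∈ F, (2⁻¹ : ℝ) ^ a.1 ≤ 1 := by
  choose! b hb using hF
  set T := F.sup fun a => (b a).2.2
  have hfiber (n : ℕ) : ∑ a ∈ F with (b a).1 = n, (2⁻¹ : ℝ) ^ a.1 ≤
      ∑ x ∈ Finset.range T with codeLength x = n, 2⁻¹ ^ provisionalKcpx x := by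
    rcases (F.filter fun a => (b a).1 = n).eq_empty_or_nonempty with hempty | hne
    · rw [hempty, Finset.sum_empty]
      positivity
    obtain ⟨a, ha, hmin⟩ := Finset.exists_min_image _ Prod.fst hne
    obtain ⟨haF, rfl⟩ := Finset.mem_filter.1 ha
    have hinj : Set.InjOn Prod.fst (F.filter fun a' => (b a').1 = (b a).1 : Set (ℕ × ℕ)) := by
      intro p hp q hq hpq
      obtain ⟨hpF, hp⟩ := Finset.mem_filter.1 hp
      obtain ⟨hqF, hq⟩ := Finset.mem_filter.1 hq
      refine Prod.ext hpq ?_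
      rw [(hb p hpF).1, (hb q hqF).1, hp, hq]
    rw [← Finset.sum_image (f := fun r : ℕ => (2⁻¹ : ℝ) ^ r) hinj]
    refine (sum_two_inv_pow_le (m := a.1) fun r hr => ?_).trans
      ((two_mul_le_of_le_length (hb a haF).2).trans ?_)
    · obtain ⟨a', ha', rfl⟩ := Finset.mem_image.1 hr
      exact hmin a' ha'
    · refine Finset.sum_le_sum_of_subset_of_nonneg (Finset.filter_subset_filter _ ?_)
        fun _ _ _ => by positivity
      exact Finset.range_subset_range.2 (Finset.le_sup (f := fun a => (b a).2.2) haF)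
  calc ∑ a ∈ F, (2⁻¹ : ℝ) ^ a.1
      = ∑ n ∈ F.image fun a => (b a).1, ∑ a ∈ F with (b a).1 = n, (2⁻¹ : ℝ) ^ a.1 :=
        (Finset.sum_fiberwise_of_maps_to (fun _ => Finset.mem_image_of_mem _) _).symm
    _ ≤ ∑ n ∈ F.image fun a => (b a).1,
        ∑ x ∈ Finset.range T with codeLength x = n, (2⁻¹ : ℝ) ^ provisionalKcpx x :=
        Finset.sum_le_sum fun n _ => hfiber n
    _ ≤ ∑ x ∈ Finset.range T, 2⁻¹ ^ provisionalKcpx x :=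
        Finset.sum_fiberwise_le_sum_of_sum_fiber_nonneg fun _ _ => by positivity
    _ ≤ 1 := sum_provisionalKcpx_le_one _

theorem exists_card_le_length_simpleCodes {F : Finset (List Bool)}
    (hF : ∀ σ ∈ F, σ.length = n ∧ Kcpx (Encodable.encode σ) ≤ v) :
    ∃ t, F.card ≤ (simpleCodes t n v).length := by
  classical
  have hstage : ∀ᶠ t in atTop, ∀ σ ∈ F, Encodable.encode σ < t ∧
      KcpxLEAt t (Encodable.encode σ) v :=
    F.eventually_all.2 fun σ hσ => (eventually_gt_atTop _).and <|
      (eventually_kcpxLEAt_iff (Encodable.encode σ) v).mono fun _ h => h.2 (hF σ hσ).2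
  obtain ⟨t, ht⟩ := hstage.exists
  refine ⟨t, ?_⟩
  rw [← Finset.card_image_of_injective F Encodable.encode_injective]
  refine (Finset.card_le_card fun x hx => ?_).trans (List.toFinset_card_le _)
  obtain ⟨σ, hσ, rfl⟩ := Finset.mem_image.1 hx
  simp only [simpleCodes, List.mem_toFinset, List.mem_filter, List.mem_range, decide_eq_true_eq]
  exact ⟨(ht σ hσ).1, (codeLength_encode σ).trans (hF σ hσ).1, (ht σ hσ).2⟩

theorem exists_card_lt (c : ℕ) : ∃ M, ∀ n (F : Finset (List Bool)),
    (∀ σ ∈ F, σ.length = n ∧ Kcpx (Encodable.encode σ) ≤ KofNat n + c) → F.card < M := by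
  obtain ⟨C, hC⟩ := kraft_chaitin rePred_widthRequest sum_widthRequest_le_one
  refine ⟨2 ^ (c + C + 2), fun n F hF => ?_⟩
  by_contra! hcard
  obtain ⟨t, ht⟩ := exists_card_le_length_simpleCodes hF
  have hle : c + C + 1 ≤ KofNat n + c := by
    have hpow : (2 : ℝ) ^ (c + C + 2) * 2⁻¹ ^ (KofNat n + c) ≤ 1 := by
      refine le_trans ?_ ((length_mul_le_sum_provisionalKcpx t n (KofNat n + c)).trans
        (sum_provisionalKcpx_le_one _))
      gcongr
      exact_mod_cast hcard.trans ht
    rw [inv_pow, ← div_eq_mul_inv, div_le_one (by positivity)] at hpow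
    have := (pow_le_pow_iff_right₀ (one_lt_two (α := ℝ))).1 hpow
    omega
  have hreq : WidthRequest (KofNat n + c - (c + C + 1), codeOnes n) := by
    refine ⟨(n, c + C + 1, t), rfl, ?_⟩
    rw [Nat.sub_add_cancel hle]
    exact hcard.trans ht
  have hshort : KofNat n ≤ KofNat n + c - (c + C + 1) + C := hC _ _ hreq
  omega

end Width

/-! ### A computable approximation to a K-trivial set -/

section Approximation

open Filter

/-- All initial segments of `σ` satisfy the inequality of K-triviality with constant `c`. -/
def TrivialWith (c : ℕ) (σ : List Bool) : Prop :=
  ∀ m ≤ σ.length, Kcpx (Encodable.encode (σ.take m)) ≤ KofNat m + c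

/-- The approximation to `TrivialWith c σ` at stage `t`. -/
def TrivialWithAt (c t : ℕ) (σ : List Bool) : Prop :=
  ∀ m < σ.length + 1, ∀ v < t,
    KcpxLEAt t (codeOnes m) v → KcpxLEAt t (Encodable.encode (σ.take m)) (v + c)

/-- The first longest member of a list of strings. -/
def longest (L : List (List Bool)) : List Bool :=
  L.foldr (fun σ τ => if τ.length ≤ σ.length then σ else τ) []

variable {A : ℕ → Bool} {c t : ℕ} {σ τ : List Bool}

theorem TrivialWithAt.of_prefix (h : TrivialWithAt c t τ) (hσ : σ <+: τ) :
    TrivialWithAt c t σ := by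
  intro m hm v hv hle
  have hmσ : m ≤ σ.length := Nat.lt_succ_iff.1 hm
  rw [List.prefix_iff_eq_take.1 hσ, List.take_take, min_eq_left hmσ]
  exact h m (hm.trans_le (Nat.succ_le_succ hσ.length_le)) v hv hle

theorem eventually_forall_kcpxLEAt_iff (x y c : ℕ) : ∀ᶠ t in atTop,
    ((∀ v < t, KcpxLEAt t x v → KcpxLEAt t y (v + c)) ↔ Kcpx y ≤ Kcpx x + c) := by
  filter_upwards [eventually_gt_atTop (Kcpx x), eventually_kcpxLEAt_iff y (Kcpx x + c),
    eventually_kcpxLEAt_iff x (Kcpx x),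
    (Finset.range (Kcpx x)).eventually_all.2 fun v _ => eventually_kcpxLEAt_iff x v]
    with t ht hy hx hbelow
  refine ⟨fun h => hy.1 (h _ ht (hx.2 le_rfl)), fun h v _ hv => ?_⟩
  have hxv : Kcpx x ≤ v := by
    by_contra! hlt
    exact hlt.not_ge ((hbelow v (Finset.mem_range.2 hlt)).1 hv)
  exact (hy.2 h).mono (by omega)

theorem eventually_trivialWithAt_iff (c : ℕ) (σ : List Bool) :
    ∀ᶠ t in atTop, (TrivialWithAt c t σ ↔ TrivialWith c σ) := by
  filter_upwards [(Finset.range (σ.length + 1)).eventually_all.2 fun m _ =>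
    eventually_forall_kcpxLEAt_iff (codeOnes m) (Encodable.encode (σ.take m)) c] with t ht
  refine forall_congr' fun m => ?_
  rw [Nat.lt_succ_iff]
  exact forall_congr' fun hm => ht m (Finset.mem_range.2 (Nat.lt_succ_iff.2 hm))

/-- Otherwise members of `TrivialWith c` would leave `A` at arbitrarily many places, and extending
them to one length would contradict the bound on their number. -/
theorem exists_isolating_prefix (A : ℕ → Bool) (c : ℕ) : ∃ k, ∀ n, ∃ N, n ≤ N ∧ k ≤ N ∧
    ∀ σ, TrivialWith c σ → σ.length = N → strPrefix A k <+: σ → strPrefix A n <+: σ := by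
  by_contra! hno
  choose n hn using hno
  obtain ⟨M, hM⟩ := exists_card_lt c
  let k (i : ℕ) : ℕ := (fun l => max (n l) l)^[i] 0
  have hk (i : ℕ) : k (i + 1) = max (n (k i)) (k i) := Function.iterate_succ_apply' _ _ _
  have hmono : Monotone k := monotone_nat_of_le_succ fun i => (hk i).symm ▸ le_max_right _ _
  have hnk {i i' : ℕ} (h : i < i') : n (k i) ≤ k i' :=
    ((hk i).symm ▸ le_max_left _ _).trans (hmono h)
  have hexit (i : ℕ) (hi : i < M) : ∃ σ, TrivialWith c σ ∧ σ.length = k M ∧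
      strPrefix A (k i) <+: σ ∧ ¬strPrefix A (n (k i)) <+: σ :=
    hn (k i) (k M) (hnk hi) (hmono hi.le)
  choose! σ htriv hlen hprefix hnot using hexit
  have hne {i i' : ℕ} (hi : i < i') (hi' : i' < M) : σ i ≠ σ i' := fun heq =>
    hnot i (hi.trans hi') (heq ▸ (strPrefix_prefix A (hnk hi)).trans (hprefix i' hi'))
  have hinj : Set.InjOn σ (Finset.range M) := by
    intro i hi i' hi' heq
    rcases lt_trichotomy i i' with h | h | h
    · exact absurd heq (hne h (Finset.mem_range.1 hi'))
    · exact h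
    · exact absurd heq.symm (hne h (Finset.mem_range.1 hi))
  refine (hM (k M) ((Finset.range M).image σ) fun ρ hρ => ?_).ne ?_
  · obtain ⟨i, hi, rfl⟩ := Finset.mem_image.1 hρ
    have hi := Finset.mem_range.1 hi
    have hK := htriv i hi (k M) (hlen i hi).ge
    rw [List.take_of_length_le (hlen i hi).le] at hK
    exact ⟨hlen i hi, hK⟩
  · rw [Finset.card_image_of_injOn hinj, Finset.card_range]

theorem length_le_length_longest {L : List (List Bool)} (hσ : σ ∈ L) :
    σ.length ≤ (longest L).length := by
  induction L with
  | nil => cases hσ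
  | cons τ L ih =>
    rw [longest, List.foldr_cons, ← longest]
    rcases List.mem_cons.1 hσ with rfl | hσ
    · split_ifs <;> omega
    · have := ih hσ
      split_ifs <;> omega

theorem longest_mem {L : List (List Bool)} (hL : L ≠ []) : longest L ∈ L := by
  induction L with
  | nil => exact absurd rfl hL
  | cons τ L ih =>
    rw [longest, List.foldr_cons, ← longest]
    split_ifs with h
    · exact List.mem_cons_self
    · exact List.mem_cons_of_mem _ (ih (by rintro rfl; exact h (Nat.zero_le _)))

open Classical in
/-- The extensions of `τ` that appear at stage `t` to satisfy `TrivialWith c`. -/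
noncomputable def candidates (c : ℕ) (τ : List Bool) (t : ℕ) : List (List Bool) :=
  ((List.range t).filterMap Encodable.decode).filter fun σ => τ <+: σ ∧ TrivialWithAt c t σ

/-- The longest candidate at stage `t`, padded or truncated to length `t`. -/
noncomputable def longestCandidate (c : ℕ) (τ : List Bool) (t : ℕ) : List Bool :=
  (longest (candidates c τ t) ++ List.replicate t false).take t

theorem mem_candidates : σ ∈ candidates c τ t ↔
    (∃ s < t, Encodable.decode s = some σ) ∧ τ <+: σ ∧ TrivialWithAt c t σ := by
  simp [candidates]

theorem length_longestCandidate (c : ℕ) (τ : List Bool) (t : ℕ) :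
    (longestCandidate c τ t).length = t := by
  simp [longestCandidate]

theorem eventually_prefix_longest (hA : ∀ n, TrivialWith c (strPrefix A n)) {k n N : ℕ}
    (hkN : k ≤ N) (hN : ∀ σ, TrivialWith c σ → σ.length = N → strPrefix A k <+: σ →
      strPrefix A n <+: σ) :
    ∀ᶠ t in atTop, strPrefix A n <+: longest (candidates c (strPrefix A k) t) := by
  have hlevel : ∀ᶠ t in atTop, ∀ σ ∈ {σ : List Bool | σ.length = N},
      (TrivialWithAt c t σ ↔ TrivialWith c σ) :=
    (List.finite_length_eq Bool N).eventually_all.2 fun σ _ => eventually_trivialWithAt_iff c σ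
  filter_upwards [hlevel, eventually_gt_atTop (Encodable.encode (strPrefix A N))] with t ht hcode
  have hAN : strPrefix A N ∈ candidates c (strPrefix A k) t := mem_candidates.2
    ⟨⟨_, hcode, Encodable.encodek _⟩, strPrefix_prefix A hkN,
      (ht _ (length_strPrefix A N)).2 (hA N)⟩
  obtain ⟨-, hprefix, htriv⟩ := mem_candidates.1 (longest_mem (List.ne_nil_of_mem hAN))
  have hlen := length_le_length_longest hAN
  set X := longest (candidates c (strPrefix A k) t)
  rw [length_strPrefix] at hlen
  have hXN : (X.take N).length = N := by rw [List.length_take, min_eq_left hlen]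
  refine (hN (X.take N) ((ht _ hXN).1 (htriv.of_prefix (List.take_prefix _ _))) hXN ?_).trans
    (List.take_prefix _ _)
  exact List.prefix_take_iff.2 ⟨hprefix, by rwa [length_strPrefix]⟩

theorem primrecRel_trivialWithAt (c : ℕ) : PrimrecRel (TrivialWithAt c) := by
  have harg₁ : Primrec fun a : ℕ × ℕ × ℕ × List Bool => (a.2.2.1, codeOnes a.2.1, a.1) :=
    Primrec.pair (Primrec.fst.comp (Primrec.snd.comp .snd))
      (Primrec.pair (primrec_codeOnes.comp (Primrec.fst.comp .snd)) .fst)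
  have harg₂ : Primrec fun a : ℕ × ℕ × ℕ × List Bool =>
      (a.2.2.1, Encodable.encode (a.2.2.2.take a.2.1), a.1 + c) :=
    Primrec.pair (Primrec.fst.comp (Primrec.snd.comp .snd)) <| Primrec.pair
      (Primrec.encode.comp <| Primrec.list_take.comp (Primrec.fst.comp .snd)
        (Primrec.snd.comp (Primrec.snd.comp .snd)))
      (Primrec.nat_add.comp .fst (.const c))
  have himp : PrimrecRel fun (v : ℕ) (a : ℕ × ℕ × List Bool) =>
      KcpxLEAt a.2.1 (codeOnes a.1) v →
        KcpxLEAt a.2.1 (Encodable.encode (a.2.2.take a.1)) (v + c) :=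
    ((primrecPred_kcpxLEAt.comp harg₁).not.or (primrecPred_kcpxLEAt.comp harg₂)).of_eq
      fun _ => imp_iff_not_or.symm
  have hlevel : PrimrecRel fun (m : ℕ) (a : ℕ × List Bool) => ∀ v < a.1,
      KcpxLEAt a.1 (codeOnes m) v → KcpxLEAt a.1 (Encodable.encode (a.2.take m)) (v + c) :=
    (primrecRel_forall_lt himp).comp (Primrec.fst.comp .snd) .id
  exact (primrecRel_forall_lt hlevel).comp
    (Primrec.succ.comp (Primrec.list_length.comp .snd)) .id

theorem primrec_longestCandidate (c : ℕ) (τ : List Bool) : Primrec (longestCandidate c τ) := by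
  classical
  have hcand : Primrec (candidates c τ) :=
    (PrimrecRel.listFilter (R := fun σ t => τ <+: σ ∧ TrivialWithAt c t σ)
      ((primrecRel_prefix.comp (.const τ) .fst).and
        ((primrecRel_trivialWithAt c).comp .snd .fst))).comp
      (Primrec.listFilterMap .list_range (Primrec.decode.comp .snd).to₂) .id
  have hlongest : Primrec longest :=
    Primrec.list_foldr .id (.const []) <| (Primrec.ite
      (Primrec.nat_le.comp (Primrec.list_length.comp (Primrec.snd.comp .snd))
        (Primrec.list_length.comp (Primrec.fst.comp .snd)))
      (Primrec.fst.comp .snd) (Primrec.snd.comp .snd)).to₂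
  have hpad : Primrec fun t : ℕ => List.replicate t false :=
    (Primrec.list_map .list_range (.const false)).of_eq fun n => by simp [List.map_const']
  exact Primrec.list_take.comp .id (Primrec.list_append.comp (hlongest.comp hcand) hpad)

theorem exists_approximates (hA : ∃ c, ∀ n, TrivialWith c (strPrefix A n)) :
    ∃ X, Approximates A X ∧ Primrec X ∧ ∀ t, (X t).length = t := by
  obtain ⟨c, hA⟩ := hA
  obtain ⟨k, hk⟩ := exists_isolating_prefix A c
  refine ⟨longestCandidate c (strPrefix A k), ⟨fun l m hlm => ?_, fun n => ?_,
    (primrec_longestCandidate _ _).to_comp⟩, primrec_longestCandidate _ _,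
    length_longestCandidate _ _⟩
  · simpa only [length_longestCandidate] using hlm
  · obtain ⟨N, -, hkN, hN⟩ := hk n
    refine eventually_atTop.1 ?_
    filter_upwards [eventually_prefix_longest hA hkN hN, eventually_ge_atTop n] with t ht hnt
    exact List.prefix_take_iff.2 ⟨ht.trans (List.prefix_append _ _),
      by rwa [length_strPrefix]⟩

end Approximation

/-! ### Computability of the game -/

section Computability

variable {α : Type*} [Primcodable α] {u : List Bool → Option ℕ}

theorem primrec_commonLength : Primrec₂ commonLength := by
  have hprefix : PrimrecRel fun (p : List Bool × List Bool) (n : ℕ) => p.1.take n <+: p.2 :=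
    primrecRel_prefix.comp (Primrec.list_take.comp .snd (Primrec.fst.comp .fst))
      (Primrec.snd.comp .fst)
  exact (Primrec.nat_findGreatest (Primrec.list_length.comp .fst) hprefix).to₂

theorem primrec_exitNode : Primrec₂ exitNode :=
  Primrec.list_take.comp (Primrec.succ.comp primrec_commonLength) .snd

namespace Frame

theorem primrec_goal : Primrec Frame.goal :=
  Primrec.fst.comp (Primrec.snd.comp (Primrec.of_equiv (e := equivProd)))

theorem primrec_slack : Primrec Frame.slack :=
  Primrec.fst.comp (Primrec.snd.comp (Primrec.snd.comp (Primrec.of_equiv (e := equivProd))))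

theorem primrec_visits : Primrec Frame.visits :=
  Primrec.fst.comp <| Primrec.snd.comp <| Primrec.snd.comp <| Primrec.snd.comp
    (Primrec.of_equiv (e := equivProd))

theorem primrec_gained : Primrec Frame.gained :=
  Primrec.snd.comp <| Primrec.snd.comp <| Primrec.snd.comp <| Primrec.snd.comp
    (Primrec.of_equiv (e := equivProd))

theorem primrec_mk {base : α → List Bool} {goal : α → Option ℕ} {slack visits : α → ℕ}
    {gained : α → Dyad} (hbase : Primrec base) (hgoal : Primrec goal) (hslack : Primrec slack)
    (hvisits : Primrec visits) (hgained : Primrec gained) :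
    Primrec fun x => Frame.mk (base x) (goal x) (slack x) (visits x) (gained x) :=
  (Primrec.of_equiv_symm (e := equivProd)).comp
    (hbase.pair (hgoal.pair (hslack.pair (hvisits.pair hgained))))

theorem primrecPred_done : PrimrecPred Frame.Done := by
  have hgoal : Primrec fun f : Frame => Dyad.ofExponent f.goal :=
    Dyad.primrec_ofExponent.comp primrec_goal
  refine PrimrecPred.of_eq (Primrec.nat_le.comp ?_ ?_) fun f => f.done_iff.symm
  · exact Primrec.nat_mul.comp (Primrec.fst.comp hgoal)
      (primrec_pow.comp (.const 2) (Primrec.snd.comp primrec_gained))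
  · exact Primrec.nat_mul.comp (Primrec.fst.comp primrec_gained)
      (primrec_pow.comp (.const 2) (Primrec.snd.comp hgoal))

end Frame

theorem primrec_quota (hu : Primrec u) : Primrec₂ (quota u) :=
  Primrec.option_map (hu.comp .snd)
    (Primrec.nat_add.comp .snd (Primrec.succ.comp (Primrec.fst.comp .fst))).to₂

theorem fresh_eq_map_range (j : ℕ) (τ : List Bool) (goal : Option ℕ) (d : ℕ) :
    fresh u j τ goal d = (List.range (j + 1)).map fun i =>
      ⟨τ, if i = 0 then goal else quota u (d + 2 * (i - 1)) τ, d + 2 * i, 1, (0, 0)⟩ := by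
  induction j generalizing goal d with
  | zero => rfl
  | succ j ih =>
    rw [fresh, ih, List.range_succ_eq_map (n := j + 1), List.map_cons, List.map_map]
    refine congrArg₂ _ rfl (List.map_congr_left fun i _ => ?_)
    rcases i with _ | i
    · rfl
    · have hshift (k : ℕ) : d + 2 * (k + 1) = d + 1 + 1 + 2 * k := by ring
      simp only [Function.comp_apply, Nat.succ_eq_add_one, Nat.add_one_ne_zero, if_false,
        Nat.add_sub_cancel, hshift]

theorem primrec_fresh (hu : Primrec u) {j d : α → ℕ} {τ : α → List Bool} {goal : α → Option ℕ}
    (hj : Primrec j) (hτ : Primrec τ) (hgoal : Primrec goal) (hd : Primrec d) :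
    Primrec fun x => fresh u (j x) (τ x) (goal x) (d x) := by
  have hframe : Primrec₂ fun (x : α) (i : ℕ) => (⟨τ x,
      if i = 0 then goal x else quota u (d x + 2 * (i - 1)) (τ x), d x + 2 * i, 1, (0, 0)⟩ :
        Frame) := by
    refine Frame.primrec_mk (hτ.comp .fst) (Primrec.ite (Primrec.eq.comp .snd (.const 0))
      (hgoal.comp .fst) ((primrec_quota hu).comp ?_ (hτ.comp .fst)))
      (Primrec.nat_add.comp (hd.comp .fst) (Primrec.nat_mul.comp (.const 2) .snd)) (.const _)
      (.const _)
    exact Primrec.nat_add.comp (hd.comp .fst)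
      (Primrec.nat_mul.comp (.const 2) (Primrec.pred.comp .snd))
  exact (Primrec.list_map (Primrec.list_range.comp (Primrec.succ.comp hj)) hframe).of_eq
    fun x => (fresh_eq_map_range _ _ _ _).symm

theorem primrec_inits : Primrec (List.inits : List Bool → List (List Bool)) := by
  refine (Primrec.list_map (Primrec.list_range.comp (Primrec.succ.comp Primrec.list_length))
    (Primrec.list_take.comp .snd .fst).to₂).of_eq fun ρ => List.ext_get (by simp) fun i _ _ => ?_
  simp

theorem primrec_released (hu : Primrec u) :
    Primrec fun p : List Bool × Frame × Frame => released u p.1 p.2.1 p.2.2 := by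
  have hbase : Primrec fun p : List Bool × Frame × Frame => p.2.2.base :=
    Frame.primrec_base.comp (Primrec.snd.comp .snd)
  have hleft : PrimrecRel fun (σ : List Bool) (p : List Bool × Frame × Frame) =>
      ¬σ <+: p.1 ∧ σ ≠ p.2.2.base :=
    (primrecRel_prefix.comp .fst (Primrec.fst.comp .snd)).not.and
      (Primrec.eq.comp .fst (hbase.comp .snd)).not
  refine Dyad.primrec_add.comp (Dyad.primrec_ofList.comp ?_) (Primrec.ite
    (primrecRel_prefix.comp hbase .fst) (.const _)
    (Frame.primrec_gained.comp (Primrec.snd.comp .snd)))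
  exact Primrec.list_map (hleft.listFilter.comp (primrec_inits.comp hbase) .id)
    ((primrec_quota hu).comp (Frame.primrec_slack.comp (Primrec.fst.comp (Primrec.snd.comp .fst)))
      .snd).to₂

/-- The move of a stack `f :: g :: R` whose top strategy `f` is not done, given the move `M` of
the stack `g :: R`. -/
def stepConsCons (u : List Bool → Option ℕ) (X : List Bool) (f g : Frame) (R : List Frame)
    (M : List Frame × Option ℕ) : List Frame × Option ℕ :=
  if g.base <+: X ∧ ¬(g.Done ∧ g.base.length < X.length) then (f :: M.1, M.2)
  else
    ({ f with visits := f.visits + 1, gained := f.gained.add (released u X f g) } ::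
      child u R.length (exitNode g.base X) f.slack (f.visits + 1), none)

/-- The move of a stack `f :: L`, given the move `M` of the stack `L`. It turns `step` into a
structural recursion. -/
def stepCons (u : List Bool → Option ℕ) (X : List Bool) (f : Frame) (L : List Frame)
    (M : List Frame × Option ℕ) : List Frame × Option ℕ :=
  if f.Done then (f :: L, none)
  else L.casesOn ([{ f with gained := .ofExponent f.goal }], f.goal) fun g R =>
    stepConsCons u X f g R M

theorem step_cons (X : List Bool) (f : Frame) (L : List Frame) :
    step u X (f :: L) = stepCons u X f L (step u X L) := by
  cases L <;> rfl

theorem primrec_stepConsCons (hu : Primrec u) {X : α → List Bool} {f g : α → Frame}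
    {R : α → List Frame} {M : α → List Frame × Option ℕ} (hX : Primrec X) (hf : Primrec f)
    (hg : Primrec g) (hR : Primrec R) (hM : Primrec M) :
    Primrec fun x => stepConsCons u (X x) (f x) (g x) (R x) (M x) := by
  have hbase := Frame.primrec_base.comp hg
  have hslack := Frame.primrec_slack.comp hf
  have hvisits := Primrec.succ.comp (Frame.primrec_visits.comp hf)
  have hnode := primrec_exitNode.comp hbase hX
  have hgained := Dyad.primrec_add.comp (Frame.primrec_gained.comp hf)
    ((primrec_released hu).comp (hX.pair (hf.pair hg)))
  have hchild := primrec_fresh hu (Primrec.list_length.comp hR) hnode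
    ((primrec_quota hu).comp hslack hnode) (Primrec.nat_add.comp (Primrec.succ.comp hslack) hvisits)
  refine Primrec.ite ((primrecRel_prefix.comp hbase hX).and
    ((Frame.primrecPred_done.comp hg).and (Primrec.nat_lt.comp (Primrec.list_length.comp hbase)
      (Primrec.list_length.comp hX))).not) ?_ ?_
  · exact (Primrec.list_cons.comp hf (Primrec.fst.comp hM)).pair (Primrec.snd.comp hM)
  · exact (Primrec.list_cons.comp (Frame.primrec_mk (Frame.primrec_base.comp hf)
      (Frame.primrec_goal.comp hf) hslack hvisits hgained) hchild).pair (.const none)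

theorem primrec_stepCons (hu : Primrec u) {X : α → List Bool} {f : α → Frame} {L : α → List Frame}
    {M : α → List Frame × Option ℕ} (hX : Primrec X) (hf : Primrec f) (hL : Primrec L)
    (hM : Primrec M) : Primrec fun x => stepCons u (X x) (f x) (L x) (M x) := by
  have hgoal := Frame.primrec_goal.comp hf
  have hbottom := (Primrec.list_cons.comp (Frame.primrec_mk (Frame.primrec_base.comp hf) hgoal
    (Frame.primrec_slack.comp hf) (Frame.primrec_visits.comp hf)
    (Dyad.primrec_ofExponent.comp hgoal)) (.const [])).pair hgoal
  have hcons := primrec_stepConsCons hu (hX.comp (Primrec.fst (β := Frame × List Frame)))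
    (hf.comp .fst) (Primrec.fst.comp .snd) (Primrec.snd.comp .snd) (hM.comp .fst)
  exact Primrec.ite (Frame.primrecPred_done.comp hf)
    ((Primrec.list_cons.comp hf hL).pair (.const none)) (Primrec.list_casesOn hL hbottom hcons.to₂)

theorem primrec_step (hu : Primrec u) : Primrec₂ (step u) := by
  refine (Primrec.list_rec (α := List Bool × List Frame) .snd (.const ([], none))
    (primrec_stepCons hu (Primrec.fst.comp .fst) (Primrec.fst.comp .snd)
      (Primrec.fst.comp (Primrec.snd.comp .snd))
      (Primrec.snd.comp (Primrec.snd.comp .snd))).to₂).to₂.of_eq fun X L => ?_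
  induction L with
  | nil => rw [step]
  | cons f L ih => rw [step_cons, ← ih]

end Computability

/-! ### Playing against the complexity of the initial segments -/

section Nth

variable {p : ℕ → Prop}

theorem computable_count [DecidablePred p] (hp : ComputablePred p) : Computable (Nat.count p) := by
  have hrec : Computable fun n : ℕ => (Nat.rec 0 (fun k r => bif decide (p k) then r + 1 else r) n :
      ℕ) :=
    Computable.nat_rec (h := fun _ q => bif decide (p q.1) then q.2 + 1 else q.2) .id (.const 0)
      (Computable.cond (hp.decide.comp (Computable.fst.comp .snd))
        (Computable.succ.comp (Computable.snd.comp .snd)) (Computable.snd.comp .snd)).to₂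
  refine hrec.of_eq fun n => ?_
  induction n with
  | zero => exact (Nat.count_zero p).symm
  | succ n ih =>
    rw [Nat.count_succ, ← ih]
    by_cases h : p n <;> simp [h]

theorem computable_nth (hp : ComputablePred p) (hinf : (Set.ofPred p).Infinite) :
    Computable (Nat.nth p) := by
  classical
  have hP : ComputablePred fun a : ℕ × ℕ => p a.2 ∧ Nat.count p a.2 = a.1 := by
    refine ComputablePred.computable_iff.2 ⟨fun a => decide (p a.2) &&
      decide (Nat.count p a.2 = a.1), ?_, by simp⟩
    exact Primrec.and.to_comp.comp (hp.decide.comp .snd) <|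
      (Primrec.eq (α := ℕ)).decide.to_comp.comp ((computable_count hp).comp .snd) .fst
  have hex (m : ℕ) : ∃ t, p t ∧ Nat.count p t = m :=
    ⟨_, Nat.nth_mem_of_infinite hinf m, Nat.count_nth_of_infinite hinf m⟩
  refine (Computable.find (P := fun m t => p t ∧ Nat.count p t = m) hP hex).of_eq fun m => ?_
  obtain ⟨hmem, hcount⟩ := Nat.find_spec (hex m)
  rw [← Nat.nth_count hmem, hcount]

end Nth

section Play

variable (u : List Bool → Option ℕ) (Y : ℕ → List Bool) (b : ℕ)

/-- All requests in `R` appear to be answered at stage `t`, a request `(s, r)` being answered by a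
description of length at most `r + b` of the first `s` bits of the approximation `Y`. -/
def Answered (t : ℕ) (R : List (ℕ × ℕ)) : Prop :=
  ∀ q ∈ R, KcpxLEAt t (Encodable.encode ((Y t).take q.1)) (q.2 + b)

/-- The level of the strategy that plays against answers with constant `b`, large enough for its
gain of `1 / 2` to be more than the answers can back. -/
def level : ℕ :=
  2 ^ (b + 1) + 1

/-- The initial state of the strategy that plays against answers with constant `b`. -/
def start : List Frame :=
  fresh u (level b) [] (some 1) 1

open Classical in
/-- The requests issued before stage `t`, each paired with its stage, and the state of the strategy
at stage `t`. The strategy moves when all its requests appear to be answered. -/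
noncomputable def play : ℕ → List (ℕ × ℕ) × List Frame
  | 0 => ([], start u b)
  | t + 1 =>
    if Answered Y b t (play t).1 then
      ((step u (Y t) (play t).2).2.toList.map (Prod.mk t) ++ (play t).1,
        (step u (Y t) (play t).2).1)
    else play t

/-- The strategy moves at stage `t`. -/
def Active (t : ℕ) : Prop :=
  Answered Y b t (play u Y b t).1

noncomputable instance : DecidablePred (Active u Y b) :=
  Classical.decPred _

/-- The exponent of the request issued at stage `t`, if any. -/
noncomputable def request (t : ℕ) : Option ℕ :=
  if Active u Y b t then (step u (Y t) (play u Y b t).2).2 else none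

/-- The stage of the `m`-th move. If there are only finitely many moves, the last one is repeated,
so that the stages increase in either case. -/
noncomputable def activeStage (m : ℕ) : ℕ :=
  (Finset.range (m + 1)).sup (Nat.nth (Active u Y b))

/-- The approximation at the stage of the `m`-th move. -/
noncomputable def activeApprox (m : ℕ) : List Bool :=
  Y (activeStage u Y b m)

variable {u Y b} {A : ℕ → Bool} {t : ℕ}

theorem activeStage_mono : Monotone (activeStage u Y b) :=
  fun _ _ h => Finset.sup_mono (Finset.range_subset_range.2 (Nat.succ_le_succ h))

theorem activeStage_count (ht : Active u Y b t) :
    activeStage u Y b (Nat.count (Active u Y b) t) = t := by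
  refine le_antisymm (Finset.sup_le fun i hi => ?_) ?_
  · rcases (Nat.lt_succ_iff.1 (Finset.mem_range.1 hi)).lt_or_eq with h | rfl
    · exact (Nat.nth_lt_of_lt_count h).le
    · exact (Nat.nth_count ht).le
  · conv_lhs => rw [← Nat.nth_count ht]
    exact Finset.le_sup (Finset.self_mem_range_succ _)

theorem activeStage_eq_nth (hinf : (Set.ofPred (Active u Y b)).Infinite) :
    activeStage u Y b = Nat.nth (Active u Y b) := by
  funext m
  conv_lhs => rw [← Nat.count_nth_of_infinite hinf m]
  exact activeStage_count (Nat.nth_mem_of_infinite hinf m)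

theorem play_succ_of_active (ht : Active u Y b t) : play u Y b (t + 1) =
    ((step u (Y t) (play u Y b t).2).2.toList.map (Prod.mk t) ++ (play u Y b t).1,
      (step u (Y t) (play u Y b t).2).1) :=
  if_pos ht

theorem play_succ_of_not_active (ht : ¬Active u Y b t) : play u Y b (t + 1) = play u Y b t :=
  if_neg ht

theorem play_succ_fst (t : ℕ) : (play u Y b (t + 1)).1 =
    (request u Y b t).toList.map (Prod.mk t) ++ (play u Y b t).1 := by
  by_cases h : Active u Y b t
  · rw [request, if_pos h, play_succ_of_active h]
  · rw [request, if_neg h, play_succ_of_not_active h]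
    rfl

theorem mem_play_fst {q : ℕ × ℕ} :
    q ∈ (play u Y b t).1 ↔ q.1 < t ∧ request u Y b q.1 = some q.2 := by
  induction t with
  | zero => simp [play]
  | succ t ih =>
    rw [play_succ_fst, List.mem_append, ih, List.mem_map]
    obtain ⟨s, r⟩ := q
    simp only [Option.mem_toList, Prod.mk.injEq, Nat.lt_succ_iff_lt_or_eq]
    grind

theorem play_snd (t : ℕ) : (play u Y b t).2 =
    run u (activeApprox u Y b) (start u b) 0 (Nat.count (Active u Y b) t) := by
  induction t with
  | zero => simp [play]
  | succ t ih =>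
    rw [Nat.count_succ]
    by_cases h : Active u Y b t
    · rw [play_succ_of_active h, if_pos h, run_succ (Nat.zero_le _), ← ih, activeApprox,
        activeStage_count h]
    · rw [play_succ_of_not_active h, if_neg h, ih, add_zero]

theorem wt_request (ht : Active u Y b t) : wt (request u Y b t) =
    spend u (activeApprox u Y b) (start u b) 0 (Nat.count (Active u Y b) t) := by
  rw [request, if_pos ht, spend, ← play_snd, activeApprox, activeStage_count ht]

theorem sum_wt_request (t : ℕ) : ∑ s ∈ Finset.range t, wt (request u Y b s) =
    ∑ i ∈ Finset.Ico 0 (Nat.count (Active u Y b) t),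
      spend u (activeApprox u Y b) (start u b) 0 i := by
  induction t with
  | zero => simp
  | succ t ih =>
    rw [Finset.sum_range_succ, ih, Nat.count_succ]
    by_cases h : Active u Y b t
    · rw [if_pos h, Finset.sum_Ico_succ_top (Nat.zero_le _), wt_request h]
    · rw [if_neg h, request, if_neg h, wt_none, add_zero, add_zero]

theorem contract_start (hu : BranchBounded u) (hY : ∀ t, (Y t).length = t) (m : ℕ) :
    Contract u (activeApprox u Y b) 0 (level b) [] (some 1) 1 m := by
  refine fulfilsContract hu _ _ _ (fun l l' h => ?_) (Nat.zero_le m) fun _ _ _ => List.nil_prefix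
  simpa only [activeApprox, hY] using activeStage_mono h

theorem sum_wt_request_le_one (hu : BranchBounded u) (hY : ∀ t, (Y t).length = t) (t : ℕ) :
    ∑ s ∈ Finset.range t, wt (request u Y b s) ≤ 1 := by
  obtain ⟨_, D, _, _, _, hsum⟩ := contract_start (b := b) hu hY (Nat.count (Active u Y b) t)
  calc ∑ s ∈ Finset.range t, wt (request u Y b s)
      ≤ min D.val (wt (some 1)) + 2⁻¹ ^ 1 := (sum_wt_request t).trans_le hsum
    _ ≤ wt (some 1) + 2⁻¹ ^ 1 := by gcongr; exact min_le_right _ _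
    _ = 1 := by norm_num

end Play

section Primrec

variable {u : List Bool → Option ℕ} {Y : ℕ → List Bool}

theorem primrecPred_answered (hY : Primrec Y) :
    PrimrecPred fun a : (ℕ × ℕ) × List (ℕ × ℕ) => Answered Y a.1.1 a.1.2 a.2 := by
  have hR : PrimrecRel fun (q : ℕ × ℕ) (a : ℕ × ℕ) =>
      KcpxLEAt a.2 (Encodable.encode ((Y a.2).take q.1)) (q.2 + a.1) := by
    have ht : Primrec fun p : (ℕ × ℕ) × ℕ × ℕ => p.2.2 := Primrec.snd.comp .snd
    exact primrecPred_kcpxLEAt.comp <| Primrec.pair ht <| Primrec.pair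
      (Primrec.encode.comp (Primrec.list_take.comp (Primrec.fst.comp .fst) (hY.comp ht)))
      (Primrec.nat_add.comp (Primrec.snd.comp .fst) (Primrec.fst.comp .snd))
  exact hR.forall_mem_list.comp .snd .fst

theorem primrec_start (hu : Primrec u) : Primrec (start u) :=
  primrec_fresh hu (Primrec.succ.comp (primrec_pow.comp (.const 2) Primrec.succ)) (.const _)
    (.const _) (.const _)

theorem primrec_play (hu : Primrec u) (hY : Primrec Y) : Primrec₂ (play u Y) := by
  classical
  let next (b t : ℕ) (S : List (ℕ × ℕ) × List Frame) : List (ℕ × ℕ) × List Frame :=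
    if Answered Y b t S.1 then
      ((step u (Y t) S.2).2.toList.map (Prod.mk t) ++ S.1, (step u (Y t) S.2).1)
    else S
  have htoList : Primrec (Option.toList : Option ℕ → List ℕ) :=
    (Primrec.option_casesOn .id (.const []) (Primrec.list_cons.comp .snd (.const [])).to₂).of_eq
      fun o => by cases o <;> rfl
  have hnext : Primrec fun a : (ℕ × ℕ) × List (ℕ × ℕ) × List Frame => next a.1.1 a.1.2 a.2 := by
    have ht : Primrec fun a : (ℕ × ℕ) × List (ℕ × ℕ) × List Frame => a.1.2 :=
      Primrec.snd.comp .fst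
    have hstep := (primrec_step hu).comp (hY.comp ht) (Primrec.snd.comp .snd)
    exact Primrec.ite ((primrecPred_answered hY).comp (.pair .fst (Primrec.fst.comp .snd)))
      (.pair (Primrec.list_append.comp (Primrec.list_map
        (htoList.comp (Primrec.snd.comp hstep)) (Primrec.pair (ht.comp .fst) .snd))
        (Primrec.fst.comp .snd)) (Primrec.fst.comp hstep)) .snd
  have hrec : Primrec fun a : ℕ × ℕ => (Nat.rec ([], start u a.1)
      (fun t S => next a.1 t S) a.2 : List (ℕ × ℕ) × List Frame) :=
    Primrec.nat_rec' .snd (.pair (.const []) ((primrec_start hu).comp .fst))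
      (hnext.comp (.pair (.pair (Primrec.fst.comp .fst) (Primrec.fst.comp .snd))
        (Primrec.snd.comp .snd))).to₂
  refine hrec.of_eq fun ⟨b, t⟩ => ?_
  induction t with
  | zero => rfl
  | succ t ih => exact congrArg (next b t) ih

theorem primrecRel_active (hu : Primrec u) (hY : Primrec Y) : PrimrecRel (Active u Y) :=
  (primrecPred_answered hY).comp (.pair .id (Primrec.fst.comp (primrec_play hu hY)))

theorem primrec_request (hu : Primrec u) (hY : Primrec Y) : Primrec₂ (request u Y) :=
  Primrec.ite (primrecRel_active hu hY) (Primrec.snd.comp ((primrec_step hu).comp (hY.comp .snd)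
    (Primrec.snd.comp (primrec_play hu hY)))) (.const none)

end Primrec

section Outcome

open Filter

variable {u : List Bool → Option ℕ} {Y : ℕ → List Bool} {A : ℕ → Bool} {b c : ℕ}

theorem wt_request_le_of_active {s t : ℕ} (ht : Active u Y b t) (hst : s < t) :
    wt (request u Y b s) ≤
      2 ^ b * 2⁻¹ ^ provisionalKcpx (Encodable.encode ((Y t).take s)) := by
  cases hr : request u Y b s with
  | none => rw [wt_none]; positivity
  | some r =>
    have hanswer := ht _ (mem_play_fst (q := (s, r)).2 ⟨hst, hr⟩)
    calc wt (some r) = 2 ^ b * 2⁻¹ ^ (r + b) := by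
          rw [wt_some, pow_add, mul_left_comm, ← mul_pow, mul_inv_cancel₀ two_ne_zero, one_pow,
            mul_one]
      _ ≤ _ := mul_le_mul_of_nonneg_left (pow_le_pow_of_le_one (by norm_num) (by norm_num)
          hanswer.provisionalKcpx_le) (by positivity)

/-- A request is answered once for each of its `versions`, and all these answers describe different
strings, so that their total weight is at most `1`. -/
theorem sum_spend_mul_versions_le (hY : ∀ t, (Y t).length = t)
    (hinf : (Set.ofPred (Active u Y b)).Infinite) (m : ℕ) :
    ∑ i ∈ Finset.Ico 0 m, spend u (activeApprox u Y b) (start u b) 0 i *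
      versions (activeApprox u Y b) i m ≤ 2 ^ b := by
  classical
  set X := activeApprox u Y b with hX
  set N := Nat.nth (Active u Y b) with hN
  have hXN (i : ℕ) : X i = Y (N i) := by rw [hX, activeApprox, activeStage_eq_nth hinf]
  have hlen (i : ℕ) : (X i).length = N i := by rw [hXN, hY]
  have hmono : StrictMono N := Nat.nth_strictMono hinf
  have hactive (i : ℕ) : Active u Y b (N i) := Nat.nth_mem_of_infinite hinf i
  let V (i : ℕ) : Finset (List Bool) := (Finset.Ioo i m).image fun l => (X l).take (X i).length
  have hanswers : ∀ i ∈ Finset.Ico 0 m, spend u X (start u b) 0 i * versions X i m ≤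
      2 ^ b * ∑ σ ∈ V i, 2⁻¹ ^ provisionalKcpx (Encodable.encode σ) := by
    intro i _
    have hspend : wt (request u Y b (N i)) = spend u X (start u b) 0 i := by
      rw [wt_request (hactive i), hN, Nat.count_nth_of_infinite hinf]
    rw [← hspend, versions, mul_comm, ← nsmul_eq_mul, Finset.mul_sum]
    refine Finset.card_nsmul_le_sum _ _ _ fun σ hσ => ?_
    obtain ⟨l, hl, rfl⟩ := Finset.mem_image.1 hσ
    simp only [hXN, hY]
    exact wt_request_le_of_active (hactive l) (hmono (Finset.mem_Ioo.1 hl).1)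
  have hdisj : (Finset.Ico 0 m : Set ℕ).PairwiseDisjoint V := by
    have hlenV {i : ℕ} {σ : List Bool} (hσ : σ ∈ V i) : σ.length = N i := by
      obtain ⟨l, hl, rfl⟩ := Finset.mem_image.1 hσ
      rw [List.length_take, hlen, hlen, min_eq_left (hmono (Finset.mem_Ioo.1 hl).1).le]
    exact fun i _ i' _ hne => Finset.disjoint_left.2 fun σ hσ hσ' =>
      hne (hmono.injective ((hlenV hσ).symm.trans (hlenV hσ')))
  refine (Finset.sum_le_sum hanswers).trans ?_
  rw [← Finset.mul_sum, ← Finset.sum_biUnion hdisj,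
    ← Finset.sum_image (f := fun x => (2⁻¹ : ℝ) ^ provisionalKcpx x)
      Encodable.encode_injective.injOn]
  exact mul_le_of_le_one_right (by positivity) (sum_provisionalKcpx_le_one _)

/-- If there were only finitely many moves, the finitely many requests would be answered, and
there would be another move. -/
theorem infinite_active (hYA : Approximates A Y) (hans : ∀ t r, request u Y b t = some r →
    Kcpx (Encodable.encode (strPrefix A t)) ≤ r + b) :
    (Set.ofPred (Active u Y b)).Infinite := by
  intro hfin
  obtain ⟨T, hT⟩ := hfin.bddAbove
  have hinactive (t : ℕ) (ht : T < t) : ¬Active u Y b t := fun h => ht.not_ge (hT h)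
  have hconst (t : ℕ) (ht : T + 1 ≤ t) : play u Y b t = play u Y b (T + 1) := by
    induction t, ht using Nat.le_induction with
    | base => rfl
    | succ t ht ih => rw [play_succ_of_not_active (hinactive t ht), ih]
  have hanswered : ∀ᶠ t in atTop, Answered Y b t (play u Y b (T + 1)).1 := by
    simp only [Answered, ← List.mem_toFinset]
    refine (Finset.eventually_all _).2 fun q hq => ?_
    filter_upwards [eventually_atTop.2 (hYA.eventually_prefix q.1),
      eventually_kcpxLEAt_iff (Encodable.encode (strPrefix A q.1)) (q.2 + b)] with t hprefix hiff
    rw [List.prefix_iff_eq_take, length_strPrefix] at hprefix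
    rw [← hprefix, hiff]
    exact hans _ _ (mem_play_fst.1 (List.mem_toFinset.1 hq)).2
  obtain ⟨t, hans, ht⟩ := (hanswered.and (eventually_gt_atTop T)).exists
  exact hinactive t ht (by rwa [Active, hconst t ht])

theorem approximates_activeApprox (hu : Primrec u) (hYA : Approximates A Y) (hYp : Primrec Y)
    (hinf : (Set.ofPred (Active u Y b)).Infinite) :
    Approximates A (activeApprox u Y b) where
  mono := hYA.mono.comp activeStage_mono
  eventually_prefix n := by
    obtain ⟨t, ht⟩ := hYA.eventually_prefix n
    refine ⟨t, fun m hm => ht _ (hm.trans ?_)⟩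
    rw [activeStage_eq_nth hinf]
    exact (Nat.nth_strictMono hinf).le_apply
  computable := by
    have hactive : PrimrecPred (Active u Y b) :=
      (primrecRel_active hu hYp).comp (.const b) .id
    refine hYp.to_comp.comp ?_
    rw [activeStage_eq_nth hinf]
    exact computable_nth hactive.computablePred hinf

/-- The constant with which a set that is K-trivial with constant `c` answers the requests of the
`d`-th play, provided that `d` is the constant of the Kraft–Chaitin machine serving all plays: a
request `(t, r)` of this play becomes a description of `1^t` of length `r + (d + 1) + d`. -/
def answerConst (c d : ℕ) : ℕ :=
  2 * d + 1 + c

/-- The union over `d` of the requests issued in the play with `answerConst c d`, their weights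
multiplied by `2⁻¹ ^ (d + 1)`. -/
def Requested (u : List Bool → Option ℕ) (Y : ℕ → List Bool) (c : ℕ) (a : ℕ × ℕ) : Prop :=
  ∃ p : ℕ × ℕ, (request u Y (answerConst c p.1) p.2).map
    (fun r => (r + (p.1 + 1), codeOnes p.2)) = some a

theorem rePred_requested (hu : Primrec u) (hY : Primrec Y) : REPred (Requested u Y c) := by
  have hd : Primrec fun x : (ℕ × ℕ) × ℕ × ℕ => answerConst c x.2.1 := Primrec.nat_add.comp
    (Primrec.succ.comp (Primrec.nat_mul.comp (.const 2) (Primrec.fst.comp .snd))) (.const c)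
  have hmap : Primrec fun x : (ℕ × ℕ) × ℕ × ℕ => (request u Y (answerConst c x.2.1) x.2.2).map
      fun r => (r + (x.2.1 + 1), codeOnes x.2.2) :=
    Primrec.option_map ((primrec_request hu hY).comp hd (Primrec.snd.comp .snd)) <| Primrec.pair
      (Primrec.nat_add.comp .snd (Primrec.succ.comp (Primrec.fst.comp (Primrec.snd.comp .fst))))
      (primrec_codeOnes.comp (Primrec.snd.comp (Primrec.snd.comp .fst)))
  exact rePred_exists (Primrec.eq.comp hmap (Primrec.option_some.comp .fst)).computablePred

theorem sum_requested_le_one (hu : BranchBounded u) (hY : ∀ t, (Y t).length = t)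
    (F : Finset (ℕ × ℕ)) (hF : ∀ a ∈ F, Requested u Y c a) :
    ∑ a ∈ F, (2⁻¹ : ℝ) ^ a.1 ≤ 1 := by
  choose! p hp using hF
  set T := (F.sup fun a => max (p a).1 (p a).2) + 1
  have hpT {a : ℕ × ℕ} (ha : a ∈ F) : p a ∈ Finset.range T ×ˢ Finset.range T := by
    have := Finset.le_sup (f := fun a => max (p a).1 (p a).2) ha
    simp only [Finset.mem_product, Finset.mem_range]
    omega
  have hinj : Set.InjOn p F := fun a ha a' ha' h => by
    rw [← Option.some_inj, ← hp a ha, ← hp a' ha', h]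
  have hwt {a : ℕ × ℕ} (ha : a ∈ F) : (2⁻¹ : ℝ) ^ a.1 =
      wt (request u Y (answerConst c (p a).1) (p a).2) * 2⁻¹ ^ ((p a).1 + 1) := by
    have := hp a ha
    rw [Option.map_eq_some_iff] at this
    obtain ⟨r, hr, heq⟩ := this
    rw [hr, wt_some, ← pow_add, ← congrArg Prod.fst heq]
  rw [Finset.sum_congr rfl fun a ha => hwt ha, ← Finset.sum_image
    (f := fun q : ℕ × ℕ => wt (request u Y (answerConst c q.1) q.2) * 2⁻¹ ^ (q.1 + 1)) hinj]
  calc _ ≤ ∑ q ∈ Finset.range T ×ˢ Finset.range T,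
        wt (request u Y (answerConst c q.1) q.2) * 2⁻¹ ^ (q.1 + 1) :=
        Finset.sum_le_sum_of_subset_of_nonneg (Finset.image_subset_iff.2 fun a ha => hpT ha)
          fun q _ _ => mul_nonneg (wt_nonneg _) (by positivity)
    _ = ∑ d ∈ Finset.range T,
        (∑ t ∈ Finset.range T, wt (request u Y (answerConst c d) t)) * 2⁻¹ ^ (d + 1) := by
        simp only [Finset.sum_product, Finset.sum_mul]
    _ ≤ ∑ d ∈ Finset.range T, 1 * 2⁻¹ ^ (d + 1) := by
        gcongr
        exact sum_wt_request_le_one hu hY T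
    _ ≤ 1 := by
        simp only [one_mul, pow_succ, ← Finset.sum_mul]
        have := sum_two_inv_pow_le (S := Finset.range T) (m := 0) fun _ _ => Nat.zero_le _
        linarith

theorem exists_answerConst (hA : KTrivial A) (hub : BranchBounded u) (hu : Primrec u)
    (hY : ∀ t, (Y t).length = t) (hYp : Primrec Y) :
    ∃ b, ∀ t r, request u Y b t = some r →
      Kcpx (Encodable.encode (strPrefix A t)) ≤ r + b := by
  obtain ⟨c, hc⟩ := hA
  obtain ⟨d, hd⟩ := kraft_chaitin (rePred_requested (c := c) hu hYp)
    (sum_requested_le_one hub hY)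
  refine ⟨answerConst c d, fun t r hr => ?_⟩
  have hK : KofNat t ≤ r + (d + 1) + d := hd _ _ ⟨(d, t), by rw [hr]; rfl⟩
  have hAt := hc t
  rw [answerConst]
  omega

theorem covered (hA : KTrivial A) (hub : BranchBounded u) (hu : Primrec u) : Covered u A := by
  have htriv : ∃ c, ∀ n, TrivialWith c (strPrefix A n) := by
    refine hA.imp fun c hc n m hm => ?_
    rw [length_strPrefix] at hm
    rw [take_strPrefix A hm]
    exact hc m
  obtain ⟨Y, hYA, hYp, hY⟩ := exists_approximates htriv
  obtain ⟨b, hb⟩ := exists_answerConst hA hub hu hY hYp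
  have hinf := infinite_active hYA hb
  by_contra hnot
  obtain ⟨m, -, f, L, hrun, hdone⟩ :=
    succeeds_of_not_covered hub (primrec_step hu).to_comp hnot (level b)
      (approximates_activeApprox hu hYA hYp hinf) (a := 0) (some 1) 1 fun _ _ => List.nil_prefix
  obtain ⟨c, D, L', hcontract, hback, -⟩ := contract_start (b := b) hub hY m
  obtain ⟨rfl, rfl⟩ := List.cons.inj (hrun.symm.trans hcontract)
  have hgain : 2⁻¹ ≤ D.val := by simpa only [Frame.Done, wt_some, pow_one] using hdone
  have hlevel : (level b : ℝ) = 2 ^ b * 2 + 1 := by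
    rw [level, pow_succ]
    push_cast
    rfl
  have hback := hback.mul_le_sum.trans (sum_spend_mul_versions_le hY hinf m)
  rw [hlevel] at hback
  nlinarith [pow_pos (two_pos (α := ℝ)) b]

end Outcome

/-! ### Covering a bounded set of strings -/

section Listings

variable {A : ℕ → Bool} {S : Set (List Bool)} {f : List Bool → Option (List Bool)}

theorem isPrefixOf_iff {σ : List Bool} : IsPrefixOf σ A ↔ σ = strPrefix A σ.length := by
  simp only [IsPrefixOf, strPrefix, List.ext_get_iff, Fin.forall_iff, List.get_eq_getElem,
    List.length_map, List.length_range, true_and, List.getElem_map, List.getElem_range]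
  exact ⟨fun h n hn _ => (h n hn).symm, fun h n hn => (h n hn hn).symm⟩

theorem rePred_wEnum (e : ℕ) : REPred (WEnum e) :=
  (Nat.Partrec.Code.eval_part.comp (.const (Denumerable.ofNat Nat.Partrec.Code e)) .id).dom_re

theorem ceStr_of_rePred (hS : REPred (· ∈ S)) : CeStr S := by
  obtain ⟨code, hcode⟩ := Nat.Partrec.Code.exists_code.1 hS
  have henum (a m : ℕ) (σ : List Bool) :
      WEnum (Encodable.encode (code.comp (.comp .left .right)))
        (Nat.pair a (Nat.pair (Encodable.encode σ) m)) ↔ σ ∈ S := by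
    have heval : (code.comp (.comp .left .right)).eval
        (Nat.pair a (Nat.pair (Encodable.encode σ) m)) = code.eval (Encodable.encode σ) := by
      simp only [Nat.Partrec.Code.eval, PFun.coe_val, Nat.unpair_pair]
      refine (congrArg (Part.bind · code.eval) (Part.bind_some _ _)).trans ?_
      simp only [PFun.coe_val, Nat.unpair_pair]
      exact Part.bind_some _ _
    simp [WEnum, heval, hcode, Part.assert]
  exact ⟨_, fun σ => ⟨fun h => ⟨0, [], fun i => i.elim0, (henum _ _ _).2 h⟩,
    fun ⟨_, _, _, h⟩ => (henum _ _ _).1 h⟩⟩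

/-- The strings in `S` are the values of `f` at the initial segments of `A`. Thus `f` turns an
enumeration of `S` relative to `A` into a labelling of the binary tree. -/
def Lists (f : List Bool → Option (List Bool)) (A : ℕ → Bool) (S : Set (List Bool)) : Prop :=
  ∀ σ, σ ∈ S ↔ ∃ n, f (strPrefix A n) = some σ

/-- The node at level `n` lists `σ` if `n` encodes a tuple `(σ, i, m, s)` such that the
enumeration of `S` is seen at stage `s` to map `m` to `σ` with oracle `ρ.take i`. -/
theorem exists_lists (h : CeStrIn A S) : ∃ f, Primrec f ∧ Lists f A S := by
  classical
  obtain ⟨e, he⟩ := h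
  obtain ⟨q, hq, hqe⟩ := exists_primrecRel_of_rePred (rePred_wEnum e)
  let found (ρ : List Bool) (x : List Bool × ℕ × ℕ × ℕ) : Prop :=
    q (Nat.pair (Encodable.encode (ρ.take x.2.1)) (Nat.pair (Encodable.encode x.1) x.2.2.1)) x.2.2.2
  have hfound : PrimrecRel found := by
    refine hq.comp (Primrec₂.natPair.comp (Primrec.encode.comp (Primrec.list_take.comp
      (Primrec.fst.comp (Primrec.snd.comp .snd)) .fst)) (Primrec₂.natPair.comp
      (Primrec.encode.comp (Primrec.fst.comp .snd)) ?_)) ?_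
    · exact Primrec.fst.comp (Primrec.snd.comp (Primrec.snd.comp .snd))
    · exact Primrec.snd.comp (Primrec.snd.comp (Primrec.snd.comp .snd))
  refine ⟨fun ρ => (Encodable.decode ρ.length).bind fun x => if found ρ x then some x.1 else none,
    Primrec.option_bind (Primrec.decode.comp .list_length) (Primrec.ite hfound
      (Primrec.option_some.comp (Primrec.fst.comp .snd)) (.const none)).to₂, fun σ => ?_⟩
  simp only [he, OracleComputes, hqe, Option.bind_eq_some_iff, Option.ite_none_right_eq_some,
    Option.some_inj, length_strPrefix, found]
  constructor
  · rintro ⟨m, τ, hτ, s, hs⟩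
    have hn : τ.length ≤ Encodable.encode (σ, τ.length, m, s) :=
      (Nat.left_le_pair _ _).trans (Nat.right_le_pair _ _)
    refine ⟨Encodable.encode (σ, τ.length, m, s), _, Encodable.encodek _, ?_, rfl⟩
    rwa [take_strPrefix A hn, ← isPrefixOf_iff.1 hτ]
  · rintro ⟨n, ⟨σ, i, m, s⟩, -, hs, rfl⟩
    refine ⟨m, _, isPrefixOf_iff.2 ?_, s, hs⟩
    simp [strPrefix, ← List.map_take, List.take_range]

/-- The labelling `f` with the repetitions along each branch removed. -/
def firstListing (f : List Bool → Option (List Bool)) (ρ : List Bool) : Option (List Bool) :=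
  if ∀ k < ρ.length, f (ρ.take k) ≠ f ρ then f ρ else none

theorem primrec_firstListing (hf : Primrec f) : Primrec (firstListing f) := by
  have hnew : PrimrecRel fun (k : ℕ) ρ => f (ρ.take k) ≠ f ρ :=
    (Primrec.eq.comp (hf.comp Primrec.list_take) (hf.comp .snd)).not
  exact Primrec.ite ((primrecRel_forall_lt hnew).comp .list_length .id) hf (.const none)

theorem firstListing_strPrefix {n : ℕ} {σ : List Bool} :
    firstListing f (strPrefix A n) = some σ ↔
      f (strPrefix A n) = some σ ∧ ∀ k < n, f (strPrefix A k) ≠ some σ := by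
  rw [firstListing, Option.ite_none_right_eq_some, length_strPrefix, and_comm]
  refine and_congr_right fun h => forall₂_congr fun k hk => ?_
  rw [take_strPrefix A hk.le, h]

theorem Lists.firstListing (hf : Lists f A S) : Lists (firstListing f) A S := by
  classical
  intro σ
  rw [hf σ]
  refine ⟨fun h => ⟨Nat.find h, firstListing_strPrefix.2
    ⟨Nat.find_spec h, fun k hk => Nat.find_min h hk⟩⟩,
    fun ⟨n, hn⟩ => ⟨n, (firstListing_strPrefix.1 hn).1⟩⟩

theorem eq_of_firstListing_eq_some {n n' : ℕ} {σ : List Bool}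
    (h : firstListing f (strPrefix A n) = some σ)
    (h' : firstListing f (strPrefix A n') = some σ) : n = n' := by
  rw [firstListing_strPrefix] at h h'
  by_contra hne
  rcases lt_or_gt_of_ne hne with hlt | hlt
  · exact h'.2 n hlt h.1
  · exact h.2 n' hlt h'.1

end Listings

section Truncation

variable {A : ℕ → Bool} {S : Set (List Bool)} {f : List Bool → Option (List Bool)} {e : ℕ}

/-- The exponent of the weight of the string that `f` lists at `ρ`, divided by `2 ^ e`. -/
def scaledLength (f : List Bool → Option (List Bool)) (e : ℕ) (ρ : List Bool) : Option ℕ :=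
  (f ρ).map fun σ => σ.length + e

/-- The labelling `f`, cut off on every branch before the total weight of the listed strings would
exceed `2 ^ e`. -/
def truncate (f : List Bool → Option (List Bool)) (e : ℕ) (ρ : List Bool) : Option (List Bool) :=
  let total := Dyad.ofList (ρ.inits.map (scaledLength f e))
  if total.1 ≤ 2 ^ total.2 then f ρ else none

theorem wt_scaledLength (f : List Bool → Option (List Bool)) (e : ℕ) (ρ : List Bool) :
    wt (scaledLength f e ρ) = wt ((f ρ).map List.length) * 2⁻¹ ^ e := by
  rw [← wt_map_add, Option.map_map]
  rfl

theorem primrec_scaledLength (hf : Primrec f) : Primrec (scaledLength f e) :=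
  Primrec.option_map hf (Primrec.nat_add.comp (Primrec.list_length.comp .snd) (.const e)).to₂

theorem primrec_truncate (hf : Primrec f) : Primrec (truncate f e) := by
  have htotal : Primrec fun ρ : List Bool => Dyad.ofList (ρ.inits.map (scaledLength f e)) :=
    Dyad.primrec_ofList.comp
      (Primrec.list_map primrec_inits ((primrec_scaledLength hf).comp .snd).to₂)
  exact Primrec.ite (Primrec.nat_le.comp (Primrec.fst.comp htotal)
    (primrec_pow.comp (.const 2) (Primrec.snd.comp htotal))) hf (.const none)

theorem truncate_eq (f : List Bool → Option (List Bool)) (e : ℕ) (ρ : List Bool) :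
    truncate f e ρ =
      if ∑ σ ∈ ρ.inits.toFinset, wt (scaledLength f e σ) ≤ 1 then f ρ else none := by
  have hval : ∑ σ ∈ ρ.inits.toFinset, wt (scaledLength f e σ) =
      (Dyad.ofList (ρ.inits.map (scaledLength f e))).val := by
    rw [Dyad.val_ofList, List.map_map, List.sum_toFinset _ (nodup_inits ρ)]
    rfl
  have hone : (1 : ℝ) = Dyad.val (1, 0) := by simp [Dyad.val]
  simp only [truncate, hval, hone, Dyad.val_le_val_iff, pow_zero, mul_one, one_mul]

theorem wt_scaledLength_truncate_le (f : List Bool → Option (List Bool)) (e : ℕ) (ρ : List Bool) :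
    wt (scaledLength (truncate f e) e ρ) ≤ wt (scaledLength f e ρ) := by
  rw [scaledLength, truncate_eq]
  split_ifs
  exacts [le_rfl, wt_nonneg _]

theorem branchBounded_truncate (f : List Bool → Option (List Bool)) (e : ℕ) :
    BranchBounded (scaledLength (truncate f e) e) := by
  have hkept {ρ : List Bool} (h : truncate f e ρ ≠ none) :
      ∑ σ ∈ ρ.inits.toFinset, wt (scaledLength (truncate f e) e σ) ≤ 1 := by
    rw [truncate_eq, ite_ne_right_iff] at h
    exact (Finset.sum_le_sum fun σ _ => wt_scaledLength_truncate_le f e σ).trans h.1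
  intro ρ
  induction ρ using List.reverseRecOn with
  | nil =>
    by_cases h : truncate f e [] = none
    · simp [scaledLength, h]
    · exact hkept h
  | append_singleton ρ i ih =>
    by_cases h : truncate f e (ρ ++ [i]) = none
    · refine (Finset.sum_subset ?_ fun σ hσ hσρ => ?_).symm.trans_le ih
      · intro σ hσ
        simp only [List.mem_toFinset, List.mem_inits] at hσ ⊢
        exact hσ.trans (List.prefix_append ρ [i])
      · simp only [List.mem_toFinset, List.mem_inits, List.prefix_concat_iff] at hσ hσρ
        rw [hσ.resolve_right hσρ, scaledLength, h, Option.map_none, wt_none]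
    · exact hkept h

theorem ofReal_two_inv_pow (n : ℕ) : ENNReal.ofReal (2⁻¹ ^ n) = 2⁻¹ ^ n := by
  rw [ENNReal.ofReal_pow (by norm_num), ENNReal.ofReal_inv_of_pos two_pos, ENNReal.ofReal_ofNat]

theorem sum_le_toReal_weight (hS : BoundedStr S) {T : Finset (List Bool)} (hT : ↑T ⊆ S) :
    ∑ σ ∈ T, (2⁻¹ : ℝ) ^ σ.length ≤ (weight S).toReal := by
  rw [← ENNReal.ofReal_le_iff_le_toReal hS.ne,
    ENNReal.ofReal_sum_of_nonneg fun _ _ => by positivity]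
  simp only [ofReal_two_inv_pow]
  rw [← Finset.tsum_subtype' T fun σ : List Bool => (2⁻¹ : ℝ≥0∞) ^ σ.length]
  exact ENNReal.tsum_mono_subtype (fun σ : List Bool => (2⁻¹ : ℝ≥0∞) ^ σ.length) hT

theorem sum_wt_length_le_weight {ι : Type*} {g : ι → Option (List Bool)} {F : Finset ι}
    (hS : BoundedStr S) (hg : ∀ i ∈ F, ∀ σ, g i = some σ → σ ∈ S)
    (hinj : ∀ i ∈ F, ∀ i' ∈ F, ∀ σ, g i = some σ → g i' = some σ → i = i') :
    ∑ i ∈ F, wt ((g i).map List.length) ≤ (weight S).toReal := by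
  classical
  set F' := F.filter fun i => g i ≠ none
  have hsome {i : ι} (hi : i ∈ F') : i ∈ F ∧ g i = some ((g i).getD []) := by
    obtain ⟨hiF, hne⟩ := Finset.mem_filter.1 hi
    exact ⟨hiF, (Option.getD_of_ne_none hne []).symm⟩
  have hinj' : Set.InjOn (fun i => (g i).getD []) F' := fun i hi i' hi' h =>
    hinj i (hsome hi).1 i' (hsome hi').1 _ (hsome hi).2 ((hsome hi').2.trans (congrArg some h.symm))
  have hzero : ∀ i ∈ F, wt ((g i).map List.length) ≠ 0 → g i ≠ none := fun i _ hne h =>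
    hne (by rw [h, Option.map_none, wt_none])
  calc ∑ i ∈ F, wt ((g i).map List.length)
      = ∑ i ∈ F', wt ((g i).map List.length) := (Finset.sum_filter_of_ne hzero).symm
    _ = ∑ i ∈ F', 2⁻¹ ^ ((g i).getD []).length := Finset.sum_congr rfl fun i hi => by
        rw [(hsome hi).2, Option.map_some, wt_some, Option.getD_some]
    _ = ∑ σ ∈ F'.image fun i => (g i).getD [], 2⁻¹ ^ σ.length :=
        (Finset.sum_image (f := fun σ : List Bool => (2⁻¹ : ℝ) ^ σ.length) hinj').symm
    _ ≤ (weight S).toReal := sum_le_toReal_weight hS fun σ hσ => by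
        obtain ⟨i, hi, rfl⟩ := Finset.mem_image.1 hσ
        exact hg i (hsome hi).1 _ (hsome hi).2

theorem Lists.truncate (hf : Lists f A S) (hS : BoundedStr S) (he : weight S ≤ 2 ^ e)
    (hinj : ∀ n n' σ, f (strPrefix A n) = some σ → f (strPrefix A n') = some σ → n = n') :
    Lists (truncate f e) A S := by
  suffices h : ∀ n, KTrivial.truncate f e (strPrefix A n) = f (strPrefix A n) by
    simpa only [Lists, h] using hf
  intro n
  rw [truncate_eq, if_pos]
  have hnode {ρ : List Bool} (hρ : ρ ∈ (strPrefix A n).inits.toFinset) :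
      ρ = strPrefix A ρ.length := by
    rw [List.mem_toFinset, List.mem_inits] at hρ
    rw [← take_strPrefix A (hρ.length_le.trans_eq (length_strPrefix A n))]
    exact List.prefix_iff_eq_take.1 hρ
  have hsum : ∑ ρ ∈ (strPrefix A n).inits.toFinset, wt ((f ρ).map List.length) ≤ 2 ^ e := by
    refine (sum_wt_length_le_weight hS (fun ρ hρ σ h => ?_) fun ρ hρ ρ' hρ' σ h h' => ?_).trans ?_
    · exact (hf σ).2 ⟨ρ.length, by rwa [← hnode hρ]⟩
    · rw [hnode hρ] at h ⊢
      rw [hnode hρ'] at h' ⊢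
      rw [hinj _ _ σ h h']
    · simpa using ENNReal.toReal_mono (by finiteness) he
  simp only [wt_scaledLength, ← Finset.sum_mul]
  rwa [inv_pow, ← div_eq_mul_inv, div_le_one (by positivity)]

end Truncation

section Cover

variable {A : ℕ → Bool} {f : List Bool → Option (List Bool)} {e : ℕ}

theorem boundedStr_of_sum_le {W : Set (List Bool)} {G : List Bool → Prop} {B : ℝ}
    (hB : ∀ F : Finset (List Bool), (∀ ρ ∈ F, G ρ) → ∑ ρ ∈ F, wt (scaledLength f e ρ) ≤ B)
    (hW : ∀ σ ∈ W, ∃ ρ, G ρ ∧ f ρ = some σ) : BoundedStr W := by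
  classical
  choose! R hG hR using hW
  have hinj : Function.Injective fun σ : W => R σ := fun σ σ' h => Subtype.ext <|
    Option.some_injective _ ((hR _ σ.2).symm.trans ((congrArg f h).trans (hR _ σ'.2)))
  have hwt (σ : W) : (2⁻¹ : ℝ) ^ σ.1.length = 2 ^ e * wt (scaledLength f e (R σ)) := by
    rw [wt_scaledLength, hR _ σ.2, Option.map_some, wt_some, mul_left_comm, ← mul_pow,
      mul_inv_cancel₀ two_ne_zero, one_pow, mul_one]
  refine lt_of_le_of_lt ?_ (ENNReal.ofReal_lt_top (r := 2 ^ e * B))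
  rw [weight, ENNReal.tsum_eq_iSup_sum]
  refine iSup_le fun T => ?_
  simp only [← ofReal_two_inv_pow]
  rw [← ENNReal.ofReal_sum_of_nonneg fun _ _ => by positivity,
    Finset.sum_congr rfl fun σ _ => hwt σ, ← Finset.mul_sum,
    ← Finset.sum_image (f := fun ρ => wt (scaledLength f e ρ)) hinj.injOn]
  refine ENNReal.ofReal_le_ofReal (mul_le_mul_of_nonneg_left (hB _ fun ρ hρ => ?_) (by positivity))
  obtain ⟨σ, -, rfl⟩ := Finset.mem_image.1 hρ
  exact hG σ σ.2

theorem Covered.exists_ceStr (h : Covered (scaledLength f e) A) (hf : Primrec f) :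
    ∃ W, CeStr W ∧ BoundedStr W ∧ ∀ n σ, f (strPrefix A n) = some σ → σ ∈ W := by
  obtain ⟨G, hG, hGA, B, hB⟩ := h
  obtain ⟨q, hq, hGq⟩ := exists_primrecRel_of_rePred hG
  refine ⟨{σ | ∃ ρ, G ρ ∧ f ρ = some σ}, ceStr_of_rePred ?_, boundedStr_of_sum_le hB fun _ h => h,
    fun n σ hσ => ⟨_, hGA n, hσ⟩⟩
  have hlisted : PrimrecPred fun x : List Bool × List Bool × ℕ =>
      q x.2.1 x.2.2 ∧ f x.2.1 = some x.1 :=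
    (hq.comp (Primrec.fst.comp .snd) (Primrec.snd.comp .snd)).and
      (Primrec.eq.comp (hf.comp (Primrec.fst.comp .snd)) (Primrec.option_some.comp .fst))
  refine (rePred_exists (p := fun σ (x : List Bool × ℕ) => q x.1 x.2 ∧ f x.1 = some σ)
    hlisted.computablePred).of_eq fun σ => ?_
  simp only [Prod.exists, hGq, Set.mem_ofPred_eq, exists_and_right]

end Cover

end KTrivial

/-- covering theorem: any bounded `A`-c.e. set of strings for
K-trivial `A` is contained in a bounded c.e. set of strings. -/
theorem stmt10 (A : ℕ → Bool) (hA : KTrivial A)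
    (WA : Set (List Bool)) (hce : CeStrIn A WA) (hbd : BoundedStr WA) :
    ∃ W : Set (List Bool), CeStr W ∧ BoundedStr W ∧ WA ⊆ W := by
  obtain ⟨f, hf, hlists⟩ := KTrivial.exists_lists hce
  obtain ⟨e, he⟩ : ∃ e : ℕ, weight WA ≤ 2 ^ e := by
    obtain ⟨n, hn⟩ := ENNReal.exists_nat_gt hbd.ne
    exact ⟨n, hn.le.trans (mod_cast Nat.lt_two_pow_self.le)⟩
  have htrunc := hlists.firstListing.truncate hbd he fun _ _ _ =>
    KTrivial.eq_of_firstListing_eq_some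
  have hprim := KTrivial.primrec_truncate (e := e) (KTrivial.primrec_firstListing hf)
  have hcovered := KTrivial.covered hA (KTrivial.branchBounded_truncate _ e)
    (KTrivial.primrec_scaledLength hprim)
  obtain ⟨W, hW, hWbd, hsub⟩ := hcovered.exists_ceStr hprim
  exact ⟨W, hW, hWbd, fun σ hσ => ((htrunc σ).1 hσ).elim fun n hn => hsub n σ hn⟩
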